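/- Let M be a quasianalytic intersectable weight sequence of moderate growth and let d ≥ 1. Then the ring of germs at 0 ∈ ℝ^d of complex-valued E^{M}-functions has property (D): for every function f defined on an open neighborhood of 0 in ℝ^d and every integer j ≥ 1, if f^j and f^{j+1} are of class E^{M} on some open neighborhood of 0, then f is of class E^{M} on some open neighborhood of 0. -/

import Mathlib

open Filter Set Asymptotics MeasureTheory

noncomputable section

/-- `M` is a weight sequence: `M 0 = 1`, positive, `M 1 ≥ 1`, log-convex and
`M k ^ (1/k) → ∞`. -/
def IsWeightSeq (M : ℕ → ℝ) : Prop :=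
  M 0 = 1 ∧ (∀ k, 0 < M k) ∧ 1 ≤ M 1 ∧
    (∀ k : ℕ, 1 ≤ k → M k ^ 2 ≤ M (k - 1) * M (k + 1)) ∧
    Tendsto (fun k : ℕ => M k ^ (1 / (k : ℝ))) atTop atTop

/-- The sequence `m k = M k / k!`. -/
def mseq (M : ℕ → ℝ) : ℕ → ℝ := fun k => M k / (Nat.factorial k : ℝ)

/-- Log-convexity of a sequence. -/
def LogConvexSeq (m : ℕ → ℝ) : Prop := ∀ k : ℕ, 1 ≤ k → m k ^ 2 ≤ m (k - 1) * m (k + 1)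

/-- `m k ^ (1/k) → ∞`. -/
def RootTendsToInfty (m : ℕ → ℝ) : Prop :=
  Tendsto (fun k : ℕ => m k ^ (1 / (k : ℝ))) atTop atTop

/-- Moderate growth of a sequence. -/
def ModerateGrowth (M : ℕ → ℝ) : Prop :=
  ∃ C : ℝ, 0 < C ∧ ∀ j k : ℕ, M (j + k) ≤ C ^ (j + k) * M j * M k

/-- Derivation closedness of a sequence. -/
def DerivClosed (M : ℕ → ℝ) : Prop :=
  ∃ C : ℝ, 0 < C ∧ ∀ k : ℕ, M (k + 1) ≤ C ^ (k + 1) * M k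

/-- Non-quasianalyticity: `∑_{k≥1} M (k-1) / M k = ∑_{k≥1} 1/μ_k < ∞`. -/
def NonQuasianalytic (M : ℕ → ℝ) : Prop := Summable fun k : ℕ => M k / M (k + 1)

/-- Quasianalyticity: `∑_{k≥1} 1/μ_k = ∞`. -/
def Quasianalytic (M : ℕ → ℝ) : Prop := ¬ NonQuasianalytic M

/-- The associated function `h_m (t) = inf_k m k * t ^ k`. -/
def hFun (m : ℕ → ℝ) (t : ℝ) : ℝ := ⨅ k : ℕ, m k * t ^ k

/-- `Γ̄_m (t) = min {k | h_m t = m k * t ^ k}`. -/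
def GammaBar (m : ℕ → ℝ) (t : ℝ) : ℕ := sInf {k : ℕ | hFun m t = m k * t ^ k}

/-- `Γ̲_m (t) = min {k | m (k+1) / m k ≥ 1 / t}`. -/
def GammaLow (m : ℕ → ℝ) (t : ℝ) : ℕ := sInf {k : ℕ | 1 / t ≤ m (k + 1) / m k}

/-- The set whose supremum is `mg (M, N)`. -/
def mgSet (M N : ℕ → ℝ) : Set ℝ :=
  {x | ∃ j k : ℕ, 1 ≤ j + k ∧ x = (M (j + k) / (N j * N k)) ^ (1 / (j + k : ℝ))}

/-- `mg (M, N) = sup_{j+k ≥ 1} (M (j+k) / (N j * N k)) ^ (1/(j+k))`. -/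
def mg (M N : ℕ → ℝ) : ℝ := sSup (mgSet M N)

/-- `mg (M, N) < ∞`. -/
def MgFinite (M N : ℕ → ℝ) : Prop := BddAbove (mgSet M N)

/-- A weight sequence is regular: `m k ^ (1/k) → ∞`, derivation closed, and
`Γ̄_m (C t) ≤ Γ̲_m t` for some `C ≥ 1`. -/
def RegularWS (M : ℕ → ℝ) : Prop :=
  RootTendsToInfty (mseq M) ∧ DerivClosed M ∧
    ∃ C : ℝ, 1 ≤ C ∧ ∀ t : ℝ, 0 < t → GammaBar (mseq M) (C * t) ≤ GammaLow (mseq M) t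

/-- `f` is of class `E^{M}` (Roumieu) on the open set `U`. -/
def RoumieuOn {E : Type*} [NormedAddCommGroup E] [NormedSpace ℝ E]
    (M : ℕ → ℝ) (f : E → ℂ) (U : Set E) : Prop :=
  ContDiffOn ℝ (⊤ : ℕ∞) f U ∧
    ∀ V : Set E, IsOpen V → IsCompact (closure V) → closure V ⊆ U →
      ∃ C σ : ℝ, 0 < C ∧ 0 < σ ∧
        ∀ x ∈ V, ∀ k : ℕ, ‖iteratedFDerivWithin ℝ k f U x‖ ≤ C * σ ^ k * M k

/-- `f` is of class `E^{(M)}` (Beurling) on the open set `U`. -/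
def BeurlingOn {E : Type*} [NormedAddCommGroup E] [NormedSpace ℝ E]
    (M : ℕ → ℝ) (f : E → ℂ) (U : Set E) : Prop :=
  ContDiffOn ℝ (⊤ : ℕ∞) f U ∧
    ∀ V : Set E, IsOpen V → IsCompact (closure V) → closure V ⊆ U →
      ∀ σ : ℝ, 0 < σ → ∃ C : ℝ, 0 < C ∧
        ∀ x ∈ V, ∀ k : ℕ, ‖iteratedFDerivWithin ℝ k f U x‖ ≤ C * σ ^ k * M k

/-- A weight matrix: a nonempty, pointwise totally ordered family of weight sequences. -/
def IsWeightMatrix (W : Set (ℕ → ℝ)) : Prop :=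
  W.Nonempty ∧ (∀ M ∈ W, IsWeightSeq M) ∧
    ∀ M ∈ W, ∀ N ∈ W, (∀ k, M k ≤ N k) ∨ (∀ k, N k ≤ M k)

/-- R-regularity of a weight matrix. -/
def RRegular (W : Set (ℕ → ℝ)) : Prop :=
  (∀ M ∈ W, RootTendsToInfty (mseq M)) ∧
    (∀ M ∈ W, ∃ N ∈ W, ∃ C : ℝ, 1 ≤ C ∧ ∀ j : ℕ, M (j + 1) ≤ C ^ (j + 1) * N j) ∧
    (∀ M ∈ W, ∃ N ∈ W, ∃ C : ℝ, 1 ≤ C ∧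
      ∀ t : ℝ, 0 < t → GammaBar (mseq N) (C * t) ≤ GammaLow (mseq M) t)

/-- B-regularity of a weight matrix. -/
def BRegular (W : Set (ℕ → ℝ)) : Prop :=
  (∀ M ∈ W, RootTendsToInfty (mseq M)) ∧
    (∀ M ∈ W, ∃ N ∈ W, ∃ C : ℝ, 1 ≤ C ∧ ∀ j : ℕ, N (j + 1) ≤ C ^ j * M j) ∧
    (∀ M ∈ W, ∃ N ∈ W, ∃ C : ℝ, 1 ≤ C ∧
      ∀ t : ℝ, 0 < t → GammaBar (mseq M) (C * t) ≤ GammaLow (mseq N) t)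

/-- R-moderate growth of a weight matrix. -/
def RModerateGrowth (W : Set (ℕ → ℝ)) : Prop := ∀ M ∈ W, ∃ N ∈ W, MgFinite M N

/-- B-moderate growth of a weight matrix. -/
def BModerateGrowth (W : Set (ℕ → ℝ)) : Prop := ∀ M ∈ W, ∃ N ∈ W, MgFinite N M

/-- `f` is of class `E^{W}` (Roumieu, weight matrix) on the open set `U`. -/
def MatrixRoumieuOn {E : Type*} [NormedAddCommGroup E] [NormedSpace ℝ E]
    (W : Set (ℕ → ℝ)) (f : E → ℂ) (U : Set E) : Prop :=
  ContDiffOn ℝ (⊤ : ℕ∞) f U ∧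
    ∀ V : Set E, IsOpen V → IsCompact (closure V) → closure V ⊆ U →
      ∃ M ∈ W, ∃ C σ : ℝ, 0 < C ∧ 0 < σ ∧
        ∀ x ∈ V, ∀ k : ℕ, ‖iteratedFDerivWithin ℝ k f U x‖ ≤ C * σ ^ k * M k

/-- `f` is of class `E^{(W)}` (Beurling, weight matrix) on the open set `U`. -/
def MatrixBeurlingOn {E : Type*} [NormedAddCommGroup E] [NormedSpace ℝ E]
    (W : Set (ℕ → ℝ)) (f : E → ℂ) (U : Set E) : Prop :=
  ContDiffOn ℝ (⊤ : ℕ∞) f U ∧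
    ∀ V : Set E, IsOpen V → IsCompact (closure V) → closure V ⊆ U →
      ∀ M ∈ W, ∀ σ : ℝ, 0 < σ → ∃ C : ℝ, 0 < C ∧
        ∀ x ∈ V, ∀ k : ℕ, ‖iteratedFDerivWithin ℝ k f U x‖ ≤ C * σ ^ k * M k

/-- `ω` is a weight function. -/
def IsWeightFunction (ω : ℝ → ℝ) : Prop :=
  ContinuousOn ω (Ici 0) ∧ MonotoneOn ω (Ici 0) ∧ (∀ t ∈ Ici (0 : ℝ), 0 ≤ ω t) ∧
    ((fun t => ω (2 * t)) =O[atTop] ω) ∧ (ω =o[atTop] fun t : ℝ => t) ∧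
    ((fun t => Real.log t) =o[atTop] ω) ∧ ConvexOn ℝ (Ici 0) fun t => ω (Real.exp t)

/-- The Young conjugate `φ*_ω (s) = sup_{t ≥ 0} (s t - ω (e^t))`. -/
def phiStar (ω : ℝ → ℝ) (s : ℝ) : ℝ := sSup ((fun t => s * t - ω (Real.exp t)) '' Ici 0)

/-- Non-quasianalyticity of a weight function. -/
def NonQuasianalyticW (ω : ℝ → ℝ) : Prop := IntegrableOn (fun t => ω t / t ^ 2) (Ici 1)

/-- `f` is of class `E^{ω}` (Roumieu) on the open set `U`. -/
def OmegaRoumieuOn {E : Type*} [NormedAddCommGroup E] [NormedSpace ℝ E]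
    (ω : ℝ → ℝ) (f : E → ℂ) (U : Set E) : Prop :=
  ContDiffOn ℝ (⊤ : ℕ∞) f U ∧
    ∀ V : Set E, IsOpen V → IsCompact (closure V) → closure V ⊆ U →
      ∃ C ρ : ℝ, 0 < C ∧ 0 < ρ ∧
        ∀ x ∈ V, ∀ k : ℕ,
          ‖iteratedFDerivWithin ℝ k f U x‖ ≤ C * Real.exp (phiStar ω (ρ * k) / ρ)

/-- `f` is of class `E^{(ω)}` (Beurling) on the open set `U`. -/
def OmegaBeurlingOn {E : Type*} [NormedAddCommGroup E] [NormedSpace ℝ E]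
    (ω : ℝ → ℝ) (f : E → ℂ) (U : Set E) : Prop :=
  ContDiffOn ℝ (⊤ : ℕ∞) f U ∧
    ∀ V : Set E, IsOpen V → IsCompact (closure V) → closure V ⊆ U →
      ∀ ρ : ℝ, 0 < ρ → ∃ C : ℝ, 0 < C ∧
        ∀ x ∈ V, ∀ k : ℕ,
          ‖iteratedFDerivWithin ℝ k f U x‖ ≤ C * Real.exp (phiStar ω (ρ * k) / ρ)

/-- The open ellipse `Ω_ε` with vertices `± cosh ε` and co-vertices `± i sinh ε`. -/
def OmegaE (ε : ℝ) : Set ℂ :=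
  {z : ℂ | (z.re / Real.cosh ε) ^ 2 + (z.im / Real.sinh ε) ^ 2 < 1}

/-- The sequence space `Λ^{M}`. -/
def Lambda (M : ℕ → ℝ) : Set (ℕ → ℂ) :=
  {c | ∃ ρ : ℝ, 0 < ρ ∧ ∃ C : ℝ, ∀ k, ‖c k‖ ≤ C * ρ ^ k * M k}

/-- `L(M)`: all non-quasianalytic weight sequences `N ≥ M` with `n = N/k!` log-convex. -/
def LM (M : ℕ → ℝ) : Set (ℕ → ℝ) :=
  {N | IsWeightSeq N ∧ NonQuasianalytic N ∧ (∀ k, M k ≤ N k) ∧ LogConvexSeq (mseq N)}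

/-- A quasianalytic weight sequence `M` is intersectable if `Λ^{M} = ⋂_{N ∈ L(M)} Λ^{N}`. -/
def Intersectable (M : ℕ → ℝ) : Prop := Lambda M = ⋂ N ∈ LM M, Lambda N

/-!
Let `g` and `h` be Taylor polynomials of `f ^ j` and `f ^ (j + 1)` at `x` along a line, rescaled
to the unit disc. Then `h ^ j - g ^ (j + 1)` is small there, so the quotient `h / g` is almost
bounded near the zeros of `g`, and its regularization `u = h ḡ / (|g|² + r²)` almost holomorphic:
`∂̄u` is controlled by the energy density `∂∂̄ log (|g|² + r²)`, whose mass is at most a multiple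
of `log (1 / r)`. Subtracting a Cauchy transform of `∂̄u` yields holomorphic functions which
approximate `f` on the line at every scale, and, for each non-quasianalytic `N ≥ M`, a Cauchy
estimate for every scale bounds the differences of `f` by `‖Δ_[s • v]^k f x‖ ≤ K S ^ k N_k s ^ k`,
uniformly in `x` and `v`. Mollification and polarization turn these into smoothness of `f` and
bounds `‖D^k f‖ ≤ K (3 S) ^ k N_k` near `0`. Hence the sequence of suprema of `‖D^k f‖` lies in
`⋂ Λ^N = Λ^M`.
-/

namespace PropertyD

section CauchyPompeiu

open Complex

variable {E : Type*} [NormedAddCommGroup E]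

/-- The parameter rectangle of the polar coordinates `circleMap w s θ` on the annulus
`r ≤ |z - w| ≤ R`. Area integrals are taken over it, which makes the Cauchy kernel bounded. -/
def polarRect (r R : ℝ) : Set (ℝ × ℝ) := Icc r R ×ˢ Icc 0 (2 * Real.pi)

lemma isCompact_polarRect (r R : ℝ) : IsCompact (polarRect r R) := isCompact_Icc.prod isCompact_Icc

lemma measurableSet_polarRect (r R : ℝ) : MeasurableSet (polarRect r R) :=
  (isCompact_polarRect r R).measurableSet

lemma integrableOn_polarRect {F : ℝ × ℝ → E} (hF : Continuous F) (r R : ℝ) :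
    IntegrableOn F (polarRect r R) :=
  hF.continuousOn.integrableOn_compact (isCompact_polarRect r R)

lemma setIntegral_polarRect [NormedSpace ℝ E] {F : ℝ × ℝ → E} (hF : Continuous F) {r R : ℝ}
    (hr : r ≤ R) :
    ∫ p in polarRect r R, F p = ∫ s in r..R, ∫ θ in 0..2 * Real.pi, F (s, θ) := by
  rw [intervalIntegral.integral_of_le hr, ← integral_Icc_eq_integral_Ioc, polarRect,
    Measure.volume_eq_prod, setIntegral_prod _ (integrableOn_polarRect hF r R)]
  simp only [intervalIntegral.integral_of_le Real.two_pi_pos.le, ← integral_Icc_eq_integral_Ioc]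

lemma continuous_circleMap_prod (w : ℂ) : Continuous fun p : ℝ × ℝ => circleMap w p.1 p.2 := by
  unfold circleMap; fun_prop

lemma hasDerivAt_circleMap_radius (w : ℂ) (s θ : ℝ) :
    HasDerivAt (fun s => circleMap w s θ) (exp (θ * I)) s := by
  simpa [circleMap] using
    ((ofRealCLM.hasDerivAt (x := s)).mul_const (exp (θ * I))).const_add w

variable [NormedSpace ℂ E]

/-- The Wirtinger derivative `∂U/∂z̄ = (∂U/∂x + i ∂U/∂y) / 2`. -/
def dbar (U : ℂ → E) (z : ℂ) : E := (2 : ℂ)⁻¹ • (fderiv ℝ U z 1 + I • fderiv ℝ U z I)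

lemma continuous_dbar {U : ℂ → E} (hU : ContDiff ℝ 1 U) : Continuous (dbar U) := by
  have := hU.continuous_fderiv one_ne_zero
  unfold dbar
  fun_prop

lemma conj_smul_add_I_smul (L : ℂ →L[ℝ] E) (e : ℂ) :
    (starRingEnd ℂ) e • (L 1 + I • L I) = L e + I • L (I * e) := by
  have apply_eq (z : ℂ) : L z = (z.re : ℂ) • L 1 + (z.im : ℂ) • L I := by
    conv_lhs => rw [show z = z.re • (1 : ℂ) + z.im • I by simp [re_add_im]]
    simp only [map_add, map_smul, coe_smul]
  rw [apply_eq e, apply_eq (I * e), ← re_add_im ((starRingEnd ℂ) e)]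
  simp only [conj_re, conj_im, I_mul_re, I_mul_im, ofReal_neg]
  linear_combination (norm := module) ((-e.im : ℂ) * I_mul_I) • L I

lemma exp_neg_smul_dbar (U : ℂ → E) (z : ℂ) (θ : ℝ) :
    (2 : ℂ) • exp (-(θ * I)) • dbar U z =
      fderiv ℝ U z (exp (θ * I)) + I • fderiv ℝ U z (I * exp (θ * I)) := by
  rw [dbar, ← conj_smul_add_I_smul, ← exp_conj, map_mul, conj_ofReal, conj_I, mul_neg]
  module

lemma continuous_fderiv_circleMap {U : ℂ → E} (hU : ContDiff ℝ 1 U) (w : ℂ) {v : ℝ × ℝ → ℂ}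
    (hv : Continuous v) :
    Continuous fun p : ℝ × ℝ => fderiv ℝ U (circleMap w p.1 p.2) (v p) :=
  ((hU.continuous_fderiv one_ne_zero).comp (continuous_circleMap_prod w)).clm_apply hv

lemma continuous_cauchyKernel_smul {ψ : ℂ → E} (hψ : Continuous ψ) (w : ℂ) :
    Continuous fun p : ℝ × ℝ => exp (-(p.2 * I)) • ψ (circleMap w p.1 p.2) :=
  .smul (by fun_prop) (hψ.comp (continuous_circleMap_prod w))

variable [CompleteSpace E]

lemma integral_fderiv_radial {U : ℂ → E} (hU : ContDiff ℝ 1 U) (w : ℂ) (r R θ : ℝ) :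
    ∫ s in r..R, fderiv ℝ U (circleMap w s θ) (exp (θ * I)) =
      U (circleMap w R θ) - U (circleMap w r θ) :=
  intervalIntegral.integral_eq_sub_of_hasDerivAt (f := fun s => U (circleMap w s θ))
    (fun s _ => (hU.differentiable one_ne_zero _).hasFDerivAt.comp_hasDerivAt s
      (hasDerivAt_circleMap_radius w s θ))
    (((continuous_fderiv_circleMap hU w (v := fun p => exp (p.2 * I)) (by fun_prop)).comp
      (Continuous.prodMk_left θ)).intervalIntegrable _ _)

lemma integral_fderiv_tangential {U : ℂ → E} (hU : ContDiff ℝ 1 U) (w : ℂ) {s : ℝ} (hs : s ≠ 0) :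
    ∫ θ in 0..2 * Real.pi, fderiv ℝ U (circleMap w s θ) (I * exp (θ * I)) = 0 := by
  have hderiv (θ : ℝ) : HasDerivAt (fun θ => s⁻¹ • U (circleMap w s θ))
      (fderiv ℝ U (circleMap w s θ) (I * exp (θ * I))) θ := by
    have h := ((hU.differentiable one_ne_zero _).hasFDerivAt.comp_hasDerivAt θ
      (hasDerivAt_circleMap w s θ)).const_smul s⁻¹
    rwa [← map_smul, circleMap_zero, mul_assoc, mul_comm _ I, real_smul, ← mul_assoc, ofReal_inv,
      inv_mul_cancel₀ (ofReal_ne_zero.2 hs), one_mul] at h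
  rw [intervalIntegral.integral_eq_sub_of_hasDerivAt (fun θ _ => hderiv θ)]
  · simp [circleMap]
  · exact ((continuous_fderiv_circleMap hU w (v := fun p => I * exp (p.2 * I)) (by fun_prop)).comp
      (Continuous.prodMk_right s)).intervalIntegrable _ _

lemma circleAverage_sub_circleAverage {U : ℂ → E} (hU : ContDiff ℝ 1 U) (w : ℂ) {r R : ℝ}
    (hr : 0 ≤ r) (hR : r ≤ R) :
    Real.circleAverage U w R - Real.circleAverage U w r =
      Real.pi⁻¹ • ∫ p in polarRect r R, exp (-(p.2 * I)) • dbar U (circleMap w p.1 p.2) := by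
  have hrad : Continuous fun p : ℝ × ℝ => fderiv ℝ U (circleMap w p.1 p.2) (exp (p.2 * I)) :=
    continuous_fderiv_circleMap hU w (by fun_prop)
  have htan : Continuous fun p : ℝ × ℝ => fderiv ℝ U (circleMap w p.1 p.2) (I * exp (p.2 * I)) :=
    continuous_fderiv_circleMap hU w (by fun_prop)
  have hcirc (s : ℝ) : IntervalIntegrable (fun θ => U (circleMap w s θ)) volume 0 (2 * Real.pi) :=
    (hU.continuous.comp (continuous_circleMap w s)).intervalIntegrable _ _
  have htan_zero : ∫ p in polarRect r R, fderiv ℝ U (circleMap w p.1 p.2) (I * exp (p.2 * I)) =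
      0 := by
    rw [setIntegral_polarRect htan hR, intervalIntegral.integral_congr_ae (g := fun _ => (0 : E)),
      intervalIntegral.integral_zero]
    refine .of_forall fun s hs => integral_fderiv_tangential hU w ?_
    exact (hr.trans_lt (uIoc_of_le hR ▸ hs).1).ne'
  have hrad_eq : ∫ p in polarRect r R, fderiv ℝ U (circleMap w p.1 p.2) (exp (p.2 * I)) =
      (2 * Real.pi) • (Real.circleAverage U w R - Real.circleAverage U w r) := by
    rw [setIntegral_polarRect hrad hR, intervalIntegral_intervalIntegral_swap]
    · simp only [integral_fderiv_radial hU, Real.circleAverage]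
      rw [intervalIntegral.integral_sub (hcirc R) (hcirc r), ← smul_sub,
        smul_inv_smul₀ Real.two_pi_pos.ne']
    · rw [uIoc_of_le hR, uIoc_of_le Real.two_pi_pos.le]
      exact (integrableOn_polarRect hrad r R).mono_set
        (prod_mono Ioc_subset_Icc_self Ioc_subset_Icc_self)
  have hsum := integral_add (integrableOn_polarRect hrad r R)
    ((integrableOn_polarRect htan r R).smul I)
  simp only [Pi.smul_apply, MeasureTheory.integral_smul, htan_zero, hrad_eq, ← exp_neg_smul_dbar,
    smul_zero, add_zero] at hsum
  rw [← coe_smul Real.pi⁻¹, ofReal_inv, eq_inv_smul_iff₀ (by simp [Real.pi_ne_zero])]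
  refine smul_right_injective E (two_ne_zero (α := ℂ)) ?_
  simp only [hsum, ← coe_smul, ofReal_ofNat, mul_smul]

/-- The Cauchy transform `-(1/π) ∬ ψ(z) / (z - w)` of `ψ` over the disc `|z - w| ≤ R`. -/
def cauchyTransform (ψ : ℂ → E) (R : ℝ) (w : ℂ) : E :=
  -(Real.pi⁻¹ • ∫ p in polarRect 0 R, exp (-(p.2 * I)) • ψ (circleMap w p.1 p.2))

lemma eq_circleAverage_add_cauchyTransform_dbar {U : ℂ → E} (hU : ContDiff ℝ 1 U) (w : ℂ) {R : ℝ}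
    (hR : 0 ≤ R) : U w = Real.circleAverage U w R + cauchyTransform (dbar U) R w := by
  have h := circleAverage_sub_circleAverage hU w le_rfl hR
  rw [Real.circleAverage_zero] at h
  rw [cauchyTransform, ← h]
  abel

end CauchyPompeiu

section CauchyTransform

open Complex

variable {E : Type*} [NormedAddCommGroup E] [NormedSpace ℂ E]

lemma differentiableAt_of_dbar_eq_zero {U : ℂ → E} {z : ℂ} (hU : DifferentiableAt ℝ U z)
    (h : dbar U z = 0) : DifferentiableAt ℂ U z := by
  rw [differentiableAt_complex_iff_differentiableAt_real]
  refine ⟨hU, ?_⟩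
  have h' : fderiv ℝ U z 1 + I • fderiv ℝ U z I = 0 := by
    simpa [dbar, ← smul_add] using h
  rw [eq_neg_of_add_eq_zero_left h', smul_neg, smul_smul, I_mul_I, neg_one_smul, neg_neg]

lemma cauchyTransform_add {ψ χ : ℂ → E} (hψ : Continuous ψ) (hχ : Continuous χ) (R : ℝ) (w : ℂ) :
    cauchyTransform (fun z => ψ z + χ z) R w = cauchyTransform ψ R w + cauchyTransform χ R w := by
  simp only [cauchyTransform, smul_add]
  rw [integral_add (integrableOn_polarRect (continuous_cauchyKernel_smul hψ w) 0 R)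
    (integrableOn_polarRect (continuous_cauchyKernel_smul hχ w) 0 R), smul_add, neg_add]

lemma cauchyTransform_smul (c : ℂ) (ψ : ℂ → E) (R : ℝ) (w : ℂ) :
    cauchyTransform (fun z => c • ψ z) R w = c • cauchyTransform ψ R w := by
  simp only [cauchyTransform, smul_comm _ c, integral_smul, smul_neg]

lemma hasFDerivAt_cauchyTransform {ψ : ℂ → E} (hψ : ContDiff ℝ 1 ψ) (R : ℝ) (w : ℂ) :
    HasFDerivAt (cauchyTransform ψ R) (-(Real.pi⁻¹ • ∫ p in polarRect 0 R,
      exp (-(p.2 * I)) • fderiv ℝ ψ (circleMap w p.1 p.2))) w := by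
  have hcont := continuous_cauchyKernel_smul hψ.continuous
  have hcont' := continuous_cauchyKernel_smul (hψ.continuous_fderiv one_ne_zero)
  have hderiv (w : ℂ) (p : ℝ × ℝ) :
      HasFDerivAt (fun w => exp (-(p.2 * I)) • ψ (circleMap w p.1 p.2))
        (exp (-(p.2 * I)) • fderiv ℝ ψ (circleMap w p.1 p.2)) w :=
    ((hψ.differentiable one_ne_zero _).hasFDerivAt.comp w
      ((hasFDerivAt_id w).add_const _)).const_smul _
  have hcomp : Continuous fun q : ℂ × ℝ × ℝ => fderiv ℝ ψ (circleMap q.1 q.2.1 q.2.2) :=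
    (hψ.continuous_fderiv one_ne_zero).comp (by unfold circleMap; fun_prop)
  obtain ⟨B, hB⟩ := ((isCompact_closedBall w 1).prod (isCompact_polarRect 0 R)).bddAbove_image
    hcomp.norm.continuousOn
  have hint : HasFDerivAt
      (fun w => ∫ p in polarRect 0 R, exp (-(p.2 * I)) • ψ (circleMap w p.1 p.2))
      (∫ p in polarRect 0 R, exp (-(p.2 * I)) • fderiv ℝ ψ (circleMap w p.1 p.2)) w := by
    refine hasFDerivAt_integral_of_dominated_of_fderiv_le (bound := fun _ => B)
      (Metric.closedBall_mem_nhds w one_pos) (.of_forall fun w => (hcont w).aestronglyMeasurable)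
      (integrableOn_polarRect (hcont w) 0 R) (hcont' w).aestronglyMeasurable ?_
      (integrableOn_polarRect continuous_const 0 R) (.of_forall fun p z _ => hderiv z p)
    refine (ae_restrict_iff' (measurableSet_polarRect 0 R)).2 (.of_forall fun p hp z hz => ?_)
    rw [norm_smul, ← neg_mul, ← ofReal_neg, norm_exp_ofReal_mul_I, one_mul]
    exact hB ⟨(z, p), ⟨hz, hp⟩, rfl⟩
  exact (hint.const_smul Real.pi⁻¹).neg

lemma fderiv_cauchyTransform_apply {ψ : ℂ → E} (hψ : ContDiff ℝ 1 ψ) (R : ℝ) (w v : ℂ) :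
    fderiv ℝ (cauchyTransform ψ R) w v = cauchyTransform (fun z => fderiv ℝ ψ z v) R w := by
  have hint := integrableOn_polarRect
    (continuous_cauchyKernel_smul (hψ.continuous_fderiv one_ne_zero) w) 0 R
  rw [(hasFDerivAt_cauchyTransform hψ R w).fderiv, cauchyTransform, neg_apply,
    smul_apply, ContinuousLinearMap.integral_apply hint]
  rfl

lemma dbar_cauchyTransform {ψ : ℂ → E} (hψ : ContDiff ℝ 1 ψ) (R : ℝ) (w : ℂ) :
    dbar (cauchyTransform ψ R) w = cauchyTransform (dbar ψ) R w := by
  have hcont (v : ℂ) : Continuous fun z => fderiv ℝ ψ z v :=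
    (hψ.continuous_fderiv one_ne_zero).clm_apply continuous_const
  unfold dbar
  rw [cauchyTransform_smul, cauchyTransform_add (hcont 1) (χ := fun z => I • fderiv ℝ ψ z I)
      ((hcont I).const_smul I),
    cauchyTransform_smul, fderiv_cauchyTransform_apply hψ, fderiv_cauchyTransform_apply hψ]

variable [CompleteSpace E]

lemma differentiableAt_cauchyTransform {ψ : ℂ → E} (hψ : ContDiff ℝ 1 ψ) {R : ℝ} (hR : 0 ≤ R)
    {w : ℂ} (hw : ψ w = 0) (hψR : ∀ z ∈ Metric.sphere w R, ψ z = 0) :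
    DifferentiableAt ℂ (cauchyTransform ψ R) w := by
  refine differentiableAt_of_dbar_eq_zero (hasFDerivAt_cauchyTransform hψ R w).differentiableAt ?_
  have h := eq_circleAverage_add_cauchyTransform_dbar hψ w hR
  rw [hw, Real.circleAverage_const_on_circle (by rwa [abs_of_nonneg hR]), zero_add] at h
  rw [dbar_cauchyTransform hψ, ← h]

end CauchyTransform

section Energy

open Complex

variable {E : Type*} [NormedAddCommGroup E] [NormedSpace ℂ E]

lemma norm_exp_neg_mul_I (θ : ℝ) : ‖exp (-(θ * I))‖ = 1 := by
  rw [← neg_mul, ← ofReal_neg, norm_exp_ofReal_mul_I]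

/-- Near the pole the uniform bound `a` wins, elsewhere AM-GM for `x ≤ b √e`. -/
lemma le_mul_add_div_of_sq_le {x a b e s : ℝ} (ha : 0 < a) (hb : 0 < b) (hs : 0 ≤ s) (hxa : x ≤ a)
    (hxb : x ^ 2 ≤ b ^ 2 * e) : x ≤ b * (s * e) + b / 2 * (s + b / (4 * a))⁻¹ := by
  have hc : 0 < b / (4 * a) := by positivity
  have he : 0 ≤ e := by nlinarith [sq_nonneg x, sq_pos_of_pos hb]
  rw [← div_eq_mul_inv]
  rcases le_total s (b / (4 * a)) with hsc | hsc
  · have : a ≤ b / 2 / (s + b / (4 * a)) := by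
      rw [le_div_iff₀ (by positivity)]
      calc a * (s + b / (4 * a)) ≤ a * (b / (4 * a) + b / (4 * a)) := by gcongr
        _ = b / 2 := by field_simp; norm_num
    have : 0 ≤ b * (s * e) := by positivity
    linarith
  · have hs' : 0 < s := hc.trans_le hsc
    have hfrac : b / (4 * s) ≤ b / 2 / (s + b / (4 * a)) := by
      calc b / (4 * s) = b / 2 / (s + s) := by field_simp; norm_num
        _ ≤ b / 2 / (s + b / (4 * a)) := by gcongr
    have hamgm : x ≤ s * x ^ 2 / b + b / (4 * s) := by
      have : s * x ^ 2 / b + b / (4 * s) - x = (2 * s * x - b) ^ 2 / (4 * s * b) := by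
        field_simp; ring
      have : 0 ≤ (2 * s * x - b) ^ 2 / (4 * s * b) := by positivity
      linarith
    have hsq : s * x ^ 2 / b ≤ b * (s * e) := by
      rw [div_le_iff₀ hb]; nlinarith
    linarith

lemma setIntegral_polarRect_inv_add {R c : ℝ} (hR : 0 ≤ R) (hc : 0 < c) :
    ∫ p in polarRect 0 R, (p.1 + c)⁻¹ = 2 * Real.pi * Real.log (1 + R / c) := by
  rw [polarRect, Measure.volume_eq_prod]
  have h := setIntegral_prod_mul (μ := volume) (ν := volume) (fun s : ℝ => (s + c)⁻¹)
    (fun _ : ℝ => (1 : ℝ)) (Icc 0 R) (Icc 0 (2 * Real.pi))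
  simp only [mul_one] at h
  rw [h, integral_Icc_eq_integral_Ioc, ← intervalIntegral.integral_of_le hR,
    intervalIntegral.integral_comp_add_right (fun s => s⁻¹), integral_inv_of_pos (by linarith)
    (by linarith)]
  rw [integral_const, measureReal_restrict_apply_univ, Real.volume_real_Icc_of_le
    Real.two_pi_pos.le, smul_eq_mul, mul_one, sub_zero, mul_comm, zero_add, add_div,
    div_self hc.ne', add_comm (R / c)]

/-- The Cauchy kernel is not square integrable, so the energy `∬ e` alone would not do; the uniform
bound `a` enters only logarithmically. -/
lemma norm_cauchyTransform_le {ψ : ℂ → E} {e : ℂ → ℝ} (he : Continuous e)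
    {a b R : ℝ} (ha : 0 < a) (hb : 0 < b) (hR : 0 ≤ R) {w : ℂ}
    (hψa : ∀ z ∈ Metric.closedBall w R, ‖ψ z‖ ≤ a)
    (hψe : ∀ z ∈ Metric.closedBall w R, ‖ψ z‖ ^ 2 ≤ b ^ 2 * e z) :
    ‖cauchyTransform ψ R w‖ ≤ b * (Real.pi⁻¹ * ∫ p in polarRect 0 R, p.1 * e (circleMap w p.1 p.2))
      + b * Real.log (1 + 4 * a * R / b) := by
  have hc : 0 < b / (4 * a) := by positivity
  have henergy : IntegrableOn (fun p : ℝ × ℝ => p.1 * e (circleMap w p.1 p.2)) (polarRect 0 R) :=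
    integrableOn_polarRect (continuous_fst.mul (he.comp (continuous_circleMap_prod w))) 0 R
  have hinv : IntegrableOn (fun p : ℝ × ℝ => (p.1 + b / (4 * a))⁻¹) (polarRect 0 R) := by
    refine ContinuousOn.integrableOn_compact (isCompact_polarRect 0 R)
      (ContinuousOn.inv₀ (by fun_prop) fun p hp => ?_)
    linarith [hp.1.1]
  have hmono : ‖∫ p in polarRect 0 R, exp (-(p.2 * I)) • ψ (circleMap w p.1 p.2)‖ ≤
      ∫ p in polarRect 0 R,
        (b * (p.1 * e (circleMap w p.1 p.2)) + b / 2 * (p.1 + b / (4 * a))⁻¹) := by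
    refine norm_integral_le_of_norm_le ((henergy.const_mul b).add (hinv.const_mul (b / 2)))
      ((ae_restrict_iff' (measurableSet_polarRect 0 R)).2 (.of_forall fun p hp => ?_))
    have hmem : circleMap w p.1 p.2 ∈ Metric.closedBall w R :=
      Metric.closedBall_subset_closedBall hp.1.2 (circleMap_mem_closedBall w hp.1.1 p.2)
    rw [norm_smul, norm_exp_neg_mul_I, one_mul]
    exact le_mul_add_div_of_sq_le ha hb hp.1.1 (hψa _ hmem) (hψe _ hmem)
  rw [integral_add (henergy.const_mul b) (hinv.const_mul (b / 2)), integral_const_mul,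
    integral_const_mul, setIntegral_polarRect_inv_add hR hc] at hmono
  rw [cauchyTransform, norm_neg, norm_smul, Real.norm_of_nonneg (by positivity)]
  refine (mul_le_mul_of_nonneg_left hmono (by positivity)).trans_eq ?_
  rw [show R / (b / (4 * a)) = 4 * a * R / b by field_simp]
  field_simp

lemma dbar_sub_smul {a : ℂ → E} (ha : Differentiable ℝ a) (w z : ℂ) :
    dbar (fun z => (z - w) • a z) z = (z - w) • dbar a z := by
  have h : HasFDerivAt (fun z => (z - w) • a z)
      ((z - w) • fderiv ℝ a z + (ContinuousLinearMap.id ℝ ℂ).smulRight (a z)) z :=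
    ((hasFDerivAt_id z).sub_const w).smul (ha z).hasFDerivAt
  simp only [dbar, h.fderiv, add_apply, smul_apply, ContinuousLinearMap.smulRight_apply,
    ContinuousLinearMap.id_apply]
  linear_combination (norm := module) ((2 : ℂ)⁻¹ * I_mul_I) • a z

variable [CompleteSpace E]

/-- Cauchy–Pompeiu applied to `(z - w) a(z)`, which cancels the pole. -/
lemma circleAverage_sub_smul {a : ℂ → E} (ha : ContDiff ℝ 1 a) (w : ℂ) {R : ℝ} (hR : 0 ≤ R) :
    Real.circleAverage (fun z => (z - w) • a z) w R =
      Real.pi⁻¹ • ∫ p in polarRect 0 R, (p.1 : ℂ) • dbar a (circleMap w p.1 p.2) := by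
  have hU : ContDiff ℝ 1 fun z => (z - w) • a z := (contDiff_id.sub contDiff_const).smul ha
  have h := circleAverage_sub_circleAverage hU w le_rfl hR
  simp only [Real.circleAverage_zero, sub_self, zero_smul, sub_zero] at h
  rw [h]
  congr 2 with p
  rw [dbar_sub_smul (ha.differentiable one_ne_zero), circleMap_sub_center, circleMap_zero,
    smul_smul, mul_left_comm, ← exp_add, neg_add_cancel, exp_zero, mul_one]

lemma integral_exp_neg_mul_conj {a : ℂ → ℂ} (ha : ContDiff ℝ 1 a) {e : ℂ → ℝ}
    (hae : ∀ z, dbar a z = e z) (w : ℂ) {s : ℝ} (hs : 0 < s) :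
    ∫ θ in 0..2 * Real.pi, exp (-(θ * I)) * (starRingEnd ℂ) (a (circleMap w s θ)) =
      ((2 / s * ∫ p in polarRect 0 s, p.1 * e (circleMap w p.1 p.2) : ℝ) : ℂ) := by
  have h := circleAverage_sub_smul ha w hs.le
  simp only [hae, Real.circleAverage_def, circleMap_sub_center, smul_eq_mul, ← ofReal_mul,
    circleMap_zero, mul_assoc, intervalIntegral.integral_const_mul, real_smul] at h
  rw [integral_complex_ofReal] at h
  have hcircle : ∫ θ in 0..2 * Real.pi, exp (θ * I) * a (circleMap w s θ) =
      ((2 / s * ∫ p in polarRect 0 s, p.1 * e (circleMap w p.1 p.2) : ℝ) : ℂ) := by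
    have : (s : ℂ) ≠ 0 := ofReal_ne_zero.2 hs.ne'
    have : (Real.pi : ℂ) ≠ 0 := ofReal_ne_zero.2 Real.pi_ne_zero
    push_cast at h ⊢
    field_simp at h ⊢
    simpa only [mul_comm I] using h
  rw [← conj_ofReal, ← hcircle, ← intervalIntegral.intervalIntegral_conj]
  simp only [map_mul, ← exp_conj, conj_ofReal, conj_I, mul_neg]

lemma energy_le_re_setIntegral_conj {a : ℂ → ℂ} (ha : ContDiff ℝ 1 a) {e : ℂ → ℝ}
    (hae : ∀ z, dbar a z = e z) (he0 : ∀ z, 0 ≤ e z) (he : Continuous e) (w : ℂ) {R : ℝ}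
    (hR : 0 < R) :
    ∫ p in polarRect 0 R, p.1 * e (circleMap w p.1 p.2) ≤ (∫ p in polarRect R (2 * R),
      exp (-(p.2 * I)) * (starRingEnd ℂ) (a (circleMap w p.1 p.2))).re := by
  let K : ℝ → ℝ := fun s => ∫ p in polarRect 0 s, p.1 * e (circleMap w p.1 p.2)
  have hK_le {s : ℝ} (hs : R ≤ s) : K R ≤ K s := by
    refine setIntegral_mono_set (integrableOn_polarRect
      (continuous_fst.mul (he.comp (continuous_circleMap_prod w))) 0 s) ?_
      (prod_mono (Icc_subset_Icc_right hs) Subset.rfl).eventuallyLE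
    exact (ae_restrict_iff' (measurableSet_polarRect 0 s)).2
      (.of_forall fun p hp => mul_nonneg hp.1.1 (he0 _))
  have hK0 : 0 ≤ K R :=
    setIntegral_nonneg (measurableSet_polarRect 0 R) fun p hp => mul_nonneg hp.1.1 (he0 _)
  have hcont : Continuous fun p : ℝ × ℝ =>
      exp (-(p.2 * I)) * (starRingEnd ℂ) (a (circleMap w p.1 p.2)) :=
    continuous_cauchyKernel_smul (continuous_conj.comp ha.continuous) w
  have hcont_circle :=
    intervalIntegral.continuous_parametric_intervalIntegral_of_continuous' (μ := volume)
      (f := fun s θ => exp (-(θ * I)) * (starRingEnd ℂ) (a (circleMap w s θ))) hcont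
      0 (2 * Real.pi)
  rw [setIntegral_polarRect hcont (by linarith)]
  have hre := reCLM.intervalIntegral_comp_comm (μ := volume)
    (hcont_circle.intervalIntegrable R (2 * R))
  simp only [reCLM_apply] at hre
  calc K R = ∫ _ in R..2 * R, K R / R := by
        rw [intervalIntegral.integral_const, smul_eq_mul]; field_simp; ring
    _ ≤ _ := hre ▸ ?_
  refine intervalIntegral.integral_mono_on (by linarith) intervalIntegrable_const
    ((continuous_re.comp hcont_circle).intervalIntegrable _ _) fun s hs => ?_
  have hs0 : 0 < s := hR.trans_le hs.1
  rw [integral_exp_neg_mul_conj ha hae w hs0, ofReal_re]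
  calc K R / R = 2 / (2 * R) * K R := by field_simp
    _ ≤ 2 / s * K s := by gcongr; exacts [hs.2, hK_le hs.1]

lemma circleAverage_mem_Icc {φ : ℂ → ℝ} (hφ : Continuous φ) {w : ℂ} {R A B : ℝ}
    (hAB : ∀ z ∈ Metric.sphere w |R|, φ z ∈ Icc A B) : Real.circleAverage φ w R ∈ Icc A B := by
  have hint : CircleIntegrable φ w R := ContinuousOn.circleIntegrable' hφ.continuousOn
  refine ⟨?_, Real.circleAverage_mono_on_of_le_circle hint fun z hz => (hAB z hz).2⟩
  rw [← Real.circleAverage_const A w R]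
  exact Real.circleAverage_mono (circleIntegrable_const A w R) hint fun z hz => (hAB z hz).1

/-- The Riesz mass `∬ ∂∂̄φ` of a disc is controlled by the oscillation of `φ` on the doubled disc,
because by Stokes it drives the growth of the circle averages of `φ`. -/
lemma energy_le_pi_mul_sub {φ : ℂ → ℝ} {a : ℂ → ℂ} {e : ℂ → ℝ} (hφ : ContDiff ℝ 1 φ)
    (ha : ContDiff ℝ 1 a) (hφa : ∀ z, dbar (fun z => (φ z : ℂ)) z = (starRingEnd ℂ) (a z))
    (hae : ∀ z, dbar a z = e z) (he0 : ∀ z, 0 ≤ e z) (he : Continuous e) {w : ℂ} {R A B : ℝ}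
    (hR : 0 < R) (hAB : ∀ z ∈ Metric.closedBall w (2 * R), φ z ∈ Icc A B) :
    ∫ p in polarRect 0 R, p.1 * e (circleMap w p.1 p.2) ≤ Real.pi * (B - A) := by
  have haverage (s : ℝ) :
      Real.circleAverage (fun z => (φ z : ℂ)) w s = ((Real.circleAverage φ w s : ℝ) : ℂ) :=
    ofRealCLM.circleAverage_comp_comm
      (ContinuousOn.circleIntegrable' hφ.continuous.continuousOn)
  have hgrowth := congrArg re (circleAverage_sub_circleAverage (ofRealCLM.contDiff.comp hφ) w hR.le
    (R := 2 * R) (by linarith))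
  simp only [Function.comp_def, ofRealCLM_apply, hφa, smul_eq_mul, haverage, ← ofReal_sub,
    ofReal_re, smul_re] at hgrowth
  have hmem {r : ℝ} (hr : 0 ≤ r) (hr2 : r ≤ 2 * R) : Real.circleAverage φ w r ∈ Icc A B :=
    circleAverage_mem_Icc hφ.continuous fun z hz =>
      hAB z (Metric.closedBall_subset_closedBall (by rwa [abs_of_nonneg hr])
        (Metric.sphere_subset_closedBall hz))
  have hA := (hmem hR.le (by linarith)).1
  have hB := (hmem (by linarith) le_rfl).2
  calc _ ≤ Real.pi * (Real.pi⁻¹ * (∫ p in polarRect R (2 * R),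
        exp (-(p.2 * I)) * (starRingEnd ℂ) (a (circleMap w p.1 p.2))).re) := by
        rw [mul_inv_cancel_left₀ Real.pi_ne_zero]
        exact energy_le_re_setIntegral_conj ha hae he0 he w hR
    _ ≤ Real.pi * (B - A) := by rw [← hgrowth]; gcongr

end Energy

section Cutoff

open Complex

variable {E : Type*} [NormedAddCommGroup E] [NormedSpace ℂ E]

lemma contDiff_dbar {U : ℂ → E} (hU : ContDiff ℝ 2 U) : ContDiff ℝ 1 (dbar U) := by
  have : ContDiff ℝ 1 (fderiv ℝ U) := hU.fderiv_right (by norm_num)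
  unfold dbar
  fun_prop

lemma dbar_smul {c : ℂ → ℂ} {U : ℂ → E} {z : ℂ} (hc : DifferentiableAt ℝ c z)
    (hU : DifferentiableAt ℝ U z) :
    dbar (fun z => c z • U z) z = dbar c z • U z + c z • dbar U z := by
  simp only [dbar, fderiv_fun_smul hc hU, add_apply, smul_apply,
    ContinuousLinearMap.smulRight_apply, smul_eq_mul]
  module

lemma dbar_eq_zero_of_eventuallyEq_const {U : ℂ → E} {z : ℂ} {c : E} (h : U =ᶠ[nhds z] fun _ => c) :
    dbar U z = 0 := by
  simp [dbar, h.fderiv_eq]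

lemma lt_norm_of_mem_sphere {V : Type*} [SeminormedAddCommGroup V] {w z : V} {r R : ℝ}
    (hw : w ∈ Metric.ball 0 r) (hz : z ∈ Metric.sphere w R) : R - r < ‖z‖ := by
  rw [mem_ball_zero_iff] at hw
  rw [mem_sphere_iff_norm] at hz
  linarith [norm_sub_le z w]

lemma norm_le_of_mem_closedBall {V : Type*} [SeminormedAddCommGroup V] {w z : V} {r R : ℝ}
    (hw : w ∈ Metric.ball 0 r) (hz : z ∈ Metric.closedBall w R) : ‖z‖ ≤ r + R := by
  rw [mem_ball_zero_iff] at hw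
  rw [mem_closedBall_iff_norm] at hz
  linarith [norm_le_norm_add_norm_sub w z, norm_sub_rev w z]

variable [CompleteSpace E]

/-- With a cutoff `χ` equal to `1` near the unit disc, `∂̄(χu) = u ∂̄χ + χ ∂̄u`, and the Cauchy
transform of the first summand is holomorphic where `∂̄χ` vanishes. -/
lemma exists_differentiableOn_add_cauchyTransform {u : ℂ → E} (hu : ContDiff ℝ 2 u) :
    ∃ F Ψ : ℂ → E, DifferentiableOn ℂ F (Metric.ball 0 1) ∧ (∀ z, ‖Ψ z‖ ≤ ‖dbar u z‖) ∧
      ∀ w ∈ Metric.ball 0 1, u w = F w + cauchyTransform Ψ 4 w := by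
  let bump : ContDiffBump (0 : ℂ) := ⟨2, 3, by norm_num, by norm_num⟩
  let χ : ℂ → ℂ := fun z => (bump z : ℝ)
  have hχ : ContDiff ℝ 2 χ := ofRealCLM.contDiff.comp bump.contDiff
  have hχ_one {z : ℂ} (hz : z ∈ Metric.ball 0 1) : χ =ᶠ[nhds z] fun _ => 1 := by
    filter_upwards [bump.eventuallyEq_one_of_mem_ball (Metric.ball_subset_ball one_le_two hz)]
      with y hy
    simp [χ, hy]
  have hχ_zero {z : ℂ} (hz : 3 < ‖z‖) : χ =ᶠ[nhds z] fun _ => 0 := by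
    have hz : z ∉ tsupport bump := by simpa [bump.tsupport_eq] using hz
    filter_upwards [notMem_tsupport_iff_eventuallyEq.1 hz] with y hy
    simp [χ, hy]
  have hχ_le (z : ℂ) : ‖χ z‖ ≤ 1 := by
    rw [norm_real, Real.norm_of_nonneg bump.nonneg]
    exact bump.le_one
  have hsplit : dbar (fun z => χ z • u z) = fun z => dbar χ z • u z + χ z • dbar u z :=
    funext fun z => dbar_smul (hχ.differentiable two_ne_zero z) (hu.differentiable two_ne_zero z)
  have hsphere {w z : ℂ} (hw : w ∈ Metric.ball 0 1) (hz : z ∈ Metric.sphere w 4) : 3 < ‖z‖ := by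
    linarith [lt_norm_of_mem_sphere hw hz]
  have hψ : ContDiff ℝ 1 fun z => dbar χ z • u z := (contDiff_dbar hχ).smul (hu.of_le one_le_two)
  refine ⟨cauchyTransform (fun z => dbar χ z • u z) 4, fun z => χ z • dbar u z, fun w hw =>
    (differentiableAt_cauchyTransform hψ (by norm_num) ?_ fun z hz => ?_).differentiableWithinAt,
    fun z => ?_, fun w hw => ?_⟩
  · rw [dbar_eq_zero_of_eventuallyEq_const (hχ_one hw), zero_smul]
  · rw [dbar_eq_zero_of_eventuallyEq_const (hχ_zero (hsphere hw hz)), zero_smul]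
  · rw [norm_smul]
    exact mul_le_of_le_one_left (norm_nonneg _) (hχ_le z)
  · have h := eq_circleAverage_add_cauchyTransform_dbar (U := fun z => χ z • u z)
      ((hχ.smul hu).of_le one_le_two) w (R := 4) (by norm_num)
    have haverage : Real.circleAverage (fun z => χ z • u z) w 4 = 0 :=
      Real.circleAverage_const_on_circle fun z hz => by
        rw [abs_of_pos (by norm_num)] at hz
        simp only [(hχ_zero (hsphere hw hz)).eq_of_nhds, zero_smul]
    rwa [haverage, zero_add, hsplit, cauchyTransform_add hψ.continuous
      (χ := fun z => χ z • dbar u z)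
      (hχ.continuous.smul (continuous_dbar (hu.of_le one_le_two))), (hχ_one hw).eq_of_nhds,
      one_smul] at h

end Cutoff

section Wirtinger

open Complex

/-- `f` has Wirtinger derivatives `∂f = p` and `∂̄f = q` at `z`. -/
def HasWirtingerDerivAt (f : ℂ → ℂ) (p q z : ℂ) : Prop :=
  HasFDerivAt f (p • ContinuousLinearMap.id ℝ ℂ + q • (conjCLE : ℂ →L[ℝ] ℂ)) z

namespace HasWirtingerDerivAt

variable {f g : ℂ → ℂ} {p q p' q' z : ℂ}

lemma dbar_eq (h : HasWirtingerDerivAt f p q z) : dbar f z = q := by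
  simp only [dbar, h.fderiv, add_apply, smul_apply, smul_eq_mul, ContinuousLinearMap.id_apply,
    ContinuousLinearEquiv.coe_coe, conjCLE_apply, map_one, conj_I]
  linear_combination (p - q) / 2 * I_mul_I

lemma of_hasDerivAt (h : HasDerivAt f p z) : HasWirtingerDerivAt f p 0 z := by
  refine (h.hasFDerivAt.restrictScalars ℝ).congr_fderiv ?_
  ext v
  simp [mul_comm]

lemma conj (h : HasWirtingerDerivAt f p q z) :
    HasWirtingerDerivAt (fun z => (starRingEnd ℂ) (f z)) ((starRingEnd ℂ) q) ((starRingEnd ℂ) p)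
      z := by
  refine ((conjCLE : ℂ →L[ℝ] ℂ).hasFDerivAt.comp z h).congr_fderiv ?_
  ext v
  simp only [ContinuousLinearMap.comp_add, add_apply, ContinuousLinearMap.comp_apply, smul_apply,
    ContinuousLinearMap.id_apply, smul_eq_mul, ContinuousLinearEquiv.coe_coe,
    ContinuousAlgEquiv.coeCLE_apply, conjCAE_apply, map_mul, RingHomCompTriple.comp_apply,
    RingHom.id_apply]
  ring

lemma mul (hf : HasWirtingerDerivAt f p q z) (hg : HasWirtingerDerivAt g p' q' z) :
    HasWirtingerDerivAt (fun z => f z * g z) (p * g z + f z * p') (q * g z + f z * q') z := by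
  refine (HasFDerivAt.mul hf hg).congr_fderiv ?_
  ext v
  simp only [smul_add, add_apply, smul_apply, ContinuousLinearMap.id_apply, smul_eq_mul,
    ContinuousLinearEquiv.coe_coe, ContinuousAlgEquiv.coeCLE_apply, conjCAE_apply]
  ring

lemma add_const (h : HasWirtingerDerivAt f p q z) (c : ℂ) :
    HasWirtingerDerivAt (fun z => f z + c) p q z :=
  HasFDerivAt.add_const c h

lemma hasDerivAt_comp {k : ℂ → ℂ} {k' : ℂ} (h : HasWirtingerDerivAt f p q z)
    (hk : HasDerivAt k k' (f z)) :
    HasWirtingerDerivAt (fun z => k (f z)) (k' * p) (k' * q) z := by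
  refine ((hk.hasFDerivAt.restrictScalars ℝ).comp z h).congr_fderiv ?_
  ext v
  simp only [ContinuousLinearMap.comp_add, add_apply, ContinuousLinearMap.comp_apply, smul_apply,
    ContinuousLinearMap.id_apply, smul_eq_mul, ContinuousLinearMap.coe_restrictScalars',
    ContinuousLinearMap.toSpanSingleton_apply, ContinuousLinearEquiv.coe_coe,
    ContinuousAlgEquiv.coeCLE_apply, conjCAE_apply]
  ring

end HasWirtingerDerivAt
end Wirtinger

section RegularizedQuotient

open Complex

/-- The smooth substitute `h ḡ / (|g|² + r²)` for the quotient `h / g`, with the zeros of `g`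
regularized at scale `r`. -/
def regQuot (g h : ℂ → ℂ) (r : ℝ) (z : ℂ) : ℂ :=
  h z * (starRingEnd ℂ) (g z) * (g z * (starRingEnd ℂ) (g z) + (r : ℂ) ^ 2)⁻¹

/-- The energy density `∂∂̄ log (|g|² + r²)` of the regularization. -/
def logEnergy (g : ℂ → ℂ) (r : ℝ) (z : ℂ) : ℝ :=
  ‖deriv g z‖ ^ 2 * r ^ 2 / (‖g z‖ ^ 2 + r ^ 2) ^ 2

variable {g h : ℂ → ℂ} {r : ℝ}

lemma mul_conj_add_sq (z : ℂ) (r : ℝ) :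
    z * (starRingEnd ℂ) z + (r : ℂ) ^ 2 = ((‖z‖ ^ 2 + r ^ 2 : ℝ) : ℂ) := by
  rw [mul_conj']
  push_cast
  rfl

lemma mul_conj_add_sq_ne_zero (z : ℂ) (hr : 0 < r) : z * (starRingEnd ℂ) z + (r : ℂ) ^ 2 ≠ 0 := by
  rw [mul_conj_add_sq, ofReal_ne_zero]
  positivity

lemma norm_mul_conj_add_sq (z : ℂ) (r : ℝ) :
    ‖z * (starRingEnd ℂ) z + (r : ℂ) ^ 2‖ = ‖z‖ ^ 2 + r ^ 2 := by
  rw [mul_conj_add_sq, norm_real, Real.norm_of_nonneg (by positivity)]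

lemma hasWirtingerDerivAt_mul_conj_add_sq (hg : Differentiable ℂ g) (r : ℝ) (z : ℂ) :
    HasWirtingerDerivAt (fun z => g z * (starRingEnd ℂ) (g z) + (r : ℂ) ^ 2)
      (deriv g z * (starRingEnd ℂ) (g z)) (g z * (starRingEnd ℂ) (deriv g z)) z := by
  have h := HasWirtingerDerivAt.of_hasDerivAt (hg z).hasDerivAt
  simpa using (h.mul h.conj).add_const ((r : ℂ) ^ 2)

lemma dbar_regQuot (hg : Differentiable ℂ g) (hh : Differentiable ℂ h) (hr : 0 < r) (z : ℂ) :
    dbar (regQuot g h r) z = h z * (starRingEnd ℂ) (deriv g z) * (r : ℂ) ^ 2 /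
      (g z * (starRingEnd ℂ) (g z) + (r : ℂ) ^ 2) ^ 2 := by
  have hne := mul_conj_add_sq_ne_zero (g z) hr
  have hnum := (HasWirtingerDerivAt.of_hasDerivAt (hh z).hasDerivAt).mul
    (HasWirtingerDerivAt.of_hasDerivAt (hg z).hasDerivAt).conj
  have hden := (hasWirtingerDerivAt_mul_conj_add_sq hg r z).hasDerivAt_comp (hasDerivAt_inv hne)
  refine (hnum.mul hden).dbar_eq.trans ?_
  field_simp
  ring

lemma contDiff_regQuot (hg : Differentiable ℂ g) (hh : Differentiable ℂ h) (hr : 0 < r) :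
    ContDiff ℝ 2 (regQuot g h r) := by
  have hg' : ContDiff ℝ 2 g := (hg.contDiff (n := 2)).restrict_scalars ℝ
  have hh' : ContDiff ℝ 2 h := (hh.contDiff (n := 2)).restrict_scalars ℝ
  have hconj : ContDiff ℝ 2 fun z => (starRingEnd ℂ) (g z) :=
    (conjCLE : ℂ →L[ℝ] ℂ).contDiff.comp hg'
  exact (hh'.mul hconj).mul
    (((hg'.mul hconj).add contDiff_const).inv fun z => mul_conj_add_sq_ne_zero (g z) hr)

lemma norm_dbar_regQuot (hg : Differentiable ℂ g) (hh : Differentiable ℂ h) (hr : 0 < r) (z : ℂ) :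
    ‖dbar (regQuot g h r) z‖ = ‖h z‖ * ‖deriv g z‖ * r ^ 2 / (‖g z‖ ^ 2 + r ^ 2) ^ 2 := by
  rw [dbar_regQuot hg hh hr, norm_div, norm_pow, norm_mul_conj_add_sq, norm_mul, norm_mul, norm_pow,
    norm_real, Real.norm_of_nonneg hr.le, RCLike.norm_conj]

lemma dbar_regQuot_deriv_self (hg : Differentiable ℂ g) (hr : 0 < r) (z : ℂ) :
    dbar (regQuot g (deriv g) r) z = logEnergy g r z := by
  rw [dbar_regQuot hg hg.deriv hr, mul_conj_add_sq, mul_conj', logEnergy]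
  push_cast
  rfl

lemma continuous_logEnergy (hg : Differentiable ℂ g) (hr : 0 < r) : Continuous (logEnergy g r) := by
  have := hg.continuous
  have := hg.deriv.continuous
  exact Continuous.div (by fun_prop) (by fun_prop) fun z => by positivity

lemma logEnergy_nonneg (g : ℂ → ℂ) (r : ℝ) (z : ℂ) : 0 ≤ logEnergy g r z := by
  unfold logEnergy
  positivity

lemma contDiff_log_normSq_add_sq (hg : Differentiable ℂ g) (hr : 0 < r) :
    ContDiff ℝ 1 fun z => Real.log (‖g z‖ ^ 2 + r ^ 2) := by
  have hg' : ContDiff ℝ 1 g := (hg.contDiff (n := 1)).restrict_scalars ℝ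
  exact ((hg'.norm_sq ℂ).add contDiff_const).log fun z => by positivity

lemma dbar_log_normSq_add_sq (hg : Differentiable ℂ g) (hr : 0 < r) (z : ℂ) :
    dbar (fun z => ((Real.log (‖g z‖ ^ 2 + r ^ 2) : ℝ) : ℂ)) z =
      (starRingEnd ℂ) (regQuot g (deriv g) r z) := by
  have hlog (z : ℂ) : ((Real.log (‖g z‖ ^ 2 + r ^ 2) : ℝ) : ℂ) =
      log (g z * (starRingEnd ℂ) (g z) + (r : ℂ) ^ 2) := by
    rw [mul_conj_add_sq, ofReal_log (by positivity)]
  have hslit : g z * (starRingEnd ℂ) (g z) + (r : ℂ) ^ 2 ∈ slitPlane := by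
    rw [mul_conj_add_sq, ofReal_mem_slitPlane]
    positivity
  simp only [hlog]
  rw [((hasWirtingerDerivAt_mul_conj_add_sq hg r z).hasDerivAt_comp
    (hasDerivAt_log hslit)).dbar_eq, regQuot]
  simp only [map_mul, map_inv₀, map_add, map_pow, conj_conj, conj_ofReal]
  ring

lemma setIntegral_logEnergy_le (hg : Differentiable ℂ g) (hr : 0 < r) (hr1 : r ≤ 1) {w : ℂ} {R : ℝ}
    (hR : 0 < R) (hg1 : ∀ z ∈ Metric.closedBall w (2 * R), ‖g z‖ ≤ 1) :
    ∫ p in polarRect 0 R, p.1 * logEnergy g r (circleMap w p.1 p.2) ≤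
      Real.pi * (Real.log 2 - 2 * Real.log r) := by
  refine energy_le_pi_mul_sub (contDiff_log_normSq_add_sq hg hr)
    ((contDiff_regQuot hg hg.deriv hr).of_le one_le_two) (dbar_log_normSq_add_sq hg hr)
    (dbar_regQuot_deriv_self hg hr) (logEnergy_nonneg g r) (continuous_logEnergy hg hr) hR
    fun z hz => ⟨?_, ?_⟩
  · rw [← Nat.cast_ofNat, ← Real.log_pow]
    exact Real.log_le_log (by positivity) (by nlinarith [sq_nonneg ‖g z‖])
  · refine Real.log_le_log (by positivity) ?_
    nlinarith [hg1 z hz, norm_nonneg (g z)]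

end RegularizedQuotient

section Approximation

lemma norm_pow_le_two_mul_pow {𝕜 : Type*} [NormedDivisionRing 𝕜] {a b : 𝕜} {j : ℕ} {r s : ℝ}
    (hr : 0 ≤ r) (hrs : r ≤ s) (ha : ‖a‖ ≤ s) (hab : ‖b ^ j - a ^ (j + 1)‖ ≤ r ^ (j + 1)) :
    ‖b‖ ^ j ≤ 2 * s ^ (j + 1) := by
  calc ‖b‖ ^ j = ‖b ^ j - a ^ (j + 1) + a ^ (j + 1)‖ := by rw [sub_add_cancel, norm_pow]
    _ ≤ r ^ (j + 1) + ‖a‖ ^ (j + 1) := (norm_add_le _ _).trans (add_le_add hab (norm_pow _ _).le)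
    _ ≤ s ^ (j + 1) + s ^ (j + 1) := by gcongr
    _ = 2 * s ^ (j + 1) := by ring

lemma le_four_mul_of_pow_le {j : ℕ} (hj : j ≠ 0) {x s : ℝ} (hs : 0 ≤ s) (hs2 : s ≤ 2)
    (h : x ^ j ≤ 2 * s ^ (j + 1)) : x ≤ 4 * s := by
  refine le_of_pow_le_pow_left₀ hj (by positivity) ?_
  calc x ^ j ≤ 2 * (s * s ^ j) := by rwa [← pow_succ']
    _ ≤ 2 * (2 * s ^ j) := by gcongr
    _ = 4 * s ^ j := by ring
    _ ≤ 4 ^ j * s ^ j := by gcongr; exact le_self_pow₀ (by norm_num) hj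
    _ = (4 * s) ^ j := (mul_pow 4 s j).symm

lemma mul_pow_le_of_pow_le {j : ℕ} (hj : j ≠ 0) {x s ϱ : ℝ} (hϱ : 0 ≤ ϱ) (hs : ϱ ^ (2 * j) ≤ s)
    (h : x ^ j ≤ 2 * s ^ (j + 1)) : x * ϱ ^ (2 * j) ≤ 2 * ϱ ^ 2 * s ^ 2 := by
  have hs0 : 0 ≤ s := (by positivity : 0 ≤ ϱ ^ (2 * j)).trans hs
  refine le_of_pow_le_pow_left₀ hj (by positivity) ?_
  obtain ⟨i, rfl⟩ := Nat.exists_eq_succ_of_ne_zero hj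
  calc (x * ϱ ^ (2 * (i + 1))) ^ (i + 1)
      = x ^ (i + 1) * (ϱ ^ (2 * (i + 1)) * (ϱ ^ (2 * (i + 1))) ^ i) := by ring
    _ ≤ 2 * s ^ (i + 1 + 1) * (ϱ ^ (2 * (i + 1)) * s ^ i) := by gcongr
    _ = 2 * (ϱ ^ 2 * s ^ 2) ^ (i + 1) := by ring
    _ ≤ 2 ^ (i + 1) * (ϱ ^ 2 * s ^ 2) ^ (i + 1) := by
        gcongr
        exact le_self_pow₀ one_le_two hj
    _ = (2 * ϱ ^ 2 * s ^ 2) ^ (i + 1) := by ring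

lemma neg_mul_log_le_one {x : ℝ} (hx : 0 < x) : -(x * Real.log x) ≤ 1 := by
  have h := mul_le_mul_of_nonneg_left (Real.one_sub_inv_le_log_of_pos hx) hx.le
  rw [mul_sub, mul_inv_cancel₀ hx.ne'] at h
  linarith

lemma norm_deriv_le_of_norm_le {E : Type*} [NormedAddCommGroup E] [NormedSpace ℂ E] {g : ℂ → E}
    (hg : Differentiable ℂ g) {C R z₀} (hC : ∀ z ∈ Metric.closedBall z₀ (R + 1), ‖g z‖ ≤ C) :
    ∀ z ∈ Metric.closedBall z₀ R, ‖deriv g z‖ ≤ C := by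
  intro z hz
  have h := Complex.norm_deriv_le_of_forall_mem_sphere_norm_le one_pos hg.diffContOnCl (C := C)
    fun y (hy : y ∈ Metric.sphere z 1) => hC y (Metric.mem_closedBall.2 ?_)
  · rwa [div_one] at h
  · rw [Metric.mem_sphere] at hy
    rw [Metric.mem_closedBall] at hz
    linarith [dist_triangle y z z₀]

variable {j : ℕ} {g h : ℂ → ℂ} {r ϱ : ℝ}

lemma norm_regQuot (g h : ℂ → ℂ) (r : ℝ) (z : ℂ) :
    ‖regQuot g h r z‖ = ‖h z‖ * ‖g z‖ / (‖g z‖ ^ 2 + r ^ 2) := by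
  rw [regQuot, norm_mul, norm_inv, norm_mul_conj_add_sq, norm_mul, RCLike.norm_conj, div_eq_mul_inv]

lemma exists_sq_eq_sq_add_sq {x r : ℝ} (hr : 0 < r) :
    ∃ s, s ^ 2 = x ^ 2 + r ^ 2 ∧ r ≤ s ∧ x ≤ s :=
  ⟨√(x ^ 2 + r ^ 2), Real.sq_sqrt (by positivity), Real.le_sqrt_of_sq_le (by nlinarith),
    Real.le_sqrt_of_sq_le (by nlinarith)⟩

lemma norm_regQuot_le_four (hj : j ≠ 0) (hr : 0 < r) (hr1 : r ≤ 1) {z : ℂ} (hg : ‖g z‖ ≤ 1)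
    (hgh : ‖h z ^ j - g z ^ (j + 1)‖ ≤ r ^ (j + 1)) : ‖regQuot g h r z‖ ≤ 4 := by
  obtain ⟨s, hs, hrs, hgs⟩ := exists_sq_eq_sq_add_sq (x := ‖g z‖) hr
  have hs0 : 0 < s := hr.trans_le hrs
  have hs2 : s ≤ 2 := by nlinarith [norm_nonneg (g z)]
  have hhs := le_four_mul_of_pow_le hj hs0.le hs2 (norm_pow_le_two_mul_pow hr.le hrs hgs hgh)
  rw [norm_regQuot, ← hs]
  calc ‖h z‖ * ‖g z‖ / s ^ 2 ≤ 4 * s * s / s ^ 2 := by gcongr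
    _ = 4 := by field_simp

lemma norm_mul_le_sq_mul (hj : j ≠ 0) (hϱ : 0 < ϱ) {z : ℂ}
    (hgh : ‖h z ^ j - g z ^ (j + 1)‖ ≤ (ϱ ^ (2 * j)) ^ (j + 1)) :
    ‖h z‖ * ϱ ^ (2 * j) ≤ 2 * ϱ ^ 2 * (‖g z‖ ^ 2 + (ϱ ^ (2 * j)) ^ 2) := by
  obtain ⟨s, hs, hrs, hgs⟩ := exists_sq_eq_sq_add_sq (x := ‖g z‖) (pow_pos hϱ (2 * j))
  rw [← hs]
  exact mul_pow_le_of_pow_le hj hϱ.le hrs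
    (norm_pow_le_two_mul_pow (by positivity) hrs hgs hgh)

lemma norm_dbar_regQuot_le (hg : Differentiable ℂ g) (hh : Differentiable ℂ h) (hr : 0 < r)
    (hϱ1 : |ϱ| ≤ 1) {z : ℂ} (hg' : ‖deriv g z‖ ≤ 1)
    (hhr : ‖h z‖ * r ≤ 2 * ϱ ^ 2 * (‖g z‖ ^ 2 + r ^ 2)) :
    ‖dbar (regQuot g h r) z‖ ≤ 2 / r := by
  have hQ : r ^ 2 ≤ ‖g z‖ ^ 2 + r ^ 2 := le_add_of_nonneg_left (sq_nonneg _)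
  have hϱ2 : ϱ ^ 2 ≤ 1 := (sq_le_one_iff_abs_le_one ϱ).2 hϱ1
  have hhr' : ‖h z‖ * r ≤ 2 * 1 * (‖g z‖ ^ 2 + r ^ 2) := hhr.trans (by gcongr)
  rw [norm_dbar_regQuot hg hh hr]
  set Q := ‖g z‖ ^ 2 + r ^ 2
  have : 0 < Q := lt_of_lt_of_le (by positivity) hQ
  rw [div_le_div_iff₀ (by positivity) hr]
  calc ‖h z‖ * ‖deriv g z‖ * r ^ 2 * r = ‖h z‖ * r * ‖deriv g z‖ * r ^ 2 := by ring
    _ ≤ 2 * 1 * Q * 1 * Q := by gcongr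
    _ = 2 * Q ^ 2 := by ring

lemma sq_norm_dbar_regQuot_le (hg : Differentiable ℂ g) (hh : Differentiable ℂ h) (hr : 0 < r)
    {z : ℂ} (hhr : ‖h z‖ * r ≤ 2 * ϱ ^ 2 * (‖g z‖ ^ 2 + r ^ 2)) :
    ‖dbar (regQuot g h r) z‖ ^ 2 ≤ (2 * ϱ ^ 2) ^ 2 * logEnergy g r z := by
  rw [norm_dbar_regQuot hg hh hr, logEnergy]
  have hQ : 0 < ‖g z‖ ^ 2 + r ^ 2 := by positivity
  set Q := ‖g z‖ ^ 2 + r ^ 2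
  calc (‖h z‖ * ‖deriv g z‖ * r ^ 2 / Q ^ 2) ^ 2
      = (‖h z‖ * r) ^ 2 * (‖deriv g z‖ ^ 2 * r ^ 2 / Q ^ 4) := by field_simp
    _ ≤ (2 * ϱ ^ 2 * Q) ^ 2 * (‖deriv g z‖ ^ 2 * r ^ 2 / Q ^ 4) := by gcongr
    _ = (2 * ϱ ^ 2) ^ 2 * (‖deriv g z‖ ^ 2 * r ^ 2 / Q ^ 2) := by field_simp

lemma two_mul_sq_mul_log_add_le (hϱ : 0 < ϱ) (hϱ1 : ϱ ≤ 1) (j : ℕ) :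
    2 * ϱ ^ 2 * (Real.log 2 - 2 * Real.log (ϱ ^ (2 * j))) +
      2 * ϱ ^ 2 * Real.log (1 + 4 * (2 / ϱ ^ (2 * j)) * 4 / (2 * ϱ ^ 2)) ≤ 12 * (j + 1) * ϱ := by
  have hr1 : ϱ ^ (2 * j) * ϱ ^ 2 ≤ 1 := mul_le_one₀ (pow_le_one₀ hϱ.le hϱ1) (by positivity)
    (pow_le_one₀ hϱ.le hϱ1)
  have hlog : Real.log (1 + 4 * (2 / ϱ ^ (2 * j)) * 4 / (2 * ϱ ^ 2)) ≤
      Real.log 17 - Real.log (ϱ ^ (2 * j) * ϱ ^ 2) := by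
    rw [← Real.log_div (by norm_num) (by positivity)]
    refine Real.log_le_log (by positivity) ?_
    rw [le_div_iff₀ (by positivity)]
    calc (1 + 4 * (2 / ϱ ^ (2 * j)) * 4 / (2 * ϱ ^ 2)) * (ϱ ^ (2 * j) * ϱ ^ 2)
        = ϱ ^ (2 * j) * ϱ ^ 2 + 16 := by field_simp; ring
      _ ≤ 17 := by linarith
  have hlog34 : Real.log 2 + Real.log 17 ≤ 4 := by
    rw [← Real.log_mul (by norm_num) (by norm_num), Real.log_le_iff_le_exp (by norm_num)]
    calc (2 * 17 : ℝ) ≤ 2.7 ^ 4 := by norm_num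
      _ ≤ Real.exp 1 ^ 4 := by gcongr; linarith [Real.exp_one_gt_d9]
      _ = Real.exp 4 := by rw [← Real.exp_nat_mul]; norm_num
  have hl := neg_mul_log_le_one hϱ
  set l := -(ϱ * Real.log ϱ) with hldef
  calc _ ≤ 2 * ϱ ^ 2 * (Real.log 2 - 2 * Real.log (ϱ ^ (2 * j))) +
        2 * ϱ ^ 2 * (Real.log 17 - Real.log (ϱ ^ (2 * j) * ϱ ^ 2)) := by gcongr
    _ = 2 * ϱ * (ϱ * (Real.log 2 + Real.log 17) + (6 * j + 2) * l) := by
        rw [Real.log_mul (by positivity) (by positivity), Real.log_pow, Real.log_pow, hldef]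
        push_cast
        ring
    _ ≤ 2 * ϱ * (1 * 4 + (6 * j + 2) * 1) := by gcongr
    _ = 12 * (j + 1) * ϱ := by ring

/-- If `h ^ j` is close to `g ^ (j + 1)`, then `h / g` is nearly holomorphic: the constraint turns
`‖∂̄ (regQuot g h r)‖ ^ 2` into a small multiple of the energy density, whose total mass is only
`O(log (1 / r))`. -/
lemma exists_differentiableOn_norm_sub_regQuot_le (hj : j ≠ 0) (hg : Differentiable ℂ g)
    (hh : Differentiable ℂ h) (hϱ : 0 < ϱ) (hϱ1 : ϱ ≤ 1)
    (hg1 : ∀ z ∈ Metric.closedBall 0 10, ‖g z‖ ≤ 1)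
    (hgh : ∀ z ∈ Metric.closedBall 0 10,
      ‖h z ^ j - g z ^ (j + 1)‖ ≤ (ϱ ^ (2 * j)) ^ (j + 1)) :
    ∃ F : ℂ → ℂ, DifferentiableOn ℂ F (Metric.ball 0 1) ∧
      ∀ w ∈ Metric.ball 0 1, ‖F w - regQuot g h (ϱ ^ (2 * j)) w‖ ≤ 12 * (j + 1) * ϱ := by
  have hr : 0 < ϱ ^ (2 * j) := by positivity
  have hr1 : ϱ ^ (2 * j) ≤ 1 := pow_le_one₀ hϱ.le hϱ1
  obtain ⟨F, Ψ, hF, hΨ, hsplit⟩ :=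
    exists_differentiableOn_add_cauchyTransform (contDiff_regQuot hg hh hr)
  refine ⟨F, hF, fun w hw => ?_⟩
  have hmem {R : ℝ} (hR : R ≤ 9) {z : ℂ} (hz : z ∈ Metric.closedBall w R) :
      z ∈ Metric.closedBall 0 10 := by
    rw [mem_closedBall_zero_iff]
    linarith [norm_le_of_mem_closedBall hw hz]
  have hhr {z : ℂ} (hz : z ∈ Metric.closedBall w 4) :=
    norm_mul_le_sq_mul hj hϱ (hgh z (hmem (by norm_num) hz))
  have hg' : ∀ z ∈ Metric.closedBall w 4, ‖deriv g z‖ ≤ 1 :=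
    norm_deriv_le_of_norm_le hg fun z hz => hg1 z (hmem (by norm_num) hz)
  have hmass := setIntegral_logEnergy_le hg hr hr1 (w := w) (R := 4) (by norm_num)
    fun z hz => hg1 z (hmem (by norm_num) hz)
  have htransform := norm_cauchyTransform_le (ψ := Ψ) (continuous_logEnergy hg hr)
    (a := 2 / ϱ ^ (2 * j)) (b := 2 * ϱ ^ 2) (by positivity) (by positivity) (R := 4) (by norm_num)
    (fun z hz => (hΨ z).trans
      (norm_dbar_regQuot_le hg hh hr (by rwa [abs_of_pos hϱ]) (hg' z hz) (hhr hz)))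
    (fun z hz => (pow_le_pow_left₀ (norm_nonneg _) (hΨ z) 2).trans
      (sq_norm_dbar_regQuot_le hg hh hr (hhr hz)))
  calc ‖F w - regQuot g h (ϱ ^ (2 * j)) w‖ = ‖cauchyTransform Ψ 4 w‖ := by
        rw [hsplit w hw, sub_add_cancel_left, norm_neg]
    _ ≤ _ := htransform
    _ ≤ 2 * ϱ ^ 2 * (Real.log 2 - 2 * Real.log (ϱ ^ (2 * j))) +
        2 * ϱ ^ 2 * Real.log (1 + 4 * (2 / ϱ ^ (2 * j)) * 4 / (2 * ϱ ^ 2)) := by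
        gcongr
        rwa [inv_mul_le_iff₀ Real.pi_pos]
    _ ≤ 12 * (j + 1) * ϱ := two_mul_sq_mul_log_add_le hϱ hϱ1 j

end Approximation

section PolynomialBounds

open Metric Polynomial

lemma exists_mul_eq_one_and_add_eq_two_mul {z : ℂ} (hz : ‖z‖ ≤ 1) :
    ∃ v w : ℂ, v * w = 1 ∧ v + w = 2 * z ∧ ‖v‖ ≤ 3 ∧ ‖w‖ ≤ 1 := by
  obtain ⟨c, hc⟩ := IsAlgClosed.exists_pow_nat_eq (z ^ 2 - 1) two_pos
  obtain ⟨v, w, hvw, hadd, hw⟩ : ∃ v w : ℂ, v * w = 1 ∧ v + w = 2 * z ∧ ‖w‖ ≤ 1 := by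
    have hmul : ‖z + c‖ * ‖z - c‖ = 1 := by
      rw [← norm_mul, show (z + c) * (z - c) = 1 by linear_combination -hc, norm_one]
    rcases le_or_gt ‖z + c‖ 1 with hle | hgt
    · exact ⟨z - c, z + c, by linear_combination -hc, by ring, hle⟩
    · exact ⟨z + c, z - c, by linear_combination -hc, by ring, by nlinarith [norm_nonneg (z - c)]⟩
  refine ⟨v, w, hvw, hadd, ?_, hw⟩
  calc ‖v‖ = ‖2 * z - w‖ := by rw [← hadd, add_sub_cancel_right]
    _ ≤ 2 * ‖z‖ + ‖w‖ := (norm_sub_le _ _).trans_eq (by rw [norm_mul, Complex.norm_ofNat])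
    _ ≤ 3 := by linarith

lemma exists_differentiable_eq_pow_mul_eval {P : ℂ[X]} {n : ℕ} (hP : P.natDegree ≤ n) (r : ℂ) :
    ∃ G : ℂ → ℂ, Differentiable ℂ G ∧
      ∀ w ≠ 0, G w = w ^ n * P.eval (r * ((w + w⁻¹) / 2)) := by
  refine ⟨fun w => ∑ l ∈ Finset.range (n + 1),
    P.coeff l * (w ^ (n - l) * (r * ((w ^ 2 + 1) / 2)) ^ l), by fun_prop, fun w hw => ?_⟩
  rw [eval_eq_sum_range' (Nat.lt_succ_of_le hP), Finset.mul_sum]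
  refine Finset.sum_congr rfl fun l hl => ?_
  have hpow : w ^ n = w ^ (n - l) * w ^ l := by
    rw [← pow_add, Nat.sub_add_cancel (Finset.mem_range_succ_iff.mp hl)]
  have hnum : r * ((w ^ 2 + 1) / 2) = w * (r * ((w + w⁻¹) / 2)) := by field_simp
  rw [hpow, hnum, mul_pow w]
  ring

/-- Apply the maximum principle to `w ^ n * P (R (w + w⁻¹) / 2)`, which is entire and only sees
the values of `P` on `[-R, R]` when `w` is on the unit circle. -/
theorem norm_eval_le_three_pow_mul {P : ℂ[X]} {n : ℕ} (hP : P.natDegree ≤ n) {A R : ℝ}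
    (hR : 0 < R) (hA : ∀ x : ℝ, |x| ≤ R → ‖P.eval (x : ℂ)‖ ≤ A) {z : ℂ} (hz : ‖z‖ ≤ R) :
    ‖P.eval z‖ ≤ 3 ^ n * A := by
  obtain ⟨G, hG, hGP⟩ := exists_differentiable_eq_pow_mul_eval hP R
  have hG_le : ∀ w : ℂ, ‖w‖ ≤ 1 → ‖G w‖ ≤ A := by
    intro w hw
    refine Complex.norm_le_of_forall_mem_frontier_norm_le (U := ball 0 1) isBounded_ball
      hG.diffContOnCl (fun w hw => ?_)
      (by rwa [closure_ball _ one_ne_zero, mem_closedBall_zero_iff])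
    rw [frontier_ball _ one_ne_zero, mem_sphere_zero_iff_norm] at hw
    have hreal : (R : ℂ) * ((w + w⁻¹) / 2) = ((R * w.re : ℝ) : ℂ) := by
      rw [Complex.inv_eq_conj hw, Complex.add_conj]
      push_cast
      ring
    rw [hGP w (norm_ne_zero_iff.mp (by simp [hw])), norm_mul, norm_pow, hw, one_pow, one_mul, hreal]
    refine hA _ ?_
    rw [abs_mul, abs_of_pos hR]
    exact mul_le_of_le_one_right hR.le ((Complex.abs_re_le_norm w).trans_eq hw)
  have hR' : (R : ℂ) ≠ 0 := Complex.ofReal_ne_zero.mpr hR.ne'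
  obtain ⟨v, w, hvw, hadd, hv, hw⟩ := exists_mul_eq_one_and_add_eq_two_mul (z := z / R) (by
    rw [norm_div, Complex.norm_real, Real.norm_of_nonneg hR.le]
    exact div_le_one_of_le₀ hz hR.le)
  have hz_eq : (R : ℂ) * ((w + w⁻¹) / 2) = z := by
    rw [← eq_inv_of_mul_eq_one_left hvw, add_comm, hadd]
    field_simp
  have heval : P.eval z = v ^ n * G w := by
    rw [hGP w (right_ne_zero_of_mul_eq_one hvw), hz_eq, ← mul_assoc, ← mul_pow, hvw, one_pow,
      one_mul]
  rw [heval, norm_mul, norm_pow]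
  have := hG_le w hw
  gcongr

lemma exists_degree_lt_norm_sub_eval_le {R : ℝ} (hR : 0 < R) (L : ℕ) {G : ℂ → ℂ} {B : ℝ}
    (hG : DifferentiableOn ℂ G (ball 0 R)) (hB : ∀ z ∈ ball (0 : ℂ) R, ‖G z‖ ≤ B) :
    ∃ P : ℂ[X], P.degree < L ∧
      ∀ z ∈ ball (0 : ℂ) R, ‖G z - P.eval z‖ ≤ B * (2 * ‖z‖ / R) ^ L := by
  induction L generalizing G B with
  | zero => exact ⟨0, by simp, fun z hz => by simpa using hB z hz⟩
  | succ L ih =>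
    have h0 : (0 : ℂ) ∈ ball (0 : ℂ) R := mem_ball_self hR
    have hslope : ∀ z ∈ ball (0 : ℂ) R, ‖dslope G 0 z‖ ≤ 2 * B / R := by
      intro z hz
      refine Complex.norm_dslope_le_div_of_mapsTo_ball hG (fun y hy => ?_) hz
      rw [mem_closedBall_iff_norm]
      linarith [norm_sub_le (G y) (G 0), hB y hy, hB 0 h0]
    obtain ⟨P, hPdeg, hP⟩ :=
      ih ((Complex.differentiableOn_dslope (ball_mem_nhds 0 hR)).2 hG) hslope
    refine ⟨C (G 0) + P * X, ?_, fun z hz => ?_⟩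
    · refine (degree_add_le _ _).trans_lt (max_lt (degree_C_le.trans_lt (by norm_cast; omega)) ?_)
      rw [degree_mul_X, Nat.cast_succ]
      exact WithBot.add_lt_add_right WithBot.one_ne_bot hPdeg
    · have hG_eq : G z = G 0 + dslope G 0 z * z := by
        have := sub_smul_dslope G 0 z
        rw [sub_zero, smul_eq_mul] at this
        linear_combination -this
      calc ‖G z - (C (G 0) + P * X).eval z‖ = ‖dslope G 0 z - P.eval z‖ * ‖z‖ := by
            rw [← norm_mul, hG_eq]
            simp only [eval_add, eval_C, eval_mul, eval_X]
            ring_nf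
        _ ≤ 2 * B / R * (2 * ‖z‖ / R) ^ L * ‖z‖ := by gcongr; exact hP z hz
        _ = B * (2 * ‖z‖ / R) ^ (L + 1) := by rw [pow_succ]; ring

/-- A two-constants estimate: compare `G` with its Taylor polynomial of degree about
`log κ / log (1/9)` and propagate the bound from the real axis by `norm_eval_le_three_pow_mul`. -/
theorem norm_le_three_mul_of_norm_le_sq_on_real {G : ℂ → ℂ} {B κ : ℝ}
    (hG : DifferentiableOn ℂ G (ball 0 1)) (hB : ∀ z ∈ ball (0 : ℂ) 1, ‖G z‖ ≤ B)
    (hκ : 0 < κ) (hκ1 : κ ≤ 1) (hreal : ∀ x : ℝ, |x| < 1 → ‖G x‖ ≤ B * κ ^ 2) {z : ℂ}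
    (hz : ‖z‖ ≤ 1 / 54) : ‖G z‖ ≤ 3 * B * κ := by
  have hB0 : 0 ≤ B := (norm_nonneg _).trans (hB 0 (mem_ball_self one_pos))
  obtain ⟨n, hn_lt, hn_le⟩ :=
    exists_nat_pow_near_of_lt_one hκ hκ1 (y := (1 / 9 : ℝ)) (by norm_num) (by norm_num)
  obtain ⟨P, hPdeg, hP⟩ := exists_degree_lt_norm_sub_eval_le one_pos (n + 1) hG hB
  have hPrem : ∀ z : ℂ, ‖z‖ ≤ 1 / 54 → ‖G z - P.eval z‖ ≤ B * (1 / 27) ^ (n + 1) := fun z hz =>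
    (hP z (by rw [mem_ball_zero_iff]; linarith)).trans (by rw [div_one]; gcongr; linarith)
  have hPreal : ∀ x : ℝ, |x| ≤ 1 / 54 →
      ‖P.eval (x : ℂ)‖ ≤ B * κ ^ 2 + B * (1 / 27) ^ (n + 1) := fun x hx => by
    have := norm_sub_le (G x) (G x - P.eval (x : ℂ))
    rw [sub_sub_cancel] at this
    exact this.trans (add_le_add (hreal x (by linarith)) (hPrem x (by simpa using hx)))
  have hPz := norm_eval_le_three_pow_mul (natDegree_le_of_degree_le (Order.le_of_lt_succ hPdeg))
    (by norm_num) hPreal hz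
  have hrem : (3 : ℝ) ^ n * (1 / 27) ^ (n + 1) ≤ κ :=
    calc (3 : ℝ) ^ n * (1 / 27) ^ (n + 1) ≤ 3 ^ (n + 1) * (1 / 27) ^ (n + 1) := by
          gcongr <;> norm_num
      _ = (1 / 9) ^ (n + 1) := by rw [← mul_pow]; norm_num
      _ ≤ κ := hn_lt.le
  have hmain : (3 : ℝ) ^ n * κ ≤ 1 :=
    calc (3 : ℝ) ^ n * κ ≤ 9 ^ n * (1 / 9) ^ n := by gcongr; norm_num
      _ = 1 := by rw [← mul_pow]; norm_num
  have hrem' : (1 / 27 : ℝ) ^ (n + 1) ≤ κ :=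
    (le_mul_of_one_le_left (by positivity) (one_le_pow₀ (by norm_num))).trans hrem
  calc ‖G z‖ ≤ ‖G z - P.eval z‖ + ‖P.eval z‖ := norm_le_norm_sub_add _ _
    _ ≤ B * (1 / 27) ^ (n + 1) + 3 ^ n * (B * κ ^ 2 + B * (1 / 27) ^ (n + 1)) :=
        add_le_add (hPrem z hz) hPz
    _ = B * (1 / 27) ^ (n + 1) + B * κ * (3 ^ n * κ) + B * (3 ^ n * (1 / 27) ^ (n + 1)) := by ring
    _ ≤ B * κ + B * κ * 1 + B * κ := by gcongr
    _ = 3 * B * κ := by ring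

end PolynomialBounds

section FiniteDifferences

open Metric Polynomial fwdDiff

variable {M M' V : Type*} [AddCommMonoid M] [AddCommMonoid M']

lemma fwdDiff_iter_congr [AddCommGroup V] {f : M → V} {g : M' → V} {h y : M} {h' y' : M'} {n : ℕ}
    (hfg : ∀ i ≤ n, f (y + i • h) = g (y' + i • h')) : Δ_[h] ^[n] f y = Δ_[h'] ^[n] g y' := by
  simp only [fwdDiff_iter_eq_sum_shift]
  exact Finset.sum_congr rfl fun i hi => by rw [hfg i (Finset.mem_range_succ_iff.mp hi)]

lemma norm_fwdDiff_iter_le [SeminormedAddCommGroup V] {f : M → V} {h y : M} {n : ℕ} {B : ℝ}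
    (hB : ∀ i ≤ n, ‖f (y + i • h)‖ ≤ B) : ‖Δ_[h] ^[n] f y‖ ≤ 2 ^ n * B := by
  rw [fwdDiff_iter_eq_sum_shift]
  have hsum : (2 : ℝ) ^ n = ∑ i ∈ Finset.range (n + 1), (n.choose i : ℝ) := by
    exact_mod_cast (Nat.sum_range_choose n).symm
  rw [hsum, Finset.sum_mul]
  refine norm_sum_le_of_le _ fun i hi => (norm_zsmul_le _ _).trans ?_
  have := hB i (Finset.mem_range_succ_iff.mp hi)
  rw [norm_mul, norm_pow, norm_neg, norm_one, one_pow, one_mul, Int.norm_natCast]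
  gcongr

lemma fwdDiff_iter_eval_eq_zero {R : Type*} [CommRing R] {P : R[X]} {n : ℕ} (hP : P.degree < n)
    (h y : R) : Δ_[h] ^[n] P.eval y = 0 := by
  rcases eq_or_ne P 0 with rfl | hP0
  · simp [fwdDiff_iter_eq_sum_shift]
  set Q : R[X] := P.comp (C y + C h * X) with hQ
  have hQdeg : Q.natDegree < n := by
    have hlin : (C y + C h * X : R[X]).natDegree ≤ 1 := by rw [add_comm]; exact natDegree_linear_le
    calc Q.natDegree ≤ P.natDegree * (C y + C h * X : R[X]).natDegree := natDegree_comp_le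
      _ ≤ P.natDegree * 1 := by gcongr
      _ < n := by rwa [mul_one, natDegree_lt_iff_degree_lt hP0]
  have hline : Δ_[h] ^[n] P.eval y =
      Δ_[1] ^[n] (fun x => ∑ k ∈ Finset.range n, Q.coeff k * x ^ k) 0 := by
    refine fwdDiff_iter_congr fun i _ => ?_
    rw [← eval_eq_sum_range' hQdeg, hQ]
    simp [mul_comm h]
  rw [hline, fwdDiff_iter_sum_mul_pow_eq_zero, Pi.zero_apply]

theorem norm_fwdDiff_iter_le_of_differentiableOn {R B : ℝ} (hR : 0 < R) {G : ℂ → ℂ}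
    (hG : DifferentiableOn ℂ G (ball 0 R)) (hB : ∀ z ∈ ball (0 : ℂ) R, ‖G z‖ ≤ B) {k : ℕ} {t : ℂ}
    (ht : k * ‖t‖ < R) : ‖Δ_[t] ^[k] G 0‖ ≤ B * (4 * (k * ‖t‖) / R) ^ k := by
  have hB0 : 0 ≤ B := (norm_nonneg _).trans (hB 0 (mem_ball_self hR))
  obtain ⟨P, hPdeg, hP⟩ := exists_degree_lt_norm_sub_eval_le hR k hG hB
  have hsub : Δ_[t] ^[k] G 0 = Δ_[t] ^[k] (G - P.eval) 0 := by
    rw [← sub_add_cancel G P.eval, fwdDiff_iter_add, Pi.add_apply, fwdDiff_iter_eval_eq_zero hPdeg,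
      add_zero, sub_add_cancel]
  have hrem : ∀ i ≤ k, ‖(G - P.eval) (0 + i • t)‖ ≤ B * (2 * (k * ‖t‖) / R) ^ k := by
    intro i hi
    have hnorm : ‖0 + i • t‖ ≤ k * ‖t‖ := by
      rw [zero_add, nsmul_eq_mul, norm_mul, Complex.norm_natCast]
      gcongr
    refine (hP _ (mem_ball_zero_iff.mpr (hnorm.trans_lt ht))).trans ?_
    gcongr
  calc ‖Δ_[t] ^[k] G 0‖ ≤ 2 ^ k * (B * (2 * (k * ‖t‖) / R) ^ k) := hsub ▸ norm_fwdDiff_iter_le hrem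
    _ = B * (2 * (2 * (k * ‖t‖) / R)) ^ k := by rw [mul_pow 2 (2 * (k * ‖t‖) / R)]; ring
    _ = B * (4 * (k * ‖t‖) / R) ^ k := by ring

end FiniteDifferences

section RegularizedQuotientOfPowers

variable {j : ℕ} {g h : ℂ → ℂ} {ϱ : ℝ} {z φ : ℂ}

lemma norm_sub_regQuot_le_of_norm_le_pow (hj : j ≠ 0) (hϱ : 0 < ϱ) (hϱ1 : ϱ ≤ 1)
    (hg : ‖g z‖ ≤ ϱ ^ j) (hφg : ‖φ ^ j - g z‖ ≤ ϱ ^ (2 * j))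
    (hgh : ‖h z ^ j - g z ^ (j + 1)‖ ≤ (ϱ ^ (2 * j)) ^ (j + 1)) :
    ‖φ - regQuot g h (ϱ ^ (2 * j)) z‖ ≤ 6 * ϱ := by
  have hr : 0 < ϱ ^ (2 * j) := by positivity
  have hrϱ : ϱ ^ (2 * j) ≤ ϱ ^ j := pow_le_pow_of_le_one hϱ.le hϱ1 (by omega)
  obtain ⟨s, hs, hrs, hgs⟩ := exists_sq_eq_sq_add_sq (x := ‖g z‖) hr
  have hs0 : 0 < s := hr.trans_le hrs
  have hφ : ‖φ‖ ≤ 2 * ϱ := by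
    refine le_of_pow_le_pow_left₀ hj (by positivity) ?_
    calc ‖φ‖ ^ j = ‖φ ^ j - g z + g z‖ := by rw [sub_add_cancel, norm_pow]
      _ ≤ ϱ ^ (2 * j) + ϱ ^ j := (norm_add_le _ _).trans (add_le_add hφg hg)
      _ ≤ 2 * ϱ ^ j := by linarith
      _ ≤ 2 ^ j * ϱ ^ j := by gcongr; exact le_self_pow₀ one_le_two hj
      _ = (2 * ϱ) ^ j := (mul_pow _ _ _).symm
  have hh : ‖h z‖ ≤ 4 * ϱ * s := by
    have hs2 : s ≤ 2 * ϱ ^ j := by nlinarith [norm_nonneg (g z)]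
    refine le_of_pow_le_pow_left₀ hj (by positivity) ?_
    calc ‖h z‖ ^ j ≤ 2 * (s * s ^ j) := by
          rw [← pow_succ']
          exact norm_pow_le_two_mul_pow hr.le hrs hgs hgh
      _ ≤ 2 * (2 * ϱ ^ j * s ^ j) := by gcongr
      _ = 4 * (ϱ ^ j * s ^ j) := by ring
      _ ≤ 4 ^ j * (ϱ ^ j * s ^ j) := by gcongr; exact le_self_pow₀ (by norm_num) hj
      _ = (4 * ϱ * s) ^ j := by rw [mul_pow, mul_pow, mul_assoc]
  have hu : ‖regQuot g h (ϱ ^ (2 * j)) z‖ ≤ 4 * ϱ := by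
    rw [norm_regQuot, ← hs, div_le_iff₀ (by positivity)]
    calc ‖h z‖ * ‖g z‖ ≤ 4 * ϱ * s * s := by gcongr
      _ = 4 * ϱ * s ^ 2 := by ring
  linarith [norm_sub_le φ (regQuot g h (ϱ ^ (2 * j)) z)]

lemma norm_sub_regQuot_mul_le {r : ℝ} (hr : 0 < r) {c : ℝ} (hφ : ‖φ * g z - h z‖ ≤ c) :
    ‖φ - regQuot g h r z‖ * (‖g z‖ ^ 2 + r ^ 2) ≤ c * ‖g z‖ + ‖φ‖ * r ^ 2 := by
  have hQ := mul_conj_add_sq_ne_zero (g z) hr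
  have hsplit : (φ - regQuot g h r z) * (g z * (starRingEnd ℂ) (g z) + (r : ℂ) ^ 2) =
      (φ * g z - h z) * (starRingEnd ℂ) (g z) + φ * (r : ℂ) ^ 2 := by
    rw [regQuot, sub_mul, inv_mul_cancel_right₀ hQ]
    ring
  rw [← norm_mul_conj_add_sq, ← norm_mul, hsplit]
  refine (norm_add_le _ _).trans (add_le_add ?_ ?_)
  · rw [norm_mul, RCLike.norm_conj]
    gcongr
  · rw [norm_mul, norm_pow, Complex.norm_of_nonneg hr.le]

lemma norm_sub_regQuot_le_of_pow_lt_norm (hj : j ≠ 0) (hϱ : 0 < ϱ) (hϱ1 : ϱ ≤ 1)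
    (hg : ϱ ^ j < ‖g z‖) (hg1 : ‖g z‖ ≤ 1) (hφg : ‖φ ^ j - g z‖ ≤ ϱ ^ (2 * j))
    (hφh : ‖φ ^ (j + 1) - h z‖ ≤ ϱ ^ (2 * j)) :
    ‖φ - regQuot g h (ϱ ^ (2 * j)) z‖ ≤ 6 * ϱ := by
  have hr : 0 < ϱ ^ (2 * j) := by positivity
  have hr1 : ϱ ^ (2 * j) ≤ 1 := pow_le_one₀ hϱ.le hϱ1
  have hϱj : ϱ ^ j ≤ ϱ := pow_le_of_le_one hϱ.le hϱ1 hj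
  have hφ : ‖φ‖ ≤ 2 := by
    refine le_of_pow_le_pow_left₀ hj zero_le_two ?_
    calc ‖φ‖ ^ j = ‖φ ^ j - g z + g z‖ := by rw [sub_add_cancel, norm_pow]
      _ ≤ 1 + 1 := (norm_add_le _ _).trans (add_le_add (hφg.trans hr1) hg1)
      _ ≤ 2 ^ j := one_add_one_eq_two.trans_le (le_self_pow₀ one_le_two hj)
  have hφgh : ‖φ * g z - h z‖ ≤ 3 * ϱ ^ (2 * j) := by
    rw [show φ * g z - h z = φ ^ (j + 1) - h z - φ * (φ ^ j - g z) by ring]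
    calc _ ≤ ‖φ ^ (j + 1) - h z‖ + ‖φ‖ * ‖φ ^ j - g z‖ := (norm_sub_le _ _).trans_eq (by
          rw [norm_mul])
      _ ≤ ϱ ^ (2 * j) + 2 * ϱ ^ (2 * j) := by gcongr
      _ = 3 * ϱ ^ (2 * j) := by ring
  have hrg : ϱ ^ (2 * j) ≤ ϱ ^ j * ‖g z‖ := by
    rw [two_mul, pow_add]
    gcongr
  refine le_of_mul_le_mul_right ((norm_sub_regQuot_mul_le hr hφgh).trans ?_)
    (by positivity : 0 < ‖g z‖ ^ 2 + (ϱ ^ (2 * j)) ^ 2)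
  calc 3 * ϱ ^ (2 * j) * ‖g z‖ + ‖φ‖ * (ϱ ^ (2 * j)) ^ 2
      ≤ 3 * (ϱ * ‖g z‖) * ‖g z‖ + 2 * (ϱ * ‖g z‖ * ‖g z‖) := by
        rw [sq (ϱ ^ (2 * j))]
        gcongr
        · exact hrg.trans (by gcongr)
        · exact hrg.trans (by gcongr)
        · exact hrg.trans (mul_le_of_le_one_left (norm_nonneg _) (hϱj.trans hϱ1))
    _ = 5 * ϱ * ‖g z‖ ^ 2 := by ring
    _ ≤ 6 * ϱ * (‖g z‖ ^ 2 + (ϱ ^ (2 * j)) ^ 2) := by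
        gcongr
        · norm_num
        · exact le_add_of_nonneg_right (by positivity)

theorem norm_sub_regQuot_le (hj : j ≠ 0) (hϱ : 0 < ϱ) (hϱ1 : ϱ ≤ 1) (hg1 : ‖g z‖ ≤ 1)
    (hφg : ‖φ ^ j - g z‖ ≤ ϱ ^ (2 * j)) (hφh : ‖φ ^ (j + 1) - h z‖ ≤ ϱ ^ (2 * j))
    (hgh : ‖h z ^ j - g z ^ (j + 1)‖ ≤ (ϱ ^ (2 * j)) ^ (j + 1)) :
    ‖φ - regQuot g h (ϱ ^ (2 * j)) z‖ ≤ 6 * ϱ :=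
  (le_or_gt ‖g z‖ (ϱ ^ j)).elim
    (fun hg => norm_sub_regQuot_le_of_norm_le_pow hj hϱ hϱ1 hg hφg hgh)
    (fun hg => norm_sub_regQuot_le_of_pow_lt_norm hj hϱ hϱ1 hg hg1 hφg hφh)

end RegularizedQuotientOfPowers

section AssociatedFunction

lemma exists_forall_le_and_forall_le_zero {f : ℕ → ℝ} (hpos : ∀ k, 0 < f k)
    (hf : ∀ k, f (k + 1) ^ 2 ≤ f k * f (k + 2)) (hex : ∃ k, f k ≤ f (k + 1)) :
    ∃ p, (∀ k, f p ≤ f k) ∧ ∀ k ≤ p, f k ≤ f 0 := by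
  classical
  set p := Nat.find hex
  have hanti : Antitone fun k => f (min k p) := antitone_nat_of_succ_le fun k => by
    rcases lt_or_ge k p with hk | hk
    · rw [min_eq_left hk.le, min_eq_left (Nat.succ_le_of_lt hk)]
      exact (not_le.1 (Nat.find_min hex hk)).le
    · rw [min_eq_right hk, min_eq_right (hk.trans (Nat.le_succ k))]
  have hmono : Monotone fun k => f (p + k) := monotone_nat_of_le_succ fun k => by
    induction k with
    | zero => exact Nat.find_spec hex
    | succ k ih =>
      refine le_of_mul_le_mul_left ?_ (hpos (p + (k + 1)))
      calc f (p + (k + 1)) * f (p + (k + 1)) ≤ f (p + k) * f (p + k + 2) := by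
            rw [← sq]
            exact hf (p + k)
        _ ≤ f (p + (k + 1)) * f (p + (k + 1 + 1)) :=
            mul_le_mul_of_nonneg_right ih (hpos _).le
  have hle : ∀ l k, l ≤ k → k ≤ p → f k ≤ f l := fun l k hlk hkp => by
    simpa only [min_eq_left hkp, min_eq_left (hlk.trans hkp)] using hanti hlk
  refine ⟨p, fun k => ?_, fun k hk => hle 0 k k.zero_le hk⟩
  rcases le_total k p with hk | hk
  · exact hle k p hk le_rfl
  · obtain ⟨i, rfl⟩ := Nat.exists_eq_add_of_le hk
    exact hmono i.zero_le

/-- The associated function `t ↦ inf_k n_k t ^ k` of a sequence `n`, which for a weight sequence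
measures how well a function with Taylor coefficients bounded by `n` is approximated at scale `t`
by its Taylor polynomials of optimal degree. -/
def assocFun (n : ℕ → ℝ) (t : ℝ) : ℝ := ⨅ k, n k * t ^ k

variable {n : ℕ → ℝ} {t : ℝ}

lemma assocFun_le (hn : ∀ k, 0 ≤ n k) (ht : 0 ≤ t) (k : ℕ) : assocFun n t ≤ n k * t ^ k :=
  ciInf_le ⟨0, forall_mem_range.2 fun k => mul_nonneg (hn k) (pow_nonneg ht k)⟩ k

lemma assocFun_le_assocFun (hn : ∀ k, 0 ≤ n k) {t' : ℝ} (ht : 0 ≤ t) (htt' : t ≤ t') :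
    assocFun n t ≤ assocFun n t' :=
  le_ciInf fun k => (assocFun_le hn ht k).trans
    (mul_le_mul_of_nonneg_left (pow_le_pow_left₀ ht htt' k) (hn k))

lemma exists_mul_pow_eq_assocFun (hpos : ∀ k, 0 < n k)
    (hlc : ∀ k, n (k + 1) ^ 2 ≤ n k * n (k + 2)) (hlim : ∀ c : ℝ, ∃ k, c * n k ≤ n (k + 1))
    (ht : 0 < t) : ∃ p, n p * t ^ p = assocFun n t ∧ ∀ k ≤ p, n k * t ^ k ≤ n 0 := by
  have hlc' : ∀ k, (n (k + 1) * t ^ (k + 1)) ^ 2 ≤ n k * t ^ k * (n (k + 2) * t ^ (k + 2)) :=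
    fun k => calc
      (n (k + 1) * t ^ (k + 1)) ^ 2 = n (k + 1) ^ 2 * t ^ (2 * k + 2) := by ring
      _ ≤ n k * n (k + 2) * t ^ (2 * k + 2) := by gcongr; exact hlc k
      _ = n k * t ^ k * (n (k + 2) * t ^ (k + 2)) := by ring
  have hex : ∃ k, n k * t ^ k ≤ n (k + 1) * t ^ (k + 1) := by
    obtain ⟨k, hk⟩ := hlim t⁻¹
    rw [inv_mul_le_iff₀ ht] at hk
    refine ⟨k, ?_⟩
    calc n k * t ^ k ≤ t * n (k + 1) * t ^ k := by gcongr
      _ = n (k + 1) * t ^ (k + 1) := by ring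
  obtain ⟨p, hmin, hle⟩ := exists_forall_le_and_forall_le_zero
    (fun k => mul_pos (hpos k) (pow_pos ht k)) hlc' hex
  refine ⟨p, le_antisymm (le_ciInf hmin) (assocFun_le (fun k => (hpos k).le) ht.le p), ?_⟩
  simpa only [pow_zero, mul_one] using hle

end AssociatedFunction

section ModerateGrowth

variable {x : ℕ → ℝ} {C : ℝ} {p q : ℕ}

lemma le_pow_pow_of_le_one (hC : 1 ≤ C) (hx : ∀ k, 0 ≤ x k)
    (hmg : ∀ a b, x (a + b) ≤ C ^ (a + b) * x a * x b) (hle : ∀ k ≤ p, x k ≤ 1) :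
    ∀ l ≤ (q + 1) * p, x l ≤ (C ^ q) ^ l := by
  induction q with
  | zero => simpa only [zero_add, one_mul, pow_zero, one_pow] using hle
  | succ q ih =>
    intro l hl
    rcases le_total l p with h | h
    · exact (hle l h).trans (one_le_pow₀ (one_le_pow₀ hC))
    · obtain ⟨i, rfl⟩ := Nat.exists_eq_add_of_le h
      calc x (p + i) ≤ C ^ (p + i) * x p * x i := hmg p i
        _ ≤ C ^ (p + i) * 1 * (C ^ q) ^ i := by
            gcongr
            · exact hx i
            · exact hle p le_rfl
            · exact ih i (by linarith)
        _ ≤ C ^ (p + i) * 1 * (C ^ q) ^ (p + i) := by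
            gcongr
            · exact one_le_pow₀ hC
            · exact Nat.le_add_left i p
        _ = (C ^ (q + 1)) ^ (p + i) := by rw [mul_one, pow_succ' C, mul_pow]

lemma mul_le_pow_mul_pow (hC : 1 ≤ C) (hx : ∀ k, 0 ≤ x k)
    (hmg : ∀ a b, x (a + b) ≤ C ^ (a + b) * x a * x b) :
    x ((q + 1) * p) ≤ (C ^ q) ^ ((q + 1) * p) * x p ^ (q + 1) := by
  induction q with
  | zero => simp
  | succ q ih =>
    rw [Nat.succ_mul, add_comm _ p]
    calc x (p + (q + 1) * p) ≤ C ^ (p + (q + 1) * p) * x p * x ((q + 1) * p) := hmg _ _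
      _ ≤ C ^ (p + (q + 1) * p) * x p *
          ((C ^ q) ^ (p + (q + 1) * p) * x p ^ (q + 1)) := by
          gcongr
          · exact mul_nonneg (by positivity) (hx p)
          · refine ih.trans ?_
            gcongr
            · exact pow_nonneg (hx p) _
            · exact one_le_pow₀ hC
            · exact Nat.le_add_left _ p
      _ = (C ^ (q + 1)) ^ (p + (q + 1) * p) * x p ^ (q + 1 + 1) := by
          rw [pow_succ' C, mul_pow, pow_succ' (x p) (q + 1)]
          ring

end ModerateGrowth

section HolomorphicApproximation

open Polynomial

lemma norm_pow_sub_pow_le {R : Type*} [SeminormedCommRing R] [NormOneClass R] {x y : R}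
    (hx : ‖x‖ ≤ 1) (hy : ‖y‖ ≤ 1) (k : ℕ) : ‖x ^ k - y ^ k‖ ≤ k * ‖x - y‖ := by
  induction k with
  | zero => simp
  | succ k ih =>
    rw [show x ^ (k + 1) - y ^ (k + 1) = (x ^ k - y ^ k) * x + y ^ k * (x - y) by ring]
    calc _ ≤ ‖x ^ k - y ^ k‖ * ‖x‖ + ‖y ^ k‖ * ‖x - y‖ :=
          (norm_add_le _ _).trans (add_le_add (norm_mul_le _ _) (norm_mul_le _ _))
      _ ≤ k * ‖x - y‖ * 1 + 1 * ‖x - y‖ := by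
          gcongr
          exact (norm_pow_le _ _).trans (pow_le_one₀ (norm_nonneg _) hy)
      _ = (k + 1 : ℕ) * ‖x - y‖ := by push_cast; ring

lemma mapsTo_ball_div {e : ℝ} (he : 0 < e) :
    MapsTo (fun z : ℂ => z / e) (Metric.ball 0 e) (Metric.ball 0 1) := fun z hz => by
  rwa [mem_ball_zero_iff, norm_div, Complex.norm_of_nonneg he.le, div_lt_one he,
    ← mem_ball_zero_iff]

/-- `H` is holomorphic on the disc of radius `R` about `0`, bounded there by `D`, and within `D * κ`
of `φ` on the real diameter. -/
structure IsHolomorphicApprox (φ : ℝ → ℂ) (R D κ : ℝ) (H : ℂ → ℂ) : Prop where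
  differentiableOn : DifferentiableOn ℂ H (Metric.ball 0 R)
  norm_le : ∀ z ∈ Metric.ball 0 R, ‖H z‖ ≤ D
  norm_sub_le : ∀ x : ℝ, |x| < R → ‖φ x - H x‖ ≤ D * κ

lemma IsHolomorphicApprox.comp_div {φ : ℝ → ℂ} {D κ e : ℝ} {F : ℂ → ℂ} (he : 0 < e)
    (hF : IsHolomorphicApprox (fun x => φ (e * x)) 1 D κ F) :
    IsHolomorphicApprox φ e D κ fun z => F (z / e) where
  differentiableOn := hF.differentiableOn.comp (by fun_prop) (mapsTo_ball_div he)
  norm_le z hz := hF.norm_le _ (mapsTo_ball_div he hz)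
  norm_sub_le x hx := by
    have h := hF.norm_sub_le (x / e) (by rwa [abs_div, abs_of_pos he, div_lt_one he])
    rwa [mul_div_cancel₀ _ he.ne', Complex.ofReal_div] at h

lemma norm_pow_sub_pow_succ_le {R : Type*} [SeminormedCommRing R] [NormOneClass R] {j : ℕ} {δ : ℝ}
    {u a b : R} (hδ : δ ≤ 1 / 2) (ha : ‖a‖ ≤ 1 / 2) (hb : ‖b‖ ≤ 1 / 2) (hua : ‖u ^ j - a‖ ≤ δ)
    (hub : ‖u ^ (j + 1) - b‖ ≤ δ) : ‖b ^ j - a ^ (j + 1)‖ ≤ (2 * j + 1) * δ := by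
  have hle_one : ∀ {v c : R}, ‖c‖ ≤ 1 / 2 → ‖v - c‖ ≤ δ → ‖v‖ ≤ 1 := fun {v c} hc hvc => by
    linarith [norm_le_norm_add_norm_sub' v c]
  have hsplit : b ^ j - a ^ (j + 1) =
      ((u ^ j) ^ (j + 1) - a ^ (j + 1)) - ((u ^ (j + 1)) ^ j - b ^ j) := by ring
  rw [hsplit]
  calc _ ≤ ‖(u ^ j) ^ (j + 1) - a ^ (j + 1)‖ + ‖(u ^ (j + 1)) ^ j - b ^ j‖ := norm_sub_le _ _
    _ ≤ (j + 1 : ℕ) * δ + j * δ := by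
        gcongr
        · exact (norm_pow_sub_pow_le (hle_one ha hua) (by linarith) _).trans (by gcongr)
        · exact (norm_pow_sub_pow_le (hle_one hb hub) (by linarith) _).trans (by gcongr)
    _ = (2 * j + 1) * δ := by push_cast; ring

/-- On the real axis `Q ^ j - P ^ (j + 1)` is small because `(φ ^ (j + 1)) ^ j = (φ ^ j) ^ (j + 1)`;
being a polynomial of degree at most `(j + 1) * L`, it is then small on the whole disc. -/
lemma norm_eval_pow_sub_eval_pow_le {φ : ℝ → ℂ} {P Q : ℂ[X]} {j L : ℕ} {R δ : ℝ}
    (hP : P.natDegree ≤ L) (hQ : Q.natDegree ≤ L) (hR : 0 < R) (hδ : δ ≤ 1 / 2)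
    (hP1 : ∀ z ∈ Metric.closedBall 0 R, ‖P.eval z‖ ≤ 1 / 2)
    (hQ1 : ∀ z ∈ Metric.closedBall 0 R, ‖Q.eval z‖ ≤ 1 / 2)
    (hφP : ∀ x : ℝ, |x| ≤ R → ‖φ x ^ j - P.eval (x : ℂ)‖ ≤ δ)
    (hφQ : ∀ x : ℝ, |x| ≤ R → ‖φ x ^ (j + 1) - Q.eval (x : ℂ)‖ ≤ δ)
    {z : ℂ} (hz : z ∈ Metric.closedBall 0 R) :
    ‖Q.eval z ^ j - P.eval z ^ (j + 1)‖ ≤ 3 ^ ((j + 1) * L) * ((2 * j + 1) * δ) := by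
  have hdeg : (Q ^ j - P ^ (j + 1)).natDegree ≤ (j + 1) * L := by
    refine (natDegree_sub_le _ _).trans (max_le ?_ ?_)
    · exact natDegree_pow_le.trans (Nat.mul_le_mul j.le_succ hQ)
    · exact natDegree_pow_le.trans (Nat.mul_le_mul_left _ hP)
  have h := norm_eval_le_three_pow_mul hdeg hR (A := (2 * j + 1) * δ) (fun x hx => ?_)
    (mem_closedBall_zero_iff.1 hz)
  · simpa only [eval_sub, eval_pow] using h
  · have hx' : (x : ℂ) ∈ Metric.closedBall 0 R := by
      rwa [mem_closedBall_zero_iff, Complex.norm_real]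
    simpa only [eval_sub, eval_pow] using
      norm_pow_sub_pow_succ_le hδ (hP1 x hx') (hQ1 x hx') (hφP x hx) (hφQ x hx)

theorem exists_isHolomorphicApprox_one {φ : ℝ → ℂ} {P Q : ℂ[X]} {j L : ℕ} {δ ϱ : ℝ} (hj : j ≠ 0)
    (hP : P.natDegree ≤ L) (hQ : Q.natDegree ≤ L) (hϱ : 0 < ϱ) (hϱ1 : ϱ ≤ 1)
    (hδϱ : 3 ^ ((j + 1) * L) * ((2 * j + 1) * δ) ≤ (ϱ ^ (2 * j)) ^ (j + 1))
    (hP1 : ∀ z ∈ Metric.closedBall 0 10, ‖P.eval z‖ ≤ 1 / 2)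
    (hQ1 : ∀ z ∈ Metric.closedBall 0 10, ‖Q.eval z‖ ≤ 1 / 2)
    (hφP : ∀ x : ℝ, |x| ≤ 10 → ‖φ x ^ j - P.eval (x : ℂ)‖ ≤ δ)
    (hφQ : ∀ x : ℝ, |x| ≤ 10 → ‖φ x ^ (j + 1) - Q.eval (x : ℂ)‖ ≤ δ) :
    ∃ F, IsHolomorphicApprox φ 1 (18 * (j + 1)) ϱ F := by
  have hj1 : (1 : ℝ) ≤ j := Nat.one_le_cast.2 (Nat.one_le_iff_ne_zero.2 hj)
  have hr1 : ϱ ^ (2 * j) ≤ 1 := pow_le_one₀ hϱ.le hϱ1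
  have hδ0 : 0 ≤ δ := (norm_nonneg _).trans (hφP 0 (by norm_num))
  have hδr' : (2 * j + 1) * δ ≤ ϱ ^ (2 * j) := by
    calc (2 * j + 1) * δ ≤ 3 ^ ((j + 1) * L) * ((2 * j + 1) * δ) :=
          le_mul_of_one_le_left (by positivity) (one_le_pow₀ (by norm_num))
      _ ≤ (ϱ ^ (2 * j)) ^ (j + 1) := hδϱ
      _ ≤ ϱ ^ (2 * j) := pow_le_of_le_one (by positivity) hr1 j.succ_ne_zero
  have hδr : δ ≤ ϱ ^ (2 * j) := by nlinarith
  have hδ : δ ≤ 1 / 2 := by nlinarith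
  have hPQ : ∀ z ∈ Metric.closedBall 0 10,
      ‖Q.eval z ^ j - P.eval z ^ (j + 1)‖ ≤ (ϱ ^ (2 * j)) ^ (j + 1) := fun z hz =>
    (norm_eval_pow_sub_eval_pow_le hP hQ (by norm_num) hδ hP1 hQ1 hφP hφQ hz).trans hδϱ
  have hsub : Metric.ball (0 : ℂ) 1 ⊆ Metric.closedBall 0 10 :=
    Metric.ball_subset_closedBall.trans (Metric.closedBall_subset_closedBall (by norm_num))
  obtain ⟨F, hF, hFu⟩ := exists_differentiableOn_norm_sub_regQuot_le hj P.differentiable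
    Q.differentiable hϱ hϱ1 (fun z hz => (hP1 z hz).trans (by norm_num)) hPQ
  refine ⟨F, hF, fun z hz => ?_, fun x hx => ?_⟩
  · have hu := norm_regQuot_le_four (g := (P.eval ·)) (h := (Q.eval ·)) hj (by positivity) hr1
      ((hP1 z (hsub hz)).trans (by norm_num)) (hPQ z (hsub hz))
    calc ‖F z‖ ≤ 12 * (j + 1) * ϱ + 4 := by
          linarith [norm_le_norm_add_norm_sub' (F z)
            (regQuot (P.eval ·) (Q.eval ·) (ϱ ^ (2 * j)) z), hFu z hz]
      _ ≤ 12 * (j + 1) * 1 + 4 := by gcongr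
      _ ≤ 18 * (j + 1) := by linarith
  · have hxb : (x : ℂ) ∈ Metric.ball 0 1 := by rwa [mem_ball_zero_iff, Complex.norm_real]
    have hx10 : |x| ≤ 10 := hx.le.trans (by norm_num)
    have hφu := norm_sub_regQuot_le (g := (P.eval ·)) (h := (Q.eval ·)) hj hϱ hϱ1
      ((hP1 x (hsub hxb)).trans (by norm_num)) ((hφP x hx10).trans hδr) ((hφQ x hx10).trans hδr)
      (hPQ x (hsub hxb))
    calc ‖φ x - F x‖ ≤ 6 * ϱ + 12 * (j + 1) * ϱ := by
          refine (norm_sub_le_norm_sub_add_norm_sub _ _ _).trans (add_le_add hφu ?_)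
          rw [norm_sub_rev]
          exact hFu x hxb
      _ ≤ 18 * (j + 1) * ϱ := by nlinarith

end HolomorphicApproximation

section TaylorBounds

open PowerSeries

/-- `g` is approximated on `(-ρ, ρ)` by the truncations of the power series `P`, with the Taylor
remainder of order `L` and the coefficient of degree `L` both controlled by `w L`. -/
structure HasTaylorBounds (w : ℕ → ℝ) (ρ : ℝ) (g : ℝ → ℂ) (P : ℂ⟦X⟧) : Prop where
  norm_coeff_le : ∀ l, ‖coeff l P‖ ≤ w l
  norm_sub_eval_trunc_le : ∀ (L : ℕ) (s : ℝ), |s| < ρ →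
    ‖g s - (trunc L P).eval (s : ℂ)‖ ≤ w L * |s| ^ L

variable {w : ℕ → ℝ} {ρ A R e : ℝ} {g : ℝ → ℂ} {P Q : ℂ⟦X⟧} {j L : ℕ}

lemma natDegree_trunc_le (L : ℕ) (P : ℂ⟦X⟧) : (trunc L P).natDegree ≤ L :=
  Polynomial.natDegree_le_of_degree_le (degree_trunc_lt P L).le

lemma HasTaylorBounds.div (h : HasTaylorBounds w ρ g P) {c : ℝ} (hc : 0 < c) :
    HasTaylorBounds (fun l => w l / c) ρ (fun s => g s / c) (C (c : ℂ)⁻¹ * P) where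
  norm_coeff_le l := by
    rw [coeff_C_mul, norm_mul, norm_inv, Complex.norm_of_nonneg hc.le, ← div_eq_inv_mul]
    gcongr
    exact h.norm_coeff_le l
  norm_sub_eval_trunc_le L s hs := by
    rw [trunc_C_mul, Polynomial.eval_C_mul, div_eq_inv_mul, ← mul_sub, norm_mul, norm_inv,
      Complex.norm_of_nonneg hc.le, ← div_eq_inv_mul, div_mul_eq_mul_div]
    gcongr
    exact h.norm_sub_eval_trunc_le L s hs

lemma HasTaylorBounds.mono (h : HasTaylorBounds w ρ g P) {w' : ℕ → ℝ} (hw : ∀ l, w l ≤ w' l) :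
    HasTaylorBounds w' ρ g P where
  norm_coeff_le l := (h.norm_coeff_le l).trans (hw l)
  norm_sub_eval_trunc_le L s hs := (h.norm_sub_eval_trunc_le L s hs).trans (by gcongr; exact hw L)

lemma HasTaylorBounds.norm_eval_trunc_le (h : HasTaylorBounds w ρ g P) (hA : 0 ≤ A)
    (hw : ∀ l ≤ L, w l * R ^ l ≤ A * (1 / 2) ^ l) {z : ℂ} (hz : ‖z‖ ≤ R) :
    ‖(trunc L P).eval z‖ ≤ 2 * A := by
  rw [← Polynomial.eval₂_id, eval₂_trunc_eq_sum_range]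
  have hw0 : ∀ l, 0 ≤ w l := fun l => (norm_nonneg _).trans (h.norm_coeff_le l)
  calc ‖∑ l ∈ Finset.range L, RingHom.id ℂ (coeff l P) * z ^ l‖
      ≤ ∑ l ∈ Finset.range L, A * (1 / 2) ^ l := norm_sum_le_of_le _ fun l hl => by
        rw [RingHom.id_apply, norm_mul, norm_pow]
        refine le_trans ?_ (hw l (Finset.mem_range.1 hl).le)
        gcongr
        · exact hw0 l
        · exact h.norm_coeff_le l
    _ ≤ A * 2 := by
        rw [← Finset.mul_sum]
        exact mul_le_mul_of_nonneg_left ((summable_geometric_two.sum_le_tsum _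
          fun _ _ => by positivity).trans_eq tsum_geometric_two) hA
    _ = 2 * A := mul_comm _ _

theorem HasTaylorBounds.exists_isHolomorphicApprox {φ : ℝ → ℂ} {ϱ : ℝ} (hj : j ≠ 0)
    (hP : HasTaylorBounds w ρ (fun s => φ s ^ j) P)
    (hQ : HasTaylorBounds w ρ (fun s => φ s ^ (j + 1)) Q) (he : 0 < e) (heρ : 10 * e < ρ)
    (hϱ : 0 < ϱ) (hϱ1 : ϱ ≤ 1) (hw : ∀ l ≤ L, w l * (10 * e) ^ l ≤ 1 / 4 * (1 / 2) ^ l)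
    (hwϱ : 3 ^ ((j + 1) * L) * ((2 * j + 1) * (w L * (10 * e) ^ L)) ≤ (ϱ ^ (2 * j)) ^ (j + 1)) :
    ∃ F, IsHolomorphicApprox φ e (18 * (j + 1)) ϱ F := by
  have hdeg : ∀ S : ℂ⟦X⟧,
      ((trunc L S).comp (Polynomial.C (e : ℂ) * Polynomial.X)).natDegree ≤ L := fun S =>
    Polynomial.natDegree_comp_le.trans ((Nat.mul_le_mul (natDegree_trunc_le L S)
      ((Polynomial.natDegree_C_mul_le _ _).trans Polynomial.natDegree_X_le)).trans (mul_one L).le)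
  have hsize : ∀ {g : ℝ → ℂ} {S : ℂ⟦X⟧}, HasTaylorBounds w ρ g S →
      ∀ z ∈ Metric.closedBall (0 : ℂ) 10,
        ‖((trunc L S).comp (Polynomial.C (e : ℂ) * Polynomial.X)).eval z‖ ≤ 1 / 2 :=
      fun {g S} hS z hz => by
    rw [Polynomial.eval_comp, Polynomial.eval_C_mul, Polynomial.eval_X]
    refine (hS.norm_eval_trunc_le (by norm_num) hw ?_).trans_eq (by norm_num)
    rw [norm_mul, Complex.norm_of_nonneg he.le, mul_comm]
    exact mul_le_mul_of_nonneg_right (mem_closedBall_zero_iff.1 hz) he.le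
  have hrem : ∀ {g : ℝ → ℂ} {S : ℂ⟦X⟧}, HasTaylorBounds w ρ g S → ∀ x : ℝ, |x| ≤ 10 →
      ‖g (e * x) - ((trunc L S).comp (Polynomial.C (e : ℂ) * Polynomial.X)).eval (x : ℂ)‖ ≤
        w L * (10 * e) ^ L := fun {g S} hS x hx => by
    have hex : |e * x| ≤ 10 * e := by
      rw [abs_mul, abs_of_pos he, mul_comm]
      gcongr
    rw [Polynomial.eval_comp, Polynomial.eval_C_mul, Polynomial.eval_X, ← Complex.ofReal_mul]
    refine (hS.norm_sub_eval_trunc_le L _ (hex.trans_lt heρ)).trans ?_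
    gcongr
    exact (norm_nonneg _).trans (hS.norm_coeff_le L)
  obtain ⟨F, hF⟩ := exists_isHolomorphicApprox_one (φ := fun x => φ (e * x)) hj (hdeg P) (hdeg Q)
    hϱ hϱ1 hwϱ (hsize hP) (hsize hQ) (hrem hP) (hrem hQ)
  exact ⟨_, hF.comp_div he⟩

lemma assocFun_pos {n : ℕ → ℝ} {t : ℝ} (hpos : ∀ k, 0 < n k)
    (hlc : ∀ k, n (k + 1) ^ 2 ≤ n k * n (k + 2)) (hlim : ∀ c, ∃ k, c * n k ≤ n (k + 1))
    (ht : 0 < t) : 0 < assocFun n t := by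
  obtain ⟨p, hp, -⟩ := exists_mul_pow_eq_assocFun hpos hlc hlim ht
  exact hp ▸ mul_pos (hpos p) (pow_pos ht p)

/-- `L` is a multiple of the index `p` at which `n k * t ^ k` is minimal: moderate growth of `m`
turns the single factor `assocFun n t` available at `p` into a power of it. -/
lemma exists_mul_pow_le_pow_mul_assocFun_pow {m n : ℕ → ℝ} {C t : ℝ} (hC : 1 ≤ C)
    (hm : ∀ k, 0 < m k) (hmn : ∀ k, m k ≤ n k)
    (hmg : ∀ a b, m (a + b) ≤ C ^ (a + b) * m a * m b) (hn : n 0 = 1)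
    (hlc : ∀ k, n (k + 1) ^ 2 ≤ n k * n (k + 2)) (hlim : ∀ c, ∃ k, c * n k ≤ n (k + 1))
    (ht : 0 < t) (q : ℕ) :
    ∃ L, (∀ l ≤ L, m l * t ^ l ≤ (C ^ q) ^ l) ∧
      m L * t ^ L ≤ (C ^ q) ^ L * assocFun n t ^ q := by
  have hn0 : ∀ k, 0 < n k := fun k => (hm k).trans_le (hmn k)
  obtain ⟨p, hp, hple⟩ := exists_mul_pow_eq_assocFun hn0 hlc hlim ht
  rw [hn] at hple
  set x : ℕ → ℝ := fun l => m l * t ^ l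
  have hx : ∀ l, 0 ≤ x l := fun l => mul_nonneg (hm l).le (by positivity)
  have hxn : ∀ l, x l ≤ n l * t ^ l := fun l =>
    mul_le_mul_of_nonneg_right (hmn l) (by positivity)
  have hxmg : ∀ a b, x (a + b) ≤ C ^ (a + b) * x a * x b := fun a b => by
    calc x (a + b) ≤ C ^ (a + b) * m a * m b * t ^ (a + b) :=
          mul_le_mul_of_nonneg_right (hmg a b) (by positivity)
      _ = C ^ (a + b) * x a * x b := by simp only [x]; ring
  refine ⟨(q + 1) * p, le_pow_pow_of_le_one hC hx hxmg fun k hk => (hxn k).trans (hple k hk),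
    (mul_le_pow_mul_pow hC hx hxmg).trans ?_⟩
  gcongr
  calc x p ^ (q + 1) ≤ assocFun n t ^ (q + 1) := pow_le_pow_left₀ (hx p) (hp ▸ hxn p) _
    _ ≤ assocFun n t ^ q := pow_le_pow_of_le_one (assocFun_pos hn0 hlc hlim ht).le
      (hp ▸ hple p le_rfl) q.le_succ

lemma three_pow_mul_div_pow_le {y : ℝ} (j L : ℕ) (hy : 0 ≤ y) :
    3 ^ ((j + 1) * L) * ((2 * j + 1) * (1 / (4 * (j + 1)) * (y / (2 * 3 ^ (j + 1)) ^ L))) ≤ y := by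
  calc _ = (2 * j + 1) / (4 * (j + 1)) * (1 / 2) ^ L * y := by
        simp only [pow_mul, mul_pow, one_div_pow]
        field_simp
    _ ≤ 1 * 1 * y := by
        gcongr
        · rw [div_le_one (by positivity)]
          linarith [j.cast_nonneg (α := ℝ)]
        · exact pow_le_one₀ (by norm_num) (by norm_num)
    _ = y := by rw [one_mul, one_mul]

theorem exists_isHolomorphicApprox_assocFun {m n : ℕ → ℝ} {C σ : ℝ} (hj : j ≠ 0) (hC : 1 ≤ C)
    (hσ : 0 < σ) (hm : ∀ k, 0 < m k) (hmn : ∀ k, m k ≤ n k)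
    (hmg : ∀ a b, m (a + b) ≤ C ^ (a + b) * m a * m b) (hn : n 0 = 1)
    (hlc : ∀ k, n (k + 1) ^ 2 ≤ n k * n (k + 2)) (hlim : ∀ c, ∃ k, c * n k ≤ n (k + 1)) :
    ∃ B > 0, ∀ {e : ℝ} {φ : ℝ → ℂ} {P Q : ℂ⟦X⟧}, 0 < e → 10 * e < ρ →
      HasTaylorBounds (fun l => 1 / (4 * (j + 1)) * (σ ^ l * m l)) ρ (fun s => φ s ^ j) P →
      HasTaylorBounds (fun l => 1 / (4 * (j + 1)) * (σ ^ l * m l)) ρ (fun s => φ s ^ (j + 1)) Q →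
      ∃ F, IsHolomorphicApprox φ e (18 * (j + 1)) (assocFun n (B * e) ^ 4) F := by
  set q := 8 * j * (j + 1)
  set θ : ℝ := 2 * 3 ^ (j + 1)
  refine ⟨θ * C ^ q * (10 * σ), by positivity, fun {e φ P Q} he heρ hP hQ => ?_⟩
  set t := θ * C ^ q * (10 * σ) * e
  have hn0 : ∀ k, 0 < n k := fun k => (hm k).trans_le (hmn k)
  have ht : 0 < t := by positivity
  have hτ : 0 < assocFun n t := assocFun_pos hn0 hlc hlim ht
  have hτ1 : assocFun n t ≤ 1 := by simpa [hn] using assocFun_le (fun k => (hn0 k).le) ht.le 0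
  obtain ⟨L, hle, hL⟩ := exists_mul_pow_le_pow_mul_assocFun_pow hC hm hmn hmg hn hlc hlim ht q
  have hw : ∀ l y, m l * t ^ l ≤ (C ^ q) ^ l * y →
      1 / (4 * (j + 1)) * (σ ^ l * m l) * (10 * e) ^ l ≤ 1 / (4 * (j + 1)) * (y / θ ^ l) := by
    intro l y hy
    rw [mul_assoc]
    gcongr
    rw [le_div_iff₀ (by positivity)]
    refine le_of_mul_le_mul_left (hy.trans' (le_of_eq ?_)) (by positivity : 0 < (C ^ q) ^ l)
    simp only [t, mul_pow]
    ring
  have : (0 : ℝ) ≤ j := j.cast_nonneg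
  refine HasTaylorBounds.exists_isHolomorphicApprox (L := L) hj hP hQ he heρ
    (by positivity) (pow_le_one₀ hτ.le hτ1) (fun l hl => ?_) ?_
  · refine (hw l 1 (by simpa using hle l hl)).trans ?_
    rw [one_div_pow]
    gcongr
    · linarith
    · exact le_mul_of_one_le_right (by norm_num) (one_le_pow₀ (by norm_num))
  · calc _ ≤ 3 ^ ((j + 1) * L) *
          ((2 * j + 1) * (1 / (4 * (j + 1)) * (assocFun n t ^ q / θ ^ L))) :=
          mul_le_mul_of_nonneg_left
            (mul_le_mul_of_nonneg_left (hw L _ hL) (by positivity)) (by positivity)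
      _ ≤ assocFun n t ^ q := three_pow_mul_div_pow_le j L (by positivity)
      _ = ((assocFun n t ^ 4) ^ (2 * j)) ^ (j + 1) := by
          rw [← pow_mul, ← pow_mul]
          congr 1
          ring

end TaylorBounds

section Telescoping

open Metric fwdDiff

variable {φ : ℝ → ℂ} {D R R' κ κ' τ : ℝ} {H H' : ℂ → ℂ}

lemma IsHolomorphicApprox.norm_sub_le_of_norm_le (h : IsHolomorphicApprox φ R D (τ ^ 4) H)
    (h' : IsHolomorphicApprox φ R' D κ' H') (hR' : 0 < R') (hRR' : R' ≤ R) (hD : 0 ≤ D)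
    (hτ : 0 < τ) (hτ1 : τ ≤ 1) (hκ' : κ' ≤ τ ^ 4) {z : ℂ} (hz : ‖z‖ ≤ R' / 54) :
    ‖H' z - H z‖ ≤ 6 * D * τ ^ 2 := by
  have hmaps : MapsTo (fun w : ℂ => R' * w) (ball 0 1) (ball 0 R') := fun w hw => by
    rw [mem_ball_zero_iff] at hw ⊢
    rw [norm_mul, Complex.norm_of_nonneg hR'.le]
    exact mul_lt_of_lt_one_right hR' hw
  have hball : ball (0 : ℂ) R' ⊆ ball 0 R := ball_subset_ball hRR'
  have hdiff : DifferentiableOn ℂ (fun w => H' (R' * w) - H (R' * w)) (ball 0 1) :=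
    (h'.differentiableOn.sub (h.differentiableOn.mono hball)).comp (by fun_prop) hmaps
  have hbound := norm_le_three_mul_of_norm_le_sq_on_real (B := 2 * D) (κ := τ ^ 2)
    (z := z / R') hdiff (fun w hw => ?_) (by positivity) (pow_le_one₀ hτ.le hτ1)
    (fun x hx => ?_) ?_
  · rw [mul_div_cancel₀ _ (Complex.ofReal_ne_zero.2 hR'.ne')] at hbound
    exact hbound.trans_eq (by ring)
  · refine (_root_.norm_sub_le _ _).trans ?_
    linarith [h'.norm_le _ (hmaps hw), h.norm_le _ (hball (hmaps hw))]
  · have hx' : |R' * x| < R' := by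
      rw [abs_mul, abs_of_pos hR']
      exact mul_lt_of_lt_one_right hR' hx
    rw [← Complex.ofReal_mul]
    calc ‖H' (R' * x : ℝ) - H (R' * x : ℝ)‖
        ≤ ‖φ (R' * x) - H' (R' * x : ℝ)‖ + ‖φ (R' * x) - H (R' * x : ℝ)‖ := by
          rw [norm_sub_rev (φ (R' * x))]
          exact norm_sub_le_norm_sub_add_norm_sub _ _ _
      _ ≤ D * τ ^ 4 + D * τ ^ 4 := add_le_add
          ((h'.norm_sub_le _ hx').trans (mul_le_mul_of_nonneg_left hκ' hD))
          (h.norm_sub_le _ (hx'.trans_le hRR'))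
      _ = 2 * D * (τ ^ 2) ^ 2 := by ring
  · rw [norm_div, Complex.norm_of_nonneg hR'.le, div_le_iff₀ hR']
    linarith

lemma norm_fwdDiff_iter_ofReal_le {B s : ℝ} {k : ℕ} {G : ℂ → ℂ} (hR : 0 < R)
    (hG : DifferentiableOn ℂ G (ball 0 R)) (hB : ∀ z ∈ ball (0 : ℂ) R, ‖G z‖ ≤ B) (hs : 0 ≤ s)
    (hks : k * s < R) : ‖Δ_[s] ^[k] (fun x : ℝ => G x) 0‖ ≤ B * (4 * (k * s) / R) ^ k := by
  have hnorm : ‖(s : ℂ)‖ = s := Complex.norm_of_nonneg hs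
  have h := norm_fwdDiff_iter_le_of_differentiableOn (k := k) (t := s) hR hG hB (by rwa [hnorm])
  rw [hnorm] at h
  rwa [fwdDiff_iter_congr (g := G) (y' := 0) (h' := (s : ℂ)) fun i _ => by simp]

lemma IsHolomorphicApprox.norm_fwdDiff_iter_sub_le (h : IsHolomorphicApprox φ R D (τ ^ 4) H)
    (h' : IsHolomorphicApprox φ R' D κ' H') (hR' : 0 < R') (hRR' : R' ≤ R) (hD : 0 ≤ D)
    (hτ : 0 < τ) (hτ1 : τ ≤ 1) (hκ' : κ' ≤ τ ^ 4) {s : ℝ} {k : ℕ} (hs : 0 ≤ s)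
    (hks : k * s < R' / 54) :
    ‖Δ_[s] ^[k] (fun x : ℝ => H' x - H x) 0‖ ≤ 6 * D * τ ^ 2 * (216 * (k * s) / R') ^ k := by
  have hball : ball (0 : ℂ) (R' / 54) ⊆ ball 0 R' := ball_subset_ball (by linarith)
  refine (norm_fwdDiff_iter_ofReal_le (G := H' - H) (by positivity)
    ((h'.differentiableOn.mono hball).sub
      (h.differentiableOn.mono (hball.trans (ball_subset_ball hRR')))) (fun z hz =>
    h.norm_sub_le_of_norm_le h' hR' hRR' hD hτ hτ1 hκ' (mem_ball_zero_iff.1 hz).le) hs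
    hks).trans_eq ?_
  congr 2
  field_simp
  ring

lemma IsHolomorphicApprox.norm_fwdDiff_iter_sub_half_le
    (h : IsHolomorphicApprox φ R D (τ ^ 4) H) (h' : IsHolomorphicApprox φ (R / 2) D κ' H')
    (hR : 0 < R) (hD : 0 ≤ D) (hτ : 0 < τ) (hτ1 : τ ≤ 1) (hκ' : κ' ≤ τ ^ 4) {a b s : ℝ} {k : ℕ}
    (hτa : τ ≤ a * R ^ k) (hτb : τ ≤ b * R) (hs : 0 ≤ s) (hks : k * s < R / 108) :
    ‖Δ_[s] ^[k] (fun x : ℝ => H' x - H x) 0‖ ≤ 6 * b * R * (D * a * (432 * (k * s)) ^ k) := by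
  calc _ ≤ 6 * D * τ ^ 2 * (216 * (k * s) / (R / 2)) ^ k :=
        h.norm_fwdDiff_iter_sub_le h' (half_pos hR) (half_le_self hR.le) hD hτ hτ1 hκ' hs
          (by linarith)
    _ ≤ 6 * D * ((a * R ^ k) * (b * R)) * (216 * (k * s) / (R / 2)) ^ k := by
        rw [sq]
        gcongr ?_ * ?_
        exact mul_le_mul_of_nonneg_left (mul_le_mul hτa hτb hτ.le (hτ.le.trans hτa))
          (by positivity)
    _ = 6 * b * R * (D * a * (R * (216 * (k * s) / (R / 2))) ^ k) := by
        rw [mul_pow R]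
        ring
    _ = _ := by
        congr 3
        field_simp
        ring

lemma IsHolomorphicApprox.norm_fwdDiff_iter_sub_ofReal_le (h : IsHolomorphicApprox φ R D κ H)
    {s : ℝ} {k : ℕ} (hs : 0 ≤ s) (hks : k * s < R) :
    ‖Δ_[s] ^[k] (fun x : ℝ => φ x - H x) 0‖ ≤ 2 ^ k * (D * κ) := by
  refine norm_fwdDiff_iter_le (f := fun x : ℝ => φ x - H x) fun i hi => h.norm_sub_le _ ?_
  have his : (i : ℝ) * s ≤ k * s := by gcongr
  rw [zero_add, nsmul_eq_mul, abs_of_nonneg (by positivity)]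
  exact his.trans_lt hks

lemma norm_fwdDiff_iter_le_of_telescoping {X Y Z s x : ℝ} {k : ℕ} {G : ℕ → ℝ → ℂ} (I : ℕ)
    (hY : 0 ≤ Y) (hfirst : ‖Δ_[s] ^[k] (G 0) x‖ ≤ X)
    (hstep : ∀ l < I, ‖Δ_[s] ^[k] (G (l + 1) - G l) x‖ ≤ Y * (1 / 2) ^ l)
    (hlast : ‖Δ_[s] ^[k] (φ - G I) x‖ ≤ Z) : ‖Δ_[s] ^[k] φ x‖ ≤ X + Y * 2 + Z := by
  have hsplit : φ = G 0 + ∑ l ∈ Finset.range I, (G (l + 1) - G l) + (φ - G I) := by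
    rw [Finset.sum_range_sub]
    abel
  have hgeom : ∑ l ∈ Finset.range I, (1 / 2 : ℝ) ^ l ≤ 2 :=
    (summable_geometric_two.sum_le_tsum _ fun _ _ => by positivity).trans_eq tsum_geometric_two
  rw [hsplit, fwdDiff_iter_add, fwdDiff_iter_add, fwdDiff_iter_finsetSum, Pi.add_apply,
    Pi.add_apply, Finset.sum_apply]
  refine norm_add₃_le.trans (add_le_add (add_le_add hfirst ?_) hlast)
  refine (norm_sum_le_of_le _ fun l hl => hstep l (Finset.mem_range.1 hl)).trans ?_
  rw [← Finset.mul_sum]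
  exact mul_le_mul_of_nonneg_left hgeom hY

/-- Write `φ = H 0 + ∑ l < I, (H (l + 1) - H l) + (φ - H I)` with `ε / 2 ^ I` comparable to `k * s`:
each holomorphic term is estimated on its own disc. -/
theorem norm_fwdDiff_iter_le_of_isHolomorphicApprox {ε a b s : ℝ} {τ : ℕ → ℝ} {H : ℕ → ℂ → ℂ}
    {k : ℕ} (hH : ∀ i, IsHolomorphicApprox φ (ε * (1 / 2) ^ i) D (τ i ^ 4) (H i)) (hε : 0 < ε)
    (hD : 0 ≤ D) (ha : 0 ≤ a) (hτ : ∀ i, 0 < τ i) (hτ1 : ∀ i, τ i ≤ 1) (hanti : Antitone τ)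
    (hτa : ∀ i, τ i ≤ a * (ε * (1 / 2) ^ i) ^ k) (hτb : ∀ i, τ i ≤ b * (ε * (1 / 2) ^ i))
    (hk : k ≠ 0) (hs : 0 < s) (hks : 100 * (k * s) ≤ ε) :
    ‖Δ_[s] ^[k] φ 0‖ ≤
      D * (4 * (k * s) / ε) ^ k + (12 * b * ε + 1) * (D * a * (432 * (k * s)) ^ k) := by
  set e : ℕ → ℝ := fun i => ε * (1 / 2) ^ i
  have he : ∀ i, 0 < e i := fun i => by positivity
  have he_anti : Antitone e := fun i l hil =>
    mul_le_mul_of_nonneg_left (pow_le_pow_of_le_one (by norm_num) (by norm_num) hil) hε.le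
  have hks0 : 0 < k * s := by positivity
  obtain ⟨I, hI_lt, hI_le⟩ := exists_nat_pow_near_of_lt_one (x := 100 * (k * s) / ε)
    (by positivity) ((div_le_one hε).2 hks) (one_half_pos (α := ℝ)) one_half_lt_one
  have hIe : 100 * (k * s) ≤ e I := by rwa [div_le_iff₀' hε] at hI_le
  have heI : 2 * e I ≤ 432 * (k * s) := by
    rw [lt_div_iff₀ hε, pow_succ] at hI_lt
    simp only [e]
    linarith
  have hfirst : ‖Δ_[s] ^[k] (fun x : ℝ => H 0 x) 0‖ ≤ D * (4 * (k * s) / ε) ^ k := by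
    have h := norm_fwdDiff_iter_ofReal_le (k := k) (he 0) (hH 0).differentiableOn (hH 0).norm_le
      hs.le (by linarith [he_anti (Nat.zero_le I)])
    rwa [show e 0 = ε by simp [e]] at h
  have hstep : ∀ l < I, ‖Δ_[s] ^[k] (fun x : ℝ => H (l + 1) x - H l x) 0‖ ≤
      6 * b * ε * (D * a * (432 * (k * s)) ^ k) * (1 / 2) ^ l := fun l hl => by
    have hlI : e I ≤ e (l + 1) := he_anti (Nat.succ_le_of_lt hl)
    have hhalf : e (l + 1) = e l / 2 := by simp only [e, pow_succ]; ring
    have h' := hH (l + 1)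
    rw [show ε * (1 / 2) ^ (l + 1) = e l / 2 from hhalf] at h'
    refine ((hH l).norm_fwdDiff_iter_sub_half_le h' (he l) hD (hτ l) (hτ1 l)
      (pow_le_pow_left₀ (hτ _).le (hanti l.le_succ) 4) (hτa l) (hτb l) hs.le
      (by linarith)).trans_eq ?_
    ring
  have hlast : ‖Δ_[s] ^[k] (fun x : ℝ => φ x - H I x) 0‖ ≤ D * a * (432 * (k * s)) ^ k := by
    calc _ ≤ 2 ^ k * (D * τ I ^ 4) := (hH I).norm_fwdDiff_iter_sub_ofReal_le hs.le (by linarith)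
      _ ≤ 2 ^ k * (D * (a * e I ^ k)) := by
          gcongr
          exact (pow_le_of_le_one (hτ I).le (hτ1 I) four_ne_zero).trans (hτa I)
      _ = D * a * (2 * e I) ^ k := by rw [mul_pow]; ring
      _ ≤ D * a * (432 * (k * s)) ^ k := mul_le_mul_of_nonneg_left
          (pow_le_pow_left₀ (mul_nonneg zero_le_two (he I).le) heI k) (by positivity)
  have hb : 0 ≤ b := nonneg_of_mul_nonneg_left ((hτ 0).le.trans (hτb 0)) (he 0)
  exact (norm_fwdDiff_iter_le_of_telescoping (G := fun l x => H l x) I (by positivity) hfirst hstep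
    hlast).trans_eq (by ring)

end Telescoping

section DifferenceBounds

open PowerSeries fwdDiff

lemma pow_self_le_three_pow_mul_factorial (k : ℕ) : (k : ℝ) ^ k ≤ 3 ^ k * k.factorial := by
  have h := Real.pow_div_factorial_le_exp (k : ℝ) k.cast_nonneg k
  rw [div_le_iff₀ (by positivity), ← mul_one (k : ℝ), Real.exp_nat_mul, mul_one] at h
  refine h.trans ?_
  gcongr
  exact Real.exp_one_lt_three.le

lemma mul_pow_le_mul_factorial {c S s : ℝ} (hc : 0 ≤ c) (hcS : 3 * c ≤ S) (hs : 0 ≤ s) (k : ℕ) :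
    (c * (k * s)) ^ k ≤ S ^ k * k.factorial * s ^ k := by
  calc (c * (k * s)) ^ k = c ^ k * k ^ k * s ^ k := by rw [mul_pow, mul_pow, mul_assoc]
    _ ≤ c ^ k * (3 ^ k * k.factorial) * s ^ k := by
        gcongr
        exact pow_self_le_three_pow_mul_factorial k
    _ = (3 * c) ^ k * k.factorial * s ^ k := by rw [mul_pow]; ring
    _ ≤ S ^ k * k.factorial * s ^ k := by gcongr

lemma add_mul_pow_le_mul_factorial {a B D ε s ν : ℝ} (hε : 0 < ε) (hB : 0 ≤ B) (hν : 1 ≤ ν)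
    (ha : 0 ≤ a) (hD : 0 ≤ D) (hs : 0 ≤ s) (k : ℕ) :
    D * (4 * (k * s) / ε) ^ k + (12 * (a * B) * ε + 1) * (D * (ν * B ^ k) *
      (432 * (k * s)) ^ k) ≤
      D * (12 * a * B * ε + 2) * ((1296 * (B + 1 / ε)) ^ k * (ν * k.factorial)) * s ^ k := by
  have hε' : 0 < 1 / ε := one_div_pos.2 hε
  have hfirst : (4 * (k * s) / ε) ^ k ≤ (1296 * (B + 1 / ε)) ^ k * k.factorial * s ^ k := by
    rw [mul_div_right_comm, div_eq_mul_one_div]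
    exact mul_pow_le_mul_factorial (by positivity) (by linarith) hs k
  have hsecond : (432 * B * (k * s)) ^ k ≤ (1296 * (B + 1 / ε)) ^ k * k.factorial * s ^ k :=
    mul_pow_le_mul_factorial (by positivity) (by linarith) hs k
  calc _ = D * (1 * (4 * (k * s) / ε) ^ k) +
        (12 * (a * B) * ε + 1) * (D * (ν * (432 * B * (k * s)) ^ k)) := by ring
    _ ≤ D * (ν * ((1296 * (B + 1 / ε)) ^ k * k.factorial * s ^ k)) +
        (12 * (a * B) * ε + 1) *
          (D * (ν * ((1296 * (B + 1 / ε)) ^ k * k.factorial * s ^ k))) := by gcongr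
    _ = _ := by ring

variable {j : ℕ} {m n : ℕ → ℝ} {C σ ρ : ℝ}

lemma IsHolomorphicApprox.norm_apply_zero_le {φ : ℝ → ℂ} {H : ℂ → ℂ} {R D κ : ℝ}
    (h : IsHolomorphicApprox φ R D κ H) (hR : 0 < R) : ‖φ 0‖ ≤ D + D * κ := by
  have h0 := h.norm_sub_le 0 (by simpa using hR)
  rw [Complex.ofReal_zero] at h0
  exact (norm_le_norm_add_norm_sub' _ _).trans
    (add_le_add (h.norm_le 0 (Metric.mem_ball_self hR)) h0)

lemma norm_fwdDiff_iter_le_of_forall_assocFun {B D ε : ℝ} {φ : ℝ → ℂ} (hε : 0 < ε) (hB : 0 < B)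
    (hn : n 0 = 1) (hn1 : ∀ k, 1 ≤ n k) (hlc : ∀ k, n (k + 1) ^ 2 ≤ n k * n (k + 2))
    (hlim : ∀ c, ∃ k, c * n k ≤ n (k + 1))
    (happrox : ∀ e, 0 < e → e ≤ ε → ∃ H, IsHolomorphicApprox φ e D (assocFun n (B * e) ^ 4) H)
    {k : ℕ} {s : ℝ} (hs : 0 < s) (hks : 100 * (k * s) ≤ ε) :
    ‖Δ_[s] ^[k] φ 0‖ ≤
      D * (12 * n 1 * B * ε + 2) * ((1296 * (B + 1 / ε)) ^ k * (n k * k.factorial)) * s ^ k := by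
  have hn0 : ∀ k, 0 < n k := fun k => one_pos.trans_le (hn1 k)
  have he : ∀ i : ℕ, 0 < ε * (1 / 2) ^ i := fun i => by positivity
  choose H hH using fun i : ℕ => happrox (ε * (1 / 2) ^ i) (he i)
    (mul_le_of_le_one_right hε.le (pow_le_one₀ (by norm_num) (by norm_num)))
  set τ : ℕ → ℝ := fun i => assocFun n (B * (ε * (1 / 2) ^ i))
  have hτ : ∀ i, 0 < τ i := fun i => assocFun_pos hn0 hlc hlim (mul_pos hB (he i))
  have hτle : ∀ i l, τ i ≤ n l * B ^ l * (ε * (1 / 2) ^ i) ^ l := fun i l =>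
    (assocFun_le (fun l => (hn0 l).le) (mul_pos hB (he i)).le l).trans_eq
      (by rw [mul_pow, mul_assoc])
  have hτ1 : ∀ i, τ i ≤ 1 := fun i => by simpa [hn] using hτle i 0
  have hD : 0 ≤ D := (norm_nonneg _).trans ((hH 0).norm_le 0 (Metric.mem_ball_self (he 0)))
  rcases eq_or_ne k 0 with rfl | hk
  · have hφ : ‖φ 0‖ ≤ D + D * τ 0 ^ 4 := (hH 0).norm_apply_zero_le (he 0)
    have hDτ : D * τ 0 ^ 4 ≤ D := mul_le_of_le_one_right hD (pow_le_one₀ (hτ 0).le (hτ1 0))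
    have hrest : 0 ≤ D * (12 * n 1 * B * ε) := by have := hn0 1; positivity
    simp only [Function.iterate_zero, id_eq, pow_zero, Nat.factorial_zero, hn, Nat.cast_one]
    linarith
  · have hanti : Antitone τ := fun i l hil => assocFun_le_assocFun (fun l => (hn0 l).le)
      (mul_pos hB (he l)).le (mul_le_mul_of_nonneg_left (mul_le_mul_of_nonneg_left
        (pow_le_pow_of_le_one (by norm_num) (by norm_num) hil) hε.le) hB.le)
    refine (norm_fwdDiff_iter_le_of_isHolomorphicApprox hH hε hD
      (mul_nonneg (hn0 k).le (pow_nonneg hB.le k)) hτ hτ1 hanti (fun i => hτle i k)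
      (b := n 1 * B) (fun i => by simpa only [pow_one] using hτle i 1) hk hs hks).trans ?_
    exact add_mul_pow_le_mul_factorial hε hB.le (hn1 k) (hn0 1).le hD hs.le k

lemma HasTaylorBounds.exists_div_pow {A A' c ρ : ℝ} {w : ℕ → ℝ} {φ : ℝ → ℂ} {P : ℂ⟦X⟧} {i : ℕ}
    (h : HasTaylorBounds (fun l => A * w l) ρ (fun s => φ s ^ i) P) (hA' : 0 ≤ A') (hc : 1 ≤ c)
    (hAc : A ≤ c * A') (hw : ∀ l, 0 ≤ w l) (hi : i ≠ 0) :
    ∃ P', HasTaylorBounds (fun l => A' * w l) ρ (fun s => (φ s / c) ^ i) P' := by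
  have hci : 0 < c ^ i := pow_pos (one_pos.trans_le hc) i
  simp only [div_pow, ← Complex.ofReal_pow]
  refine ⟨_, (h.div hci).mono fun l => ?_⟩
  rw [mul_div_right_comm]
  refine mul_le_mul_of_nonneg_right ?_ (hw l)
  rw [div_le_iff₀' hci]
  exact hAc.trans (mul_le_mul_of_nonneg_right (le_self_pow₀ hc hi) hA')

theorem exists_norm_fwdDiff_iter_le_of_hasTaylorBounds (hj : j ≠ 0) (hC : 1 ≤ C) (hσ : 0 < σ)
    (hρ : 0 < ρ) (hm : ∀ k, 0 < m k) (hmn : ∀ k, m k ≤ n k)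
    (hmg : ∀ a b, m (a + b) ≤ C ^ (a + b) * m a * m b) (hn : n 0 = 1) (hn1 : ∀ k, 1 ≤ n k)
    (hlc : ∀ k, n (k + 1) ^ 2 ≤ n k * n (k + 2)) (hlim : ∀ c, ∃ k, c * n k ≤ n (k + 1)) (A : ℝ) :
    ∃ K > 0, ∃ S > 0, ∃ ε > 0, ∀ {φ : ℝ → ℂ} {P Q : ℂ⟦X⟧},
      HasTaylorBounds (fun l => A * (σ ^ l * m l)) ρ (fun s => φ s ^ j) P →
      HasTaylorBounds (fun l => A * (σ ^ l * m l)) ρ (fun s => φ s ^ (j + 1)) Q →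
      ∀ {k : ℕ} {s : ℝ}, 0 < s → k * s ≤ ε →
        ‖Δ_[s] ^[k] φ 0‖ ≤ K * (S ^ k * (n k * k.factorial)) * s ^ k := by
  obtain ⟨B, hB, happrox⟩ := exists_isHolomorphicApprox_assocFun (ρ := ρ) hj hC hσ hm hmn hmg hn
    hlc hlim
  have hn1' := one_pos.trans_le (hn1 1)
  set c : ℝ := max 1 (4 * (j + 1) * A)
  have hc1 : 1 ≤ c := le_max_left _ _
  have hc : 0 < c := one_pos.trans_le hc1
  have hscale : ∀ {φ : ℝ → ℂ} {P : ℂ⟦X⟧} {i : ℕ}, i ≠ 0 →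
      HasTaylorBounds (fun l => A * (σ ^ l * m l)) ρ (fun s => φ s ^ i) P →
      ∃ P', HasTaylorBounds (fun l => 1 / (4 * (j + 1)) * (σ ^ l * m l)) ρ
        (fun s => (φ s / c) ^ i) P' := fun hi h =>
    h.exists_div_pow (by positivity) hc1 (by
      rw [mul_one_div, le_div_iff₀' (by positivity)]
      exact le_max_right _ _) (fun l => (mul_pos (pow_pos hσ l) (hm l)).le) hi
  refine ⟨c * (18 * (j + 1) * (12 * n 1 * B * (ρ / 20) + 2)), by positivity,
    1296 * (B + 1 / (ρ / 20)), by positivity, ρ / 2000, by positivity,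
    fun {φ P Q} hP hQ k s hs hks => ?_⟩
  obtain ⟨P', hP'⟩ := hscale hj hP
  obtain ⟨Q', hQ'⟩ := hscale j.succ_ne_zero hQ
  have h := norm_fwdDiff_iter_le_of_forall_assocFun (φ := fun s => φ s / c) (ε := ρ / 20)
    (by positivity) hB hn hn1 hlc hlim (fun e he heρ => happrox he (by linarith) hP' hQ') hs
    (k := k) (by linarith)
  have hφ : φ = (c : ℂ) • fun s => φ s / c := by
    funext s
    rw [Pi.smul_apply, smul_eq_mul, mul_div_cancel₀ _ (Complex.ofReal_ne_zero.2 hc.ne')]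
  rw [hφ, fwdDiff_iter_const_smul, Pi.smul_apply, norm_smul, Complex.norm_of_nonneg hc.le]
  exact (mul_le_mul_of_nonneg_left h hc.le).trans_eq (by ring)

end DifferenceBounds

section Polarization

variable {ι : Type*} [Fintype ι]

lemma sum_prod_intUnits_mul_comp_of_not_surjective [DecidableEq ι] {r : ι → ι}
    (hr : ¬ Function.Surjective r) : ∑ c : ι → ℤˣ, ((∏ i, c i * c (r i) : ℤˣ) : ℤ) = 0 := by
  obtain ⟨i₀, hi₀⟩ := not_forall.1 hr
  let χ : (ι → ℤˣ) →* ℤ :=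
    { toFun := fun c => (∏ i, c i * c (r i) : ℤˣ)
      map_one' := by simp
      map_mul' := fun c c' => by
        rw [← Units.val_mul, ← Finset.prod_mul_distrib]
        simp only [Pi.mul_apply, mul_mul_mul_comm] }
  have hval : χ (Pi.mulSingle i₀ (-1)) = -1 := by
    have hcomp : ∀ i, (Pi.mulSingle i₀ (-1) : ι → ℤˣ) (r i) = 1 := fun i =>
      Pi.mulSingle_eq_of_ne (fun h => hi₀ ⟨i, h⟩) _
    simp only [χ, MonoidHom.coe_mk, OneHom.coe_mk, hcomp, mul_one, Finset.prod_pi_mulSingle',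
      Finset.mem_univ, if_true, Units.val_neg, Units.val_one]
  exact sum_hom_units_eq_zero χ fun h => by simp [h] at hval

lemma sum_prod_intUnits_mul_comp_of_bijective [DecidableEq ι] {r : ι → ι}
    (hr : Function.Bijective r) :
    ∑ c : ι → ℤˣ, ((∏ i, c i * c (r i) : ℤˣ) : ℤ) = 2 ^ Fintype.card ι := by
  have hone : ∀ c : ι → ℤˣ, ∏ i, c i * c (r i) = 1 := fun c => by
    rw [Finset.prod_mul_distrib, hr.prod_comp c, Int.units_mul_self]
  simp only [hone, Units.val_one, Finset.sum_const, Finset.card_univ, Fintype.card_fun,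
    Fintype.card_units_int, nsmul_eq_mul, mul_one, Nat.cast_pow, Nat.cast_ofNat]

lemma sum_intUnits_smul_map_sum_smul {E F : Type*} [AddCommGroup E] [AddCommGroup F]
    [DecidableEq ι] (L : MultilinearMap ℤ (fun _ : ι => E) F)
    (hL : ∀ (π : Equiv.Perm ι) (v : ι → E), L (v ∘ π) = L v) (v : ι → E) :
    ∑ c : ι → ℤˣ, ((∏ i, c i : ℤˣ) : ℤ) • L (fun _ => ∑ i, (c i : ℤ) • v i) =
      (2 ^ Fintype.card ι * (Fintype.card ι).factorial) • L v := by
  have hexpand : ∀ c : ι → ℤˣ, ((∏ i, c i : ℤˣ) : ℤ) • L (fun _ => ∑ i, (c i : ℤ) • v i) =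
      ∑ r : ι → ι, ((∏ i, c i * c (r i) : ℤˣ) : ℤ) • L (v ∘ r) := fun c => by
    rw [L.map_sum fun _ i => (c i : ℤ) • v i, Finset.smul_sum]
    refine Finset.sum_congr rfl fun r _ => ?_
    rw [L.map_smul_univ (fun i => (c (r i) : ℤ)) (fun i => v (r i)), smul_smul,
      Finset.prod_mul_distrib, Units.val_mul, Units.coe_prod (fun i => c (r i))]
    rfl
  simp only [hexpand]
  rw [Finset.sum_comm]
  simp only [← Finset.sum_smul]
  have hperm : ∀ π : Equiv.Perm ι, (∑ c : ι → ℤˣ, ((∏ i, c i * c (π i) : ℤˣ) : ℤ)) • L (v ∘ π) =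
      (2 ^ Fintype.card ι : ℤ) • L v := fun π => by
    rw [sum_prod_intUnits_mul_comp_of_bijective π.bijective, hL]
  have hinj : Function.Injective fun π : Equiv.Perm ι => (π : ι → ι) := DFunLike.coe_injective
  rw [← Finset.sum_subset (Finset.subset_univ (Finset.univ.map ⟨_, hinj⟩)) fun r _ hr => ?_,
    Finset.sum_map]
  · simp only [Function.Embedding.coeFn_mk, hperm, Finset.sum_const, Finset.card_univ,
      Fintype.card_perm, smul_smul, ← natCast_zsmul]
    push_cast
    rw [mul_comm]
  · rw [sum_prod_intUnits_mul_comp_of_not_surjective, zero_smul]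
    intro hsurj
    exact hr (Finset.mem_map.2 ⟨Equiv.ofBijective r
      (Finite.injective_iff_surjective.2 hsurj |>.bijective_of_finite), Finset.mem_univ _, rfl⟩)

lemma norm_intUnits_smul {G : Type*} [SeminormedAddCommGroup G] (u : ℤˣ) (x : G) :
    ‖(u : ℤ) • x‖ = ‖x‖ := by
  rcases Int.units_eq_one_or u with rfl | rfl <;> simp

variable {E F : Type*} [NormedAddCommGroup E] [NormedSpace ℝ E] [NormedAddCommGroup F]
  [NormedSpace ℝ F] {k : ℕ} (L : ContinuousMultilinearMap ℝ (fun _ : Fin k => E) F) {B : ℝ}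

lemma norm_apply_diagonal_le_of_norm_le (hL : ∀ v : E, ‖v‖ ≤ 1 → ‖L fun _ => v‖ ≤ B) {w : E}
    {ρ : ℝ} (hρ : 0 < ρ) (hw : ‖w‖ ≤ ρ) : ‖L fun _ => w‖ ≤ ρ ^ k * B := by
  have hscale : L (fun _ => w) = ρ ^ k • L fun _ => ρ⁻¹ • w := by
    rw [L.map_smul_univ (fun _ => ρ⁻¹), Finset.prod_const, Finset.card_univ, Fintype.card_fin,
      smul_smul, ← mul_pow, mul_inv_cancel₀ hρ.ne', one_pow, one_smul]
  rw [hscale, norm_smul, Real.norm_of_nonneg (by positivity)]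
  gcongr
  apply hL
  rw [norm_smul, norm_inv, Real.norm_of_nonneg hρ.le, inv_mul_le_iff₀ hρ, mul_one]
  exact hw

lemma norm_apply_le_three_pow_mul
    (hsymm : ∀ (π : Equiv.Perm (Fin k)) (v : Fin k → E), L (v ∘ π) = L v)
    (hL : ∀ v : E, ‖v‖ ≤ 1 → ‖L fun _ => v‖ ≤ B) {v : Fin k → E} (hv : ∀ i, ‖v i‖ ≤ 1) :
    ‖L v‖ ≤ 3 ^ k * B := by
  rcases Nat.eq_zero_or_pos k with rfl | hk
  · rw [Subsingleton.elim v fun _ => 0, pow_zero, one_mul]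
    exact hL 0 (by simp)
  have hB : 0 ≤ B := (norm_nonneg _).trans (hL 0 (by simp))
  have hid := sum_intUnits_smul_map_sum_smul (L.toMultilinearMap.restrictScalars ℤ) hsymm v
  simp only [MultilinearMap.coe_restrictScalars, ContinuousMultilinearMap.coe_coe,
    Fintype.card_fin] at hid
  have hterm : ∀ c : Fin k → ℤˣ,
      ‖((∏ i, c i : ℤˣ) : ℤ) • L (fun _ => ∑ i, (c i : ℤ) • v i)‖ ≤ k ^ k * B := fun c => by
    rw [norm_intUnits_smul]
    refine norm_apply_diagonal_le_of_norm_le L hL (Nat.cast_pos.2 hk) ?_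
    refine (norm_sum_le_of_le _ fun i _ =>
      (norm_intUnits_smul (c i) (v i)).trans_le (hv i)).trans ?_
    simp
  have hnorm : 2 ^ k * k.factorial * ‖L v‖ ≤ 2 ^ k * (k ^ k * B) := by
    calc 2 ^ k * k.factorial * ‖L v‖ = ‖(2 ^ k * k.factorial) • L v‖ := by
          rw [RCLike.norm_nsmul ℝ, nsmul_eq_mul]
          push_cast
          rfl
      _ ≤ ∑ _c : Fin k → ℤˣ, (k ^ k * B : ℝ) := hid ▸ norm_sum_le_of_le _ fun c _ => hterm c
      _ = 2 ^ k * (k ^ k * B) := by simp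
  have hfact : (0 : ℝ) < k.factorial := by positivity
  rw [mul_assoc] at hnorm
  refine le_of_mul_le_mul_left ((le_of_mul_le_mul_left hnorm (by positivity)).trans ?_) hfact
  calc (k : ℝ) ^ k * B ≤ 3 ^ k * k.factorial * B := by
        gcongr
        exact pow_self_le_three_pow_mul_factorial k
    _ = k.factorial * (3 ^ k * B) := by ring

theorem opNorm_le_three_pow_mul_of_symmetric
    (hsymm : ∀ (π : Equiv.Perm (Fin k)) (v : Fin k → E), L (v ∘ π) = L v)
    (hL : ∀ v : E, ‖v‖ ≤ 1 → ‖L fun _ => v‖ ≤ B) : ‖L‖ ≤ 3 ^ k * B := by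
  have hB : 0 ≤ B := (norm_nonneg _).trans (hL 0 (by simp))
  refine L.opNorm_le_bound (by positivity) fun v => ?_
  by_cases hzero : ∃ i, v i = 0
  · obtain ⟨i, hi⟩ := hzero
    rw [L.map_coord_zero i hi, norm_zero]
    positivity
  push Not at hzero
  have hscale : L v = (∏ i, ‖v i‖) • L fun i => ‖v i‖⁻¹ • v i := by
    rw [← L.map_smul_univ]
    simp only [smul_smul, mul_inv_cancel₀ (norm_ne_zero_iff.2 (hzero _)), one_smul]
  rw [hscale, norm_smul, Real.norm_of_nonneg (by positivity), mul_comm]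
  gcongr
  refine norm_apply_le_three_pow_mul L hsymm hL fun i => ?_
  rw [norm_smul, norm_inv, norm_norm, inv_mul_cancel₀ (norm_ne_zero_iff.2 (hzero i))]

end Polarization

section DiagonalDerivatives

open Metric fwdDiff

variable {E F : Type*} [NormedAddCommGroup E] [NormedSpace ℝ E] [NormedAddCommGroup F]
  [NormedSpace ℝ F] {f : E → F}

lemma iteratedFDeriv_add_two_apply (n : ℕ) (x : E) (v : Fin (n + 2) → E) :
    iteratedFDeriv ℝ (n + 2) f x v =
      fderiv ℝ (fderiv ℝ (iteratedFDeriv ℝ n f)) x (v 0) (v 1) (Fin.tail (Fin.tail v)) := by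
  have hcurry := LinearIsometryEquiv.comp_fderiv (𝕜 := ℝ) (E := E [×n + 1]→L[ℝ] F)
    (F := E →L[ℝ] E [×n]→L[ℝ] F)
    (continuousMultilinearCurryLeftEquiv ℝ (fun _ : Fin (n + 1) => E) F)
    (f := iteratedFDeriv ℝ (n + 1) f) (x := x)
  rw [iteratedFDeriv_succ_apply_left, ← Fin.cons_self_tail (Fin.tail v)]
  exact (congrArg (fun D => D (v 0) (v 1) (Fin.tail (Fin.tail v))) hcurry).symm

lemma iteratedFDeriv_comp_swap_zero_one {n : ℕ} (hf : ContDiff ℝ (n + 2 : ℕ) f) (x : E)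
    (v : Fin (n + 2) → E) :
    iteratedFDeriv ℝ (n + 2) f x (v ∘ Equiv.swap 0 1) = iteratedFDeriv ℝ (n + 2) f x v := by
  have hsymm : IsSymmSndFDerivAt ℝ (iteratedFDeriv ℝ n f) x :=
    (hf.iteratedFDeriv_right (m := 2) (by push_cast; rw [add_comm])).contDiffAt.isSymmSndFDerivAt
      (by rw [minSmoothness_of_isRCLikeNormedField])
  have htail : Fin.tail (Fin.tail (v ∘ Equiv.swap 0 1)) = Fin.tail (Fin.tail v) := by
    ext i
    exact congrArg v (Equiv.swap_apply_of_ne_of_ne (Fin.succ_ne_zero _)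
      (by rw [← Fin.succ_zero_eq_one]; exact (Fin.succ_injective _).ne (Fin.succ_ne_zero _)))
  rw [iteratedFDeriv_add_two_apply, iteratedFDeriv_add_two_apply, htail, hsymm.eq]
  simp only [Function.comp_apply, Equiv.swap_apply_left, Equiv.swap_apply_right]

lemma iteratedFDeriv_comp_swap_castSucc_succ {n : ℕ} (hf : ContDiff ℝ (n + 1 : ℕ) f) (i : Fin n)
    (x : E) (v : Fin (n + 1) → E) :
    iteratedFDeriv ℝ (n + 1) f x (v ∘ Equiv.swap i.castSucc i.succ) =
      iteratedFDeriv ℝ (n + 1) f x v := by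
  induction n generalizing x with
  | zero => exact i.elim0
  | succ n ih =>
    refine Fin.cases ?_ (fun i => ?_) i
    · exact iteratedFDeriv_comp_swap_zero_one hf x v
    let A := ContinuousMultilinearMap.domDomCongrₗᵢ ℝ E F (Equiv.swap i.castSucc i.succ)
    have hA : A ∘ iteratedFDeriv ℝ (n + 1) f = iteratedFDeriv ℝ (n + 1) f := by
      ext y u
      exact ih (hf.of_le (by exact_mod_cast (n + 1).le_succ)) i y u
    have hderiv : A (fderiv ℝ (iteratedFDeriv ℝ (n + 1) f) x (v 0)) =
        fderiv ℝ (iteratedFDeriv ℝ (n + 1) f) x (v 0) := by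
      conv_rhs => rw [← hA, LinearIsometryEquiv.comp_fderiv]
      rfl
    have htail : Fin.tail (v ∘ Equiv.swap i.succ.castSucc i.succ.succ) =
        Fin.tail v ∘ Equiv.swap i.castSucc i.succ := by
      ext l
      simp only [Fin.tail, Function.comp_apply, Fin.castSucc_succ,
        (Fin.succ_injective _).swap_apply]
    rw [iteratedFDeriv_succ_apply_left, iteratedFDeriv_succ_apply_left, htail, ← hderiv]
    rfl

theorem iteratedFDeriv_comp_perm {n : ℕ} (hf : ContDiff ℝ n f) (x : E) (π : Equiv.Perm (Fin n))
    (v : Fin n → E) : iteratedFDeriv ℝ n f x (v ∘ π) = iteratedFDeriv ℝ n f x v := by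
  cases n with
  | zero => exact congrArg _ (Subsingleton.elim _ _)
  | succ n =>
    have hπ : π ∈ Submonoid.closure (range fun i : Fin n => Equiv.swap i.castSucc i.succ) := by
      rw [Equiv.Perm.mclosure_swap_castSucc_succ]
      exact Submonoid.mem_top π
    induction hπ using Submonoid.closure_induction generalizing v with
    | mem π hπ =>
      obtain ⟨i, rfl⟩ := hπ
      exact iteratedFDeriv_comp_swap_castSucc_succ hf i x v
    | one => rfl
    | mul π π' _ _ ih ih' =>
      rw [Equiv.Perm.coe_mul, ← Function.comp_assoc, ih', ih]

lemma norm_fwdDiff_iter_sub_pow_smul_le {s t δ : ℝ} {c : F} (hs : 0 ≤ s) {k : ℕ}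
    {ψ : ℕ → ℝ → F}
    (hψ : ∀ l < k, ∀ r ∈ Icc t (t + k * s), HasDerivAt (ψ l) (ψ (l + 1) r) r)
    (hc : ∀ r ∈ Icc t (t + k * s), ‖ψ k r - c‖ ≤ δ) :
    ‖Δ_[s] ^[k] (ψ 0) t - s ^ k • c‖ ≤ s ^ k * δ := by
  induction k generalizing ψ c δ with
  | zero => simpa using hc
  | succ k ih =>
    have hmem : ∀ r ∈ Icc t (t + k * s), r ∈ Icc t (t + (k + 1 : ℕ) * s) ∧
        r + s ∈ Icc t (t + (k + 1 : ℕ) * s) := fun r hr => by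
      push_cast
      exact ⟨⟨hr.1, by linarith [hr.2]⟩, ⟨by linarith [hr.1], by linarith [hr.2]⟩⟩
    have h := ih (ψ := fun l => Δ_[s] (ψ l)) (c := s • c) (δ := s * δ)
      (fun l hl r hr => ((hψ l (by omega) _ (hmem r hr).2).comp_add_const r s).sub
        (hψ l (by omega) _ (hmem r hr).1)) fun r hr => ?_
    · rw [Function.iterate_succ_apply, pow_succ, mul_smul, mul_assoc]
      exact h
    · have hmv := (convex_Icc t (t + (k + 1 : ℕ) * s)).norm_image_sub_le_of_norm_hasDerivWithin_le
        (f := fun r => ψ k r - r • c) (C := δ) (fun r hr =>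
          ((hψ k k.lt_succ_self r hr).sub ((hasDerivAt_id r).smul_const c)).hasDerivWithinAt)
        (fun r hr => by simpa using hc r hr) (hmem r hr).1 (hmem r hr).2
      rw [add_sub_cancel_left, Real.norm_of_nonneg hs, mul_comm] at hmv
      refine (congrArg norm ?_).trans_le hmv
      simp only [fwdDiff, add_smul]
      abel

lemma hasDerivAt_iteratedFDeriv_apply_diagonal {n l : ℕ} (hf : ContDiff ℝ n f) (hl : l < n)
    (x v : E) (s : ℝ) :
    HasDerivAt (fun s : ℝ => iteratedFDeriv ℝ l f (x + s • v) fun _ => v)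
      (iteratedFDeriv ℝ (l + 1) f (x + s • v) fun _ => v) s := by
  have hline : HasDerivAt (fun s : ℝ => x + s • v) v s := by
    simpa using ((hasDerivAt_id s).smul_const v).const_add x
  have hD := (hf.differentiable_iteratedFDeriv (by exact_mod_cast hl)
    (x + s • v)).hasFDerivAt
  have h := (ContinuousMultilinearMap.apply ℝ (fun _ : Fin l => E) F fun _ => v).hasFDerivAt
    |>.comp_hasDerivAt s (hD.comp_hasDerivAt s hline)
  refine h.congr_deriv ?_
  rw [iteratedFDeriv_succ_apply_left]
  rfl

theorem norm_iteratedFDeriv_apply_diagonal_le {k : ℕ} (hf : ContDiff ℝ k f) {x v : E} {B : ℝ}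
    (h : ∀ᶠ s : ℝ in nhdsWithin 0 (Ioi 0), ‖Δ_[s • v] ^[k] f x‖ ≤ B * s ^ k) :
    ‖iteratedFDeriv ℝ k f x fun _ => v‖ ≤ B := by
  set ψ : ℕ → ℝ → F := fun l r => iteratedFDeriv ℝ l f (x + r • v) fun _ => v
  have hψ0 : ψ k 0 = iteratedFDeriv ℝ k f x fun _ => v := by simp [ψ]
  have hψ : Continuous (ψ k) := by
    have := hf.continuous_iteratedFDeriv le_rfl
    fun_prop
  refine le_of_forall_pos_le_add fun δ hδ => ?_
  obtain ⟨η, hη, hclose⟩ := Metric.continuous_iff.1 hψ 0 δ hδ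
  have hsmall : ∀ᶠ s : ℝ in nhdsWithin 0 (Ioi 0), k * s < η := by
    have : Tendsto (fun s : ℝ => k * s) (nhdsWithin 0 (Ioi 0)) (nhds 0) := by
      simpa using ((continuous_const_mul (k : ℝ)).tendsto 0).mono_left nhdsWithin_le_nhds
    exact this.eventually (gt_mem_nhds hη)
  obtain ⟨s, hsB, hsη, hs⟩ := (h.and (hsmall.and self_mem_nhdsWithin)).exists
  have hs : 0 < s := hs
  have hdiff := norm_fwdDiff_iter_sub_pow_smul_le (k := k) (ψ := ψ) (c := ψ k 0) (t := 0) hs.le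
    (fun l hl r _ => hasDerivAt_iteratedFDeriv_apply_diagonal hf hl x v r) fun r hr =>
      (dist_eq_norm (ψ k r) _ ▸ hclose r (by
        rw [Real.dist_0_eq_abs, abs_of_nonneg hr.1]
        linarith [hr.2])).le
  rw [fwdDiff_iter_congr (g := ψ 0) (y' := 0) (h' := s) fun i _ => by
    simp only [ψ, iteratedFDeriv_zero_apply, zero_add, ← Nat.cast_smul_eq_nsmul ℝ, smul_smul,
      smul_eq_mul]] at hsB
  have hnorm := (norm_le_norm_add_norm_sub _ _).trans (add_le_add hsB hdiff)
  rw [norm_smul, Real.norm_of_nonneg (by positivity), hψ0] at hnorm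
  exact le_of_mul_le_mul_left (hnorm.trans_eq (by ring)) (pow_pos hs k)

theorem norm_iteratedFDeriv_le_of_fwdDiff_iter {k : ℕ} (hf : ContDiff ℝ k f) {x : E} {B : ℝ}
    (h : ∀ v : E, ‖v‖ ≤ 1 → ∀ᶠ s : ℝ in nhdsWithin 0 (Ioi 0), ‖Δ_[s • v] ^[k] f x‖ ≤ B * s ^ k) :
    ‖iteratedFDeriv ℝ k f x‖ ≤ 3 ^ k * B :=
  opNorm_le_three_pow_mul_of_symmetric _ (iteratedFDeriv_comp_perm hf x) fun v hv =>
    norm_iteratedFDeriv_apply_diagonal_le hf (h v hv)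

end DiagonalDerivatives

section UniformLimits

open Metric

variable {E F : Type*} [NormedAddCommGroup E] [NormedSpace ℝ E] [NormedAddCommGroup F]
  [NormedSpace ℝ F]

lemma norm_fderiv_le_of_norm_le_of_lipschitz {u : E → F} {u' : E → E →L[ℝ] F} {x : E} {s b δ : ℝ}
    (hs : 0 < s) (hu : ∀ y ∈ closedBall x s, HasFDerivAt u (u' y) y)
    (hδ : ∀ y ∈ closedBall x s, ‖u y‖ ≤ δ)
    (hb : ∀ y ∈ closedBall x s, ‖u' y - u' x‖ ≤ b * ‖y - x‖) (hb0 : 0 ≤ b) :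
    ‖u' x‖ ≤ 2 * δ / s + b * s := by
  have hx : x ∈ closedBall x s := mem_closedBall_self hs.le
  have hδ0 : 0 ≤ δ := (norm_nonneg _).trans (hδ x hx)
  refine ContinuousLinearMap.opNorm_le_of_unit_norm (by positivity) fun z hz => ?_
  have hnorm : ‖s • z‖ = s := by rw [norm_smul, hz, mul_one, Real.norm_of_nonneg hs.le]
  have hxz : x + s • z ∈ closedBall x s := by
    rw [mem_closedBall, dist_eq_norm, add_sub_cancel_left, hnorm]
  have htaylor := (convex_closedBall x s).norm_image_sub_le_of_norm_hasFDerivWithin_le' (C := b * s)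
    (fun y hy => (hu y hy).hasFDerivWithinAt)
    (fun y hy => (hb y hy).trans
      (mul_le_mul_of_nonneg_left (mem_closedBall_iff_norm.1 hy) hb0)) hx hxz
  rw [add_sub_cancel_left, hnorm] at htaylor
  have hsz : s * ‖u' x z‖ ≤ 2 * δ + b * s * s :=
    calc s * ‖u' x z‖ = ‖u' x (s • z)‖ := by rw [map_smul, norm_smul, Real.norm_of_nonneg hs.le]
      _ = ‖u (x + s • z) - u x - (u (x + s • z) - u x - u' x (s • z))‖ := by
        rw [sub_sub_cancel]
      _ ≤ ‖u (x + s • z)‖ + ‖u x‖ + b * s * s :=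
        (norm_sub_le _ _).trans (add_le_add (norm_sub_le _ _) htaylor)
      _ ≤ 2 * δ + b * s * s := by linarith [hδ _ hxz, hδ x hx]
  rw [div_add' _ _ _ hs.ne', le_div_iff₀ hs]
  linarith

lemma uniformCauchySeqOn_fderiv {u : ℕ → E → F} {u' : ℕ → E → E →L[ℝ] F} {x : E} {r A : ℝ}
    (hr : 0 < r) (hcauchy : UniformCauchySeqOn u atTop (ball x r))
    (hu : ∀ i, ∀ y ∈ ball x r, HasFDerivAt (u i) (u' i y) y)
    (hA : ∀ i, ∀ y ∈ ball x r, ∀ z ∈ ball x r, ‖u' i y - u' i z‖ ≤ A * ‖y - z‖) (hA0 : 0 ≤ A) :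
    UniformCauchySeqOn u' atTop (ball x (r / 2)) := by
  rw [Metric.uniformCauchySeqOn_iff] at hcauchy ⊢
  intro ε hε
  -- The interpolation bound `2 * δ / s + 2 * A * s` is small for this `s` and `δ ≪ s`.
  set s := min (r / 2) (ε / (4 * (A + 1)))
  have hs : 0 < s := by positivity
  have hsA : s * (4 * (A + 1)) ≤ ε := (le_div_iff₀ (by positivity)).1 (min_le_right _ _)
  obtain ⟨N, hN⟩ := hcauchy (ε * s / 8) (by positivity)
  refine ⟨N, fun i hi j hj y hy => ?_⟩
  have hsub : closedBall y s ⊆ ball x r := closedBall_subset_ball' (by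
    linarith [mem_ball.1 hy, min_le_left (r / 2) (ε / (4 * (A + 1)))])
  have hinterp := norm_fderiv_le_of_norm_le_of_lipschitz (u := u i - u j) (u' := u' i - u' j)
    (b := 2 * A) (δ := ε * s / 8) hs (fun z hz => (hu i z (hsub hz)).sub (hu j z (hsub hz)))
    (fun z hz => (dist_eq_norm (u i z) (u j z) ▸ hN i hi j hj z (hsub hz)).le)
    (fun z hz => ?_) (by positivity)
  · rw [dist_eq_norm]
    refine hinterp.trans_lt ?_
    rw [show 2 * (ε * s / 8) / s = ε / 4 by field_simp; norm_num]
    nlinarith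
  · have hz := hsub hz
    have hy := hsub (mem_closedBall_self hs.le)
    calc ‖(u' i z - u' j z) - (u' i y - u' j y)‖
        = ‖(u' i z - u' i y) - (u' j z - u' j y)‖ := by rw [sub_sub_sub_comm]
      _ ≤ A * ‖z - y‖ + A * ‖z - y‖ :=
        (norm_sub_le _ _).trans (add_le_add (hA i z hz y hy) (hA j z hz y hy))
      _ = 2 * A * ‖z - y‖ := by ring

variable {U : Set E} {g : ℕ → E → F} {f : E → F} {A : ℕ → ℝ}

lemma exists_uniformCauchySeqOn_iteratedFDeriv (hg : ∀ i, ContDiff ℝ (⊤ : ℕ∞) (g i))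
    (hU : IsOpen U) (hA : ∀ k i, ∀ x ∈ U, ‖iteratedFDeriv ℝ k (g i) x‖ ≤ A k)
    (hcauchy : UniformCauchySeqOn g atTop U) (k : ℕ) {x : E} (hx : x ∈ U) :
    ∃ r > 0, ball x r ⊆ U ∧
      UniformCauchySeqOn (fun i => iteratedFDeriv ℝ k (g i)) atTop (ball x r) := by
  have hdiff : ∀ k i, Differentiable ℝ (iteratedFDeriv ℝ k (g i)) := fun k i =>
    (hg i).differentiable_iteratedFDeriv (by exact_mod_cast ENat.natCast_lt_top k)
  induction k with
  | zero =>
    obtain ⟨r, hr, hrU⟩ := Metric.isOpen_iff.1 hU x hx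
    exact ⟨r, hr, hrU, (continuousMultilinearCurryFin0 ℝ E F).symm.isometry.uniformContinuous
      |>.comp_uniformCauchySeqOn (hcauchy.mono hrU)⟩
  | succ k ih =>
    obtain ⟨r, hr, hrU, hk⟩ := ih
    have hlip : ∀ i, ∀ y ∈ ball x r, ∀ z ∈ ball x r,
        ‖fderiv ℝ (iteratedFDeriv ℝ k (g i)) y - fderiv ℝ (iteratedFDeriv ℝ k (g i)) z‖ ≤
          A (k + 2) * ‖y - z‖ := fun i y hy z hz => by
      have hcurry := (continuousMultilinearCurryLeftEquiv ℝ (fun _ : Fin (k + 1) => E) F).dist_map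
        (iteratedFDeriv ℝ (k + 1) (g i) y) (iteratedFDeriv ℝ (k + 1) (g i) z)
      refine (dist_eq_norm _ _).symm.trans_le (hcurry.trans_le ((dist_eq_norm _ _).trans_le ?_))
      exact (convex_ball x r).norm_image_sub_le_of_norm_fderiv_le
        (fun w _ => hdiff (k + 1) i w)
        (fun w hw => norm_fderiv_iteratedFDeriv.trans_le (hA (k + 2) i w (hrU hw))) hz hy
    have hfderiv := uniformCauchySeqOn_fderiv hr hk
      (fun i y _ => (hdiff k i y).hasFDerivAt) hlip ((norm_nonneg _).trans (hA _ 0 x hx))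
    exact ⟨r / 2, by positivity, (ball_subset_ball (by linarith)).trans hrU,
      (continuousMultilinearCurryLeftEquiv ℝ (fun _ : Fin (k + 1) => E) F).symm.isometry
        |>.uniformContinuous.comp_uniformCauchySeqOn hfderiv⟩

lemma hasFTaylorSeriesUpToOn_of_tendstoLocallyUniformlyOn (hg : ∀ i, ContDiff ℝ (⊤ : ℕ∞) (g i))
    (hU : IsOpen U) {p : E → FormalMultilinearSeries ℝ E F}
    (hp : ∀ k, TendstoLocallyUniformlyOn (fun i => iteratedFDeriv ℝ k (g i)) (fun x => p x k)
      atTop U) :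
    HasFTaylorSeriesUpToOn (⊤ : ℕ∞) (fun x => (p x 0).curry0) p U where
  zero_eq _ _ := rfl
  fderivWithin k _ x hx := by
    have hfderiv := (continuousMultilinearCurryLeftEquiv ℝ (fun _ : Fin (k + 1) => E) F).isometry
      |>.uniformContinuous.comp_tendstoLocallyUniformlyOn (hp (k + 1))
    exact (hasFDerivAt_of_tendstoLocallyUniformlyOn hU hfderiv
      (fun i y _ => ((hg i).differentiable_iteratedFDeriv
        (by exact_mod_cast ENat.natCast_lt_top k) y).hasFDerivAt)
      (fun y hy => (hp k).tendsto_at hy) hx).hasFDerivWithinAt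
  cont k _ := (hp k).continuousOn <| Frequently.of_forall fun i =>
    ((hg i).continuous_iteratedFDeriv (by exact_mod_cast le_top)).continuousOn

variable [CompleteSpace F]

theorem contDiffOn_of_tendstoUniformlyOn_of_norm_iteratedFDeriv_le
    (hg : ∀ i, ContDiff ℝ (⊤ : ℕ∞) (g i)) (hU : IsOpen U)
    (hA : ∀ k i, ∀ x ∈ U, ‖iteratedFDeriv ℝ k (g i) x‖ ≤ A k)
    (hf : TendstoUniformlyOn g f atTop U) :
    ContDiffOn ℝ (⊤ : ℕ∞) f U ∧ ∀ k, ∀ x ∈ U, ‖iteratedFDerivWithin ℝ k f U x‖ ≤ A k := by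
  have hcauchy := exists_uniformCauchySeqOn_iteratedFDeriv hg hU hA hf.uniformCauchySeqOn
  have hlim : ∀ x k, ∃ L, x ∈ U → Tendsto (fun i => iteratedFDeriv ℝ k (g i) x) atTop (nhds L) := by
    intro x k
    by_cases hx : x ∈ U
    · obtain ⟨r, hr, -, h⟩ := hcauchy k hx
      obtain ⟨L, hL⟩ := cauchySeq_tendsto_of_complete (h.cauchySeq (mem_ball_self hr))
      exact ⟨L, fun _ => hL⟩
    · exact ⟨0, fun hx' => absurd hx' hx⟩
  choose p hp using hlim
  have hp' : ∀ k, TendstoLocallyUniformlyOn (fun i => iteratedFDeriv ℝ k (g i)) (fun x => p x k)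
      atTop U := fun k => tendstoLocallyUniformlyOn_of_forall_exists_nhds fun x hx => by
    obtain ⟨r, hr, hrU, h⟩ := hcauchy k hx
    exact ⟨ball x r, mem_nhdsWithin_of_mem_nhds (ball_mem_nhds x hr),
      h.tendstoUniformlyOn_of_tendsto fun y hy => hp y k (hrU hy)⟩
  have hpf : ∀ x ∈ U, f x = (p x 0).curry0 := fun x hx => by
    have := ((continuousMultilinearCurryFin0 ℝ E F).continuous.tendsto _).comp (hp x 0 hx)
    exact tendsto_nhds_unique (hf.tendsto_at hx) this
  have htaylor := (hasFTaylorSeriesUpToOn_of_tendstoLocallyUniformlyOn hg hU hp').congr hpf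
  refine ⟨htaylor.contDiffOn, fun k x hx => ?_⟩
  rw [← htaylor.eq_iteratedFDerivWithin_of_uniqueDiffOn (by exact_mod_cast le_top)
    hU.uniqueDiffOn hx]
  exact le_of_tendsto (hp x k hx).norm (Eventually.of_forall fun i => hA k i x hx)

end UniformLimits

section Mollification

open Metric fwdDiff Convolution

section FwdDiffConvolution

variable {𝕜 G E E' F : Type*} [NontriviallyNormedField 𝕜] [AddCommGroup G] [MeasurableSpace G]
  [NormedAddCommGroup E] [NormedSpace 𝕜 E] [NormedAddCommGroup E'] [NormedSpace 𝕜 E']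
  [NormedAddCommGroup F] [NormedSpace 𝕜 F] {μ : Measure G} {f : G → E}
  {g : G → E'} {L : E →L[𝕜] E' →L[𝕜] F}

lemma convolutionExists_fwdDiff (hfg : ConvolutionExists f g L μ) (h : G) :
    ConvolutionExists f (Δ_[h] g) L μ := fun x => by
  refine ((hfg (x + h)).sub (hfg x)).congr (Eventually.of_forall fun t => ?_)
  simp only [fwdDiff, Pi.sub_apply, map_sub, sub_add_eq_add_sub]

variable [NormedSpace ℝ F]

lemma fwdDiff_convolution (hfg : ConvolutionExists f g L μ) (h : G) :
    Δ_[h] (f ⋆[L, μ] g) = f ⋆[L, μ] (Δ_[h] g) := by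
  ext x
  rw [fwdDiff, convolution, convolution, ← integral_sub (hfg (x + h)) (hfg x)]
  refine integral_congr_ae (Eventually.of_forall fun t => ?_)
  simp only [fwdDiff, map_sub, sub_add_eq_add_sub]

lemma fwdDiff_iter_convolution (hfg : ConvolutionExists f g L μ) (h : G) (n : ℕ) :
    Δ_[h] ^[n] (f ⋆[L, μ] g) = f ⋆[L, μ] (Δ_[h] ^[n] g) := by
  induction n generalizing g with
  | zero => rfl
  | succ n ih =>
    rw [Function.iterate_succ_apply, Function.iterate_succ_apply, fwdDiff_convolution hfg,
      ih (convolutionExists_fwdDiff hfg h)]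

lemma aestronglyMeasurable_fwdDiff_iter [MeasurableAdd G] [μ.IsAddRightInvariant]
    (hg : AEStronglyMeasurable g μ) (h : G) (n : ℕ) : AEStronglyMeasurable (Δ_[h] ^[n] g) μ := by
  induction n with
  | zero => exact hg
  | succ n ih =>
    rw [Function.iterate_succ_apply']
    exact (ih.comp_measurePreserving (measurePreserving_add_right μ h)).sub ih

end FwdDiffConvolution

variable {E F : Type*} [NormedAddCommGroup E] [NormedSpace ℝ E] [NormedAddCommGroup F]

/-- The `k`-th differences of `f` with step `s • v`, `‖v‖ ≤ 1`, are at most `B k * s ^ k` on `U`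
for all small scales `s > 0`, uniformly in the point and the direction: the discrete substitute
for `‖D^k f‖ ≤ B k`. -/
def HasFwdDiffBounds (f : E → F) (U : Set E) (B : ℕ → ℝ) : Prop :=
  ∀ k, ∀ᶠ s : ℝ in nhdsWithin 0 (Ioi 0), ∀ x ∈ U, ∀ v : E, ‖v‖ ≤ 1 →
    ‖Δ_[s • v] ^[k] f x‖ ≤ B k * s ^ k

namespace HasFwdDiffBounds

variable {f : E → F} {U : Set E} {B : ℕ → ℝ}

lemma norm_apply_le (hf : HasFwdDiffBounds f U B) {x : E} (hx : x ∈ U) : ‖f x‖ ≤ B 0 := by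
  obtain ⟨s, hs⟩ := (hf 0).exists
  simpa using hs x hx 0 (by simp)

lemma nonneg (hf : HasFwdDiffBounds f U B) (hU : U.Nonempty) (k : ℕ) : 0 ≤ B k := by
  obtain ⟨x, hx⟩ := hU
  obtain ⟨s, hsB, hs⟩ := ((hf k).and self_mem_nhdsWithin).exists
  exact nonneg_of_mul_nonneg_left ((norm_nonneg _).trans (hsB x hx 0 (by simp)))
    (pow_pos (show 0 < s from hs) k)

lemma exists_dist_le (hf : HasFwdDiffBounds f U B) :
    ∃ δ > 0, ∀ x ∈ U, ∀ y, dist y x ≤ δ → dist (f y) (f x) ≤ B 1 * dist y x := by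
  obtain ⟨δ, hδ, hsub⟩ := mem_nhdsGT_iff_exists_Ioc_subset.1 (hf 1)
  refine ⟨δ, hδ, fun x hx y hy => ?_⟩
  rcases eq_or_ne y x with rfl | hyx
  · simp
  have hpos : 0 < ‖y - x‖ := norm_pos_iff.2 (sub_ne_zero.2 hyx)
  rw [dist_eq_norm] at hy
  have h := hsub ⟨hpos, hy⟩ x hx (‖y - x‖⁻¹ • (y - x))
    (by rw [norm_smul, norm_inv, norm_norm, inv_mul_cancel₀ hpos.ne'])
  rw [smul_inv_smul₀ hpos.ne'] at h
  simpa [fwdDiff, dist_eq_norm] using h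

lemma continuousAt (hf : HasFwdDiffBounds f U B) {x : E} (hx : x ∈ U) : ContinuousAt f x := by
  obtain ⟨δ, hδ, hlip⟩ := hf.exists_dist_le
  exact continuousAt_of_locally_lipschitz hδ (B 1) fun y hy => hlip x hx y hy.le

variable [FiniteDimensional ℝ E] {c : E} {R r : ℝ}

section Convolution

variable [MeasurableSpace E] [BorelSpace E] {μ : Measure E} [μ.IsAddHaarMeasure]

lemma integrable_indicator (hf : HasFwdDiffBounds f (ball c R) B) :
    Integrable ((ball c R).indicator f) μ := by
  have hcont : ContinuousOn f (ball c R) := fun x hx => (hf.continuousAt hx).continuousWithinAt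
  refine (integrable_indicator_iff measurableSet_ball).2
    ⟨hcont.aestronglyMeasurable measurableSet_ball,
      .restrict_of_bounded (B 0) measure_ball_lt_top ?_⟩
  exact (ae_restrict_iff' measurableSet_ball).2
    (Eventually.of_forall fun x hx => hf.norm_apply_le hx)

variable [NormedSpace ℝ F] [CompleteSpace F]

lemma convolution_normed (hf : HasFwdDiffBounds f (ball c R) B) (φ : ContDiffBump (0 : E))
    (hr : 0 < r) (hrR : r + φ.rOut < R) :
    HasFwdDiffBounds (φ.normed μ ⋆[ContinuousLinearMap.lsmul ℝ ℝ, μ] (ball c R).indicator f)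
      (ball c r) B := by
  intro k
  have hscale : ∀ᶠ s : ℝ in nhdsWithin 0 (Ioi 0), k * s < R - (r + φ.rOut) := by
    have : Tendsto (fun s : ℝ => k * s) (nhdsWithin 0 (Ioi 0)) (nhds 0) := by
      simpa using ((continuous_const_mul (k : ℝ)).tendsto 0).mono_left nhdsWithin_le_nhds
    exact this.eventually (gt_mem_nhds (by linarith))
  filter_upwards [hf k, hscale, self_mem_nhdsWithin] with s hsB hsR (hs : 0 < s) x hx v hv
  have hφ := φ.rOut_pos
  have hR : 0 < R := by linarith
  have hexists := (φ.hasCompactSupport_normed (μ := μ)).convolutionExists_left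
    (ContinuousLinearMap.lsmul ℝ ℝ) φ.continuous_normed
    (hf.integrable_indicator (μ := μ)).locallyIntegrable
  rw [fwdDiff_iter_convolution hexists, ← dist_zero_right]
  refine dist_convolution_le (mul_nonneg (hf.nonneg ⟨c, mem_ball_self hR⟩ k) (by positivity))
    φ.support_normed_eq.subset φ.nonneg_normed φ.integral_normed
    (aestronglyMeasurable_fwdDiff_iter hf.integrable_indicator.aestronglyMeasurable _ _)
    fun y hy => ?_
  have hyc : dist y c < r + φ.rOut := by
    linarith [dist_triangle y x c, mem_ball.1 hy, mem_ball.1 hx]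
  rw [dist_zero_right, fwdDiff_iter_congr (g := f) (y' := y) (h' := s • v) fun i hi => ?_]
  · exact hsB y (mem_ball.2 (by nlinarith [Nat.cast_nonneg (α := ℝ) k])) v hv
  · have hstep : dist (y + i • s • v) y ≤ k * s := by
      rw [dist_eq_norm, add_sub_cancel_left, RCLike.norm_nsmul ℝ, norm_smul, nsmul_eq_mul,
        Real.norm_of_nonneg hs.le]
      exact mul_le_mul (Nat.cast_le.2 hi) (mul_le_of_le_one_right hs.le hv) (by positivity)
        k.cast_nonneg
    refine indicator_of_mem (mem_ball.2 ?_) f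
    linarith [dist_triangle (y + i • s • v) y c]

lemma dist_convolution_normed_le (hf : HasFwdDiffBounds f (ball c R) B) (φ : ContDiffBump (0 : E))
    {x : E} (hx : x ∈ ball c r) (hrR : r + φ.rOut < R) {ε : ℝ}
    (hε : ∀ y, dist y x < φ.rOut → dist (f y) (f x) ≤ ε) :
    dist ((φ.normed μ ⋆[ContinuousLinearMap.lsmul ℝ ℝ, μ] (ball c R).indicator f) x) (f x) ≤ ε := by
  have hball : ∀ y, dist y x < φ.rOut → (ball c R).indicator f y = f y := fun y hy =>
    indicator_of_mem (mem_ball.2 (by linarith [dist_triangle y x c, mem_ball.1 hx])) f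
  rw [← hball x (by simpa using φ.rOut_pos)]
  refine φ.dist_normed_convolution_le hf.integrable_indicator.aestronglyMeasurable fun y hy => ?_
  rw [hball y hy, hball x (by simpa using φ.rOut_pos)]
  exact hε y hy

end Convolution

variable [NormedSpace ℝ F] [CompleteSpace F]

/-- The mollifications of `f` inherit its difference bounds, which bound their derivatives. -/
theorem contDiffOn_ball (hf : HasFwdDiffBounds f (ball c R) B) (hr : 0 < r) (hrR : r < R) :
    ContDiffOn ℝ (⊤ : ℕ∞) f (ball c r) ∧
      ∀ k, ∀ x ∈ ball c r, ‖iteratedFDerivWithin ℝ k f (ball c r) x‖ ≤ 3 ^ k * B k := by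
  borelize E
  let μ : Measure E := Measure.addHaar
  obtain ⟨δ, hδ, hlip⟩ := hf.exists_dist_le
  have hη : 0 < min ((R - r) / 2) δ := lt_min (by linarith) hδ
  set η := min ((R - r) / 2) δ
  let φ : ℕ → ContDiffBump (0 : E) := fun i =>
    ⟨η / (i + 1) / 2, η / (i + 1), by positivity, half_lt_self (by positivity)⟩
  have hφη : ∀ i, (φ i).rOut ≤ η := fun i =>
    div_le_self hη.le (by linarith [Nat.cast_nonneg (α := ℝ) i])
  have hφR : ∀ i, r + (φ i).rOut < R := fun i => by
    linarith [hφη i, min_le_left ((R - r) / 2) δ]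
  let G : ℕ → E → F := fun i =>
    (φ i).normed μ ⋆[ContinuousLinearMap.lsmul ℝ ℝ, μ] (ball c R).indicator f
  have hG : ∀ i, ContDiff ℝ (⊤ : ℕ∞) (G i) := fun i =>
    (φ i).hasCompactSupport_normed.contDiff_convolution_left _ (φ i).contDiff_normed
      hf.integrable_indicator.locallyIntegrable
  refine contDiffOn_of_tendstoUniformlyOn_of_norm_iteratedFDeriv_le hG isOpen_ball
    (fun k i x hx => norm_iteratedFDeriv_le_of_fwdDiff_iter
      ((hG i).of_le (by exact_mod_cast le_top)) fun v hv =>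
        (hf.convolution_normed (φ i) hr (hφR i) k).mono fun s hs => hs x hx v hv)
    (Metric.tendstoUniformlyOn_iff.2 fun ε hε => ?_)
  have hlim : Tendsto (fun i => B 1 * (φ i).rOut) atTop (nhds 0) := by
    have hinv := (tendsto_one_div_add_atTop_nhds_zero_nat (𝕜 := ℝ)).const_mul (B 1 * η)
    rw [mul_zero] at hinv
    exact hinv.congr fun i => (mul_one_div _ _).trans (mul_div_assoc _ _ _)
  filter_upwards [hlim.eventually (gt_mem_nhds hε)] with i hi x hx
  have hxR : x ∈ ball c R := ball_subset_ball hrR.le hx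
  rw [dist_comm]
  refine (hf.dist_convolution_normed_le (φ i) hx (hφR i) fun y hy => ?_).trans_lt hi
  exact (hlip x hxR y (hy.le.trans ((hφη i).trans (min_le_right _ _)))).trans
    (mul_le_mul_of_nonneg_left hy.le (hf.nonneg ⟨x, hxR⟩ 1))

end HasFwdDiffBounds

end Mollification

section TaylorRemainder

open Metric

variable {E F : Type*} [NormedAddCommGroup E] [NormedSpace ℝ E] [NormedAddCommGroup F]
  [NormedSpace ℝ F]

theorem norm_sub_sum_iteratedFDeriv_le [CompleteSpace F] {f : E → F} {x y : E} {n : ℕ} {B : ℝ}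
    (hf : ∀ t ∈ Icc (0 : ℝ) 1, ContDiffAt ℝ n f (x + t • y))
    (hB : ∀ t ∈ Icc (0 : ℝ) 1, ‖iteratedFDeriv ℝ n f (x + t • y) fun _ => y‖ ≤ B) :
    ‖f (x + y) - ∑ k ∈ Finset.range n, (k.factorial : ℝ)⁻¹ • iteratedFDeriv ℝ k f x fun _ => y‖ ≤
      B / n.factorial := by
  cases n with
  | zero => simpa using hB 1 (right_mem_Icc.2 zero_le_one)
  | succ n =>
    have hkernel : ∫ t in (0 : ℝ)..1, (1 - t) ^ n * B = B / (n + 1) := by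
      rw [intervalIntegral.integral_mul_const,
        intervalIntegral.integral_comp_sub_left (fun t => t ^ n), integral_pow]
      simp [div_eq_inv_mul]
    have hint : ‖∫ t in (0 : ℝ)..1,
        (1 - t) ^ n • iteratedFDeriv ℝ (n + 1) f (x + t • y) fun _ => y‖ ≤ B / (n + 1) := by
      rw [← hkernel]
      refine intervalIntegral.norm_integral_le_of_norm_le zero_le_one
        (Eventually.of_forall fun t ht => ?_) (Continuous.intervalIntegrable (by fun_prop) _ _)
      have ht1 : 0 ≤ 1 - t := sub_nonneg.2 ht.2
      rw [norm_smul, Real.norm_of_nonneg (pow_nonneg ht1 n)]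
      exact mul_le_mul_of_nonneg_left (hB t (Ioc_subset_Icc_self ht)) (pow_nonneg ht1 n)
    rw [map_add_eq_sum_add_integral_iteratedFDeriv (f := f) (x := x) (y := y) (n := n)
      fun t ht => mod_cast hf t ht, add_sub_cancel_left, norm_smul, norm_inv,
      Real.norm_natCast, Nat.factorial_succ]
    calc (n.factorial : ℝ)⁻¹ * _ ≤ (n.factorial : ℝ)⁻¹ * (B / (n + 1)) :=
          mul_le_mul_of_nonneg_left hint (by positivity)
      _ = B / ((n + 1) * n.factorial : ℕ) := by
          push_cast
          field_simp

lemma add_smul_mem_ball_two_mul {x v : E} {R s : ℝ} (hx : x ∈ ball (0 : E) R) (hv : ‖v‖ ≤ 1)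
    (hs : |s| < R) : x + s • v ∈ ball (0 : E) (2 * R) := by
  rw [mem_ball_zero_iff] at hx ⊢
  calc ‖x + s • v‖ ≤ ‖x‖ + |s| * ‖v‖ := by
        simpa only [norm_smul, Real.norm_eq_abs] using norm_add_le x (s • v)
    _ ≤ ‖x‖ + |s| := by gcongr; exact mul_le_of_le_one_right (abs_nonneg s) hv
    _ < 2 * R := by linarith

theorem hasTaylorBounds_comp_line {g : E → ℂ} {M : ℕ → ℝ} {R A σ : ℝ}
    (hg : ContDiffOn ℝ (⊤ : ℕ∞) g (ball 0 (2 * R)))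
    (hb : ∀ x ∈ ball (0 : E) (2 * R), ∀ k, ‖iteratedFDeriv ℝ k g x‖ ≤ A * σ ^ k * M k)
    {x v : E} (hx : x ∈ ball (0 : E) R) (hv : ‖v‖ ≤ 1) :
    HasTaylorBounds (fun l => A * (σ ^ l * mseq M l)) R (fun s => g (x + s • v))
      (PowerSeries.mk fun l => (iteratedFDeriv ℝ l g x fun _ => v) / (l.factorial : ℂ)) := by
  have hR : 0 < R := (norm_nonneg x).trans_lt (mem_ball_zero_iff.1 hx)
  have hdiag (y : E) (hy : y ∈ ball (0 : E) (2 * R)) (l : ℕ) :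
      ‖iteratedFDeriv ℝ l g y fun _ => v‖ ≤ A * σ ^ l * M l :=
    ((iteratedFDeriv ℝ l g y).le_opNorm _).trans <| by
      rw [Finset.prod_const]
      exact (mul_le_of_le_one_right (norm_nonneg _) (pow_le_one₀ (norm_nonneg _) hv)).trans
        (hb y hy l)
  have hscale (y : E) (l : ℕ) (s : ℝ) : (iteratedFDeriv ℝ l g y fun _ => s • v) =
      s ^ l • iteratedFDeriv ℝ l g y fun _ => v := by
    simpa using (iteratedFDeriv ℝ l g y).map_smul_univ (fun _ => s) fun _ => v
  refine ⟨fun l => ?_, fun L s hs => ?_⟩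
  · rw [PowerSeries.coeff_mk, norm_div, Complex.norm_natCast, mseq, ← mul_div_assoc,
      ← mul_div_assoc, ← mul_assoc]
    gcongr
    exact hdiag x (ball_subset_ball (by linarith) hx) l
  · have hmem (t : ℝ) (ht : t ∈ Icc (0 : ℝ) 1) : x + t • s • v ∈ ball (0 : E) (2 * R) := by
      rw [smul_smul]
      refine add_smul_mem_ball_two_mul hx hv (lt_of_le_of_lt ?_ hs)
      rw [abs_mul, abs_of_nonneg ht.1]
      exact mul_le_of_le_one_left (abs_nonneg s) ht.2
    have htaylor := norm_sub_sum_iteratedFDeriv_le (f := g) (x := x) (y := s • v) (n := L)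
      (B := |s| ^ L * (A * σ ^ L * M L))
      (fun t ht => (hg.contDiffAt (isOpen_ball.mem_nhds (hmem t ht))).of_le (mod_cast le_top))
      fun t ht => by
        rw [hscale, norm_smul, norm_pow, Real.norm_eq_abs]
        gcongr
        exact hdiag _ (hmem t ht) L
    have htrunc : ((PowerSeries.mk fun l =>
        (iteratedFDeriv ℝ l g x fun _ => v) / (l.factorial : ℂ)).trunc L).eval (s : ℂ) =
        ∑ k ∈ Finset.range L, (k.factorial : ℝ)⁻¹ • iteratedFDeriv ℝ k g x fun _ => s • v := by
      rw [← Polynomial.eval₂_id, PowerSeries.eval₂_trunc_eq_sum_range]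
      refine Finset.sum_congr rfl fun l _ => ?_
      simp only [PowerSeries.coeff_mk, hscale, RingHom.id_apply, Complex.real_smul]
      push_cast
      ring
    rw [htrunc]
    refine htaylor.trans_eq ?_
    rw [mseq]
    ring

end TaylorRemainder

section WeightSequences

variable {M : ℕ → ℝ}

lemma mseq_pos (hM : ∀ k, 0 < M k) (k : ℕ) : 0 < mseq M k := by
  have := hM k
  unfold mseq
  positivity

lemma mseq_zero (hM : IsWeightSeq M) : mseq M 0 = 1 := by simp [mseq, hM.1]

lemma mseq_le_mseq_succ (hM : IsWeightSeq M) (hlc : LogConvexSeq (mseq M)) (k : ℕ) :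
    mseq M k ≤ mseq M (k + 1) := by
  induction k with
  | zero => simpa [mseq, hM.1] using hM.2.2.1
  | succ k ih =>
    have hsq : mseq M (k + 1) ^ 2 ≤ mseq M k * mseq M (k + 2) := hlc (k + 1) k.succ_pos
    have hpos := mseq_pos hM.2.1
    refine le_of_mul_le_mul_left ?_ (hpos (k + 1))
    calc mseq M (k + 1) * mseq M (k + 1) ≤ mseq M k * mseq M (k + 2) := by rwa [← sq]
      _ ≤ mseq M (k + 1) * mseq M (k + 2) := mul_le_mul_of_nonneg_right ih (hpos _).le

lemma one_le_mseq (hM : IsWeightSeq M) (hlc : LogConvexSeq (mseq M)) (k : ℕ) : 1 ≤ mseq M k :=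
  mseq_zero hM ▸ monotone_nat_of_le_succ (mseq_le_mseq_succ hM hlc) k.zero_le

/-- Otherwise `1 / (k + 1) ≤ c * (M k / M (k + 1))`, and the harmonic series would converge. -/
lemma exists_mul_mseq_le_mseq_succ (hM : ∀ k, 0 < M k) (hnq : NonQuasianalytic M) (c : ℝ) :
    ∃ k, c * mseq M k ≤ mseq M (k + 1) := by
  by_contra! hlt
  have hle (k : ℕ) : 1 / ((k + 1 : ℕ) : ℝ) ≤ c * (M k / M (k + 1)) := by
    have hk := hM (k + 1)
    have hmk := hlt k
    rw [mseq, mseq, Nat.factorial_succ, Nat.cast_mul, ← div_div, ← mul_div_assoc,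
      div_lt_div_iff_of_pos_right (by positivity), div_lt_iff₀ (by positivity)] at hmk
    rw [← mul_div_assoc, div_le_div_iff₀ (by positivity) hk, one_mul]
    exact hmk.le
  have hsum : Summable fun k : ℕ => 1 / ((k + 1 : ℕ) : ℝ) :=
    .of_nonneg_of_le (fun k => by positivity) hle (hnq.mul_left c)
  exact Real.not_summable_one_div_natCast ((summable_nat_add_iff 1).1 hsum)

lemma exists_mseq_add_le (hM : ∀ k, 0 < M k) (hmg : ModerateGrowth M) :
    ∃ C : ℝ, 1 ≤ C ∧ ∀ a b, mseq M (a + b) ≤ C ^ (a + b) * mseq M a * mseq M b := by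
  obtain ⟨C, hC, hmg⟩ := hmg
  refine ⟨max C 1, le_max_right _ _, fun a b => ?_⟩
  have ha := hM a
  have hb := hM b
  have hfact : (a.factorial * b.factorial : ℝ) ≤ (a + b).factorial := mod_cast
    Nat.le_of_dvd (Nat.factorial_pos _) (Nat.factorial_mul_factorial_dvd_factorial_add a b)
  calc mseq M (a + b) ≤ C ^ (a + b) * M a * M b / (a + b).factorial := by
        unfold mseq
        gcongr
        exact hmg a b
    _ ≤ max C 1 ^ (a + b) * M a * M b / (a.factorial * b.factorial) := by
        gcongr
        exact le_max_left _ _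
    _ = max C 1 ^ (a + b) * mseq M a * mseq M b := by
        unfold mseq
        field_simp

/-- If `L(M)` were empty, the intersection would be everything, and `M k * k!` would be in `Λ^M`. -/
lemma LM_nonempty (hM : ∀ k, 0 < M k) (hint : Intersectable M) : (LM M).Nonempty := by
  by_contra hempty
  have hmem : (fun k : ℕ => ((M k * k.factorial : ℝ) : ℂ)) ∈ Lambda M := by
    rw [hint, not_nonempty_iff_eq_empty.1 hempty]
    simp only [mem_empty_iff_false, iInter_of_empty, iInter_univ, mem_univ]
  obtain ⟨ρ, -, C, hC⟩ := hmem
  have hle (k : ℕ) : (k.factorial : ℝ) ≤ C * ρ ^ k := by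
    have hk := hC k
    rw [Complex.norm_of_nonneg (mul_nonneg (hM k).le (Nat.cast_nonneg _)), mul_comm] at hk
    exact le_of_mul_le_mul_right hk (hM k)
  have hlim : Tendsto (fun k : ℕ => C * (ρ ^ k / k.factorial)) atTop (nhds 0) := by
    simpa using (FloorSemiring.tendsto_pow_div_factorial_atTop ρ).const_mul C
  obtain ⟨k, hk⟩ := (hlim.eventually (gt_mem_nhds one_pos)).exists
  rw [← mul_div_assoc, div_lt_one (by positivity)] at hk
  exact (hle k).not_gt hk

/-- Intersectability enters through the sequence of suprema over `i`, which lies in every `Λ^N`. -/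
lemma exists_forall_le_of_intersectable {ι : Type*} {a : ℕ → ι → ℝ} (hM : ∀ k, 0 < M k)
    (hint : Intersectable M) (ha : ∀ k i, 0 ≤ a k i)
    (h : ∀ N ∈ LM M, ∃ K S : ℝ, 0 < S ∧ ∀ k i, a k i ≤ K * S ^ k * N k) :
    ∃ C ρ : ℝ, 0 < C ∧ 0 < ρ ∧ ∀ k i, a k i ≤ C * ρ ^ k * M k := by
  rcases isEmpty_or_nonempty ι with hι | hι
  · exact ⟨1, 1, one_pos, one_pos, fun _ i => isEmptyElim i⟩
  obtain ⟨N₀, hN₀⟩ := LM_nonempty hM hint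
  obtain ⟨K₀, S₀, -, hbd₀⟩ := h N₀ hN₀
  have hbdd (k : ℕ) : BddAbove (range (a k)) :=
    ⟨K₀ * S₀ ^ k * N₀ k, forall_mem_range.2 (hbd₀ k)⟩
  have hnn (k : ℕ) : 0 ≤ ⨆ i, a k i := Real.iSup_nonneg (ha k)
  have hmem : (fun k => ((⨆ i, a k i : ℝ) : ℂ)) ∈ Lambda M := by
    rw [hint, mem_iInter₂]
    intro N hN
    obtain ⟨K, S, hS, hbd⟩ := h N hN
    refine ⟨S, hS, K, fun k => ?_⟩
    rw [Complex.norm_of_nonneg (hnn k)]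
    exact ciSup_le (hbd k)
  obtain ⟨ρ, hρ, D, hD⟩ := hmem
  refine ⟨max D 1, ρ, lt_max_of_lt_right one_pos, hρ, fun k i => ?_⟩
  have hMk := hM k
  calc a k i ≤ ⨆ i, a k i := le_ciSup (hbdd k) i
    _ ≤ D * ρ ^ k * M k := by simpa only [Complex.norm_of_nonneg (hnn k)] using hD k
    _ ≤ max D 1 * ρ ^ k * M k := by gcongr; exact le_max_left _ _

end WeightSequences

section Germs

open Metric fwdDiff

variable {E : Type*} [NormedAddCommGroup E] [NormedSpace ℝ E] {M N : ℕ → ℝ} {f : E → ℂ} {j : ℕ}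

lemma exists_ball_norm_iteratedFDeriv_le [ProperSpace E] (hM : ∀ k, 0 < M k) {g h : E → ℂ}
    {x₀ : E} (hg : ∃ U : Set E, IsOpen U ∧ x₀ ∈ U ∧ RoumieuOn M g U)
    (hh : ∃ U : Set E, IsOpen U ∧ x₀ ∈ U ∧ RoumieuOn M h U) :
    ∃ R A σ : ℝ, 0 < R ∧ 0 < σ ∧ ∀ u ∈ ({g, h} : Set (E → ℂ)),
      ContDiffOn ℝ (⊤ : ℕ∞) u (ball x₀ R) ∧
        ∀ x ∈ ball x₀ R, ∀ k, ‖iteratedFDeriv ℝ k u x‖ ≤ A * σ ^ k * M k := by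
  obtain ⟨U, hU, hxU, hgU, hgb⟩ := hg
  obtain ⟨V, hV, hxV, hhV, hhb⟩ := hh
  obtain ⟨R, hR, hRUV⟩ := nhds_basis_closedBall.mem_iff.1
    (inter_mem (hU.mem_nhds hxU) (hV.mem_nhds hxV))
  have hcl : closure (ball x₀ R) ⊆ U ∩ V := closure_ball_subset_closedBall.trans hRUV
  have hcomp : IsCompact (closure (ball x₀ R)) := isBounded_ball.isCompact_closure
  obtain ⟨A, σ, hA, hσ, hgb⟩ := hgb _ isOpen_ball hcomp (hcl.trans inter_subset_left)
  obtain ⟨B, τ, -, hτ, hhb⟩ := hhb _ isOpen_ball hcomp (hcl.trans inter_subset_right)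
  have hsub := subset_inter_iff.1 (ball_subset_closedBall.trans hRUV)
  refine ⟨R, max A B, max σ τ, hR, lt_max_of_lt_left hσ, ?_⟩
  rintro u (rfl | rfl)
  · refine ⟨hgU.mono hsub.1, fun x hx k => ?_⟩
    have hMk := hM k
    rw [← iteratedFDerivWithin_of_isOpen k hU (hsub.1 hx)]
    refine (hgb x hx k).trans ?_
    gcongr <;> exact le_max_left _ _
  · refine ⟨hhV.mono hsub.2, fun x hx k => ?_⟩
    have hMk := hM k
    rw [← iteratedFDerivWithin_of_isOpen k hV (hsub.2 hx)]
    refine (hhb x hx k).trans ?_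
    gcongr <;> exact le_max_right _ _

theorem exists_hasFwdDiffBounds (hM : ∀ k, 0 < M k) (hmg : ModerateGrowth M) (hN : N ∈ LM M)
    (hj : j ≠ 0) {R A σ : ℝ} (hR : 0 < R) (hσ : 0 < σ)
    (hf : ∀ u ∈ ({f ^ j, f ^ (j + 1)} : Set (E → ℂ)), ContDiffOn ℝ (⊤ : ℕ∞) u (ball 0 (2 * R)) ∧
      ∀ x ∈ ball (0 : E) (2 * R), ∀ k, ‖iteratedFDeriv ℝ k u x‖ ≤ A * σ ^ k * M k) :
    ∃ K S : ℝ, 0 < S ∧ HasFwdDiffBounds f (ball 0 R) fun k => K * S ^ k * N k := by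
  obtain ⟨hN, hnq, hMN, hlc⟩ := hN
  obtain ⟨C, hC, hmgC⟩ := exists_mseq_add_le hM hmg
  obtain ⟨K, -, S, hS, ε, hε, hΔ⟩ := exists_norm_fwdDiff_iter_le_of_hasTaylorBounds hj hC hσ hR
    (mseq_pos hM) (fun k => div_le_div_of_nonneg_right (hMN k) (Nat.cast_nonneg _)) hmgC
    (mseq_zero hN) (one_le_mseq hN hlc) (fun k => hlc (k + 1) k.succ_pos)
    (exists_mul_mseq_le_mseq_succ hN.2.1 hnq) A
  refine ⟨K, S, hS, fun k => ?_⟩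
  have hsmall : ∀ᶠ s : ℝ in nhdsWithin 0 (Ioi 0), k * s ≤ ε :=
    (((continuous_const_mul (k : ℝ)).tendsto' 0 0 (mul_zero _)).eventually
      (ge_mem_nhds hε)).filter_mono nhdsWithin_le_nhds
  filter_upwards [hsmall, self_mem_nhdsWithin] with s hsε hs x hx v hv
  obtain ⟨hcj, hbj⟩ := hf (f ^ j) (mem_insert _ _)
  obtain ⟨hcj', hbj'⟩ := hf (f ^ (j + 1)) (mem_insert_of_mem _ rfl)
  calc ‖Δ_[s • v] ^[k] f x‖ = ‖Δ_[s] ^[k] (fun t : ℝ => f (x + t • v)) 0‖ :=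
        congrArg norm <| fwdDiff_iter_congr fun i _ => by
          simp only [zero_add, ← Nat.cast_smul_eq_nsmul ℝ, smul_smul, smul_eq_mul]
    _ ≤ K * (S ^ k * (mseq N k * k.factorial)) * s ^ k :=
        hΔ (hasTaylorBounds_comp_line hcj hbj hx hv) (hasTaylorBounds_comp_line hcj' hbj' hx hv)
          hs hsε
    _ = K * S ^ k * N k * s ^ k := by
        rw [mseq, div_mul_cancel₀ _ (by positivity)]
        ring

theorem roumieuOn_ball_of_hasFwdDiffBounds [FiniteDimensional ℝ E] (hM : ∀ k, 0 < M k)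
    (hint : Intersectable M) {R : ℝ} (hR : 0 < R)
    (hf : ∀ N ∈ LM M, ∃ K S : ℝ, 0 < S ∧
      HasFwdDiffBounds f (ball 0 R) fun k => K * S ^ k * N k) :
    RoumieuOn M f (ball 0 (R / 2)) := by
  have hsmooth (N : ℕ → ℝ) (hN : N ∈ LM M) : ∃ K S : ℝ, 0 < S ∧
      ContDiffOn ℝ (⊤ : ℕ∞) f (ball 0 (R / 2)) ∧ ∀ k (x : ball (0 : E) (R / 2)),
        ‖iteratedFDerivWithin ℝ k f (ball 0 (R / 2)) x‖ ≤ K * S ^ k * N k := by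
    obtain ⟨K, S, hS, hΔ⟩ := hf N hN
    obtain ⟨hcont, hbd⟩ := hΔ.contDiffOn_ball (half_pos hR) (half_lt_self hR)
    exact ⟨K, 3 * S, by positivity, hcont, fun k x => (hbd k x x.2).trans_eq (by ring)⟩
  obtain ⟨N₀, hN₀⟩ := LM_nonempty hM hint
  obtain ⟨_, _, _, hcont, _⟩ := hsmooth N₀ hN₀
  obtain ⟨C, ρ, hC, hρ, hbd⟩ := exists_forall_le_of_intersectable hM hint
    (fun _ _ => norm_nonneg _) fun N hN =>
      let ⟨K, S, hS, _, hbd⟩ := hsmooth N hN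
      ⟨K, S, hS, hbd⟩
  exact ⟨hcont, fun V _ _ hV => ⟨C, ρ, hC, hρ, fun x hx k => hbd k ⟨x, hV (subset_closure hx)⟩⟩⟩

end Germs

end PropertyD

theorem statement6_general {E : Type*} [NormedAddCommGroup E] [NormedSpace ℝ E]
    [FiniteDimensional ℝ E] {M : ℕ → ℝ} (hM : ∀ k, 0 < M k) (hint : Intersectable M)
    (hmg : ModerateGrowth M) {f : E → ℂ} {j : ℕ} (hj : j ≠ 0)
    (h1 : ∃ U : Set E, IsOpen U ∧ 0 ∈ U ∧ RoumieuOn M (f ^ j) U)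
    (h2 : ∃ U : Set E, IsOpen U ∧ 0 ∈ U ∧ RoumieuOn M (f ^ (j + 1)) U) :
    ∃ U : Set E, IsOpen U ∧ 0 ∈ U ∧ RoumieuOn M f U := by
  have := FiniteDimensional.proper ℝ E
  obtain ⟨R, A, σ, hR, hσ, hf⟩ := PropertyD.exists_ball_norm_iteratedFDeriv_le hM h1 h2
  obtain ⟨r, rfl⟩ : ∃ r, R = 2 * r := ⟨R / 2, by ring⟩
  have hr : 0 < r := by linarith
  exact ⟨Metric.ball 0 (r / 2), Metric.isOpen_ball, Metric.mem_ball_self (half_pos hr),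
    PropertyD.roumieuOn_ball_of_hasFwdDiffBounds hM hint hr fun N hN =>
      PropertyD.exists_hasFwdDiffBounds hM hmg hN hj hr hσ hf⟩

/-- the ring of germs at `0 ∈ ℝ^d` of `E^{M}`-functions has property (D)
for a quasianalytic intersectable weight sequence `M` of moderate growth. -/
theorem statement6 (d : ℕ) (hd : 1 ≤ d) (M : ℕ → ℝ)
    (hM : IsWeightSeq M) (hq : Quasianalytic M) (hint : Intersectable M)
    (hmg : ModerateGrowth M)
    (f : EuclideanSpace ℝ (Fin d) → ℂ) (j : ℕ) (hj : 1 ≤ j)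
    (h1 : ∃ U : Set (EuclideanSpace ℝ (Fin d)), IsOpen U ∧ 0 ∈ U ∧ RoumieuOn M (f ^ j) U)
    (h2 : ∃ U : Set (EuclideanSpace ℝ (Fin d)), IsOpen U ∧ 0 ∈ U ∧
      RoumieuOn M (f ^ (j + 1)) U) :
    ∃ U : Set (EuclideanSpace ℝ (Fin d)), IsOpen U ∧ 0 ∈ U ∧ RoumieuOn M f U :=
  statement6_general hM.2.1 hint hmg (Nat.one_le_iff_ne_zero.1 hj) h1 h2
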